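/- Let 1/2 < α < 1 and let T be the corresponding Liverani–Saussol–Vaienti map with absolutely continuous invariant probability measure m. Let f : [0,1] → ℝ be Hölder continuous, and γ-Hölder on some neighborhood of 0 with γ > (2α−1)/(α+1). Assume ∫ f dm = 0 and f(0) = 0. Then there exists σ² ≥ 0 such that S_n f/√n converges in distribution under m to the normal law N(0,σ²) (the Dirac mass at 0 when σ² = 0). Moreover σ² = 0 if and only if there exists a measurable function χ : [0,1] → ℝ with f = χ∘T − χ m-almost everywhere. -/

import Mathlib

/-!
The proof follows Gordin's method: on `(0, 1]` the observable is written as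
`f = ψ + χ ∘ T - χ`, where `χ` is merely measurable and `ψ` is a square integrable reversed
martingale difference, that is, `∫ ψ · (g ∘ T) dm = 0` for all bounded `g`. For such a `ψ` the
characteristic functions of the Birkhoff sums satisfy a one-step recursion (`charFun_step`), in which
the fluctuation `ψ² - σ²` is replaced by a bounded coboundary, and this gives the central limit
theorem with `σ² = ∫ ψ² dm`. A measurable coboundary changes neither the limit law nor the means of
integrable functions, hence `σ² = 0` exactly when `f` is a coboundary
(`clt_of_martingale_coboundary`).

The decomposition is first obtained for the first return map to `(1/2, 1]`. Its inverse branches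
`z ↦ lsvB (lsvA^[k] z)` have bounded distortion, so its transfer operator `lsvQ` contracts a cone of
log-Hölder functions (`LogHolder.contraction`). This produces the invariant density `ρ₀` of the
return map and exponential mixing (`exists_isIndDensity`), whence the ergodicity of the measure
`lsvMu` with density `lsvQ α ρ₀`, of which `m` must be a multiple (`IsIndDensity.eq_smul_mu`). Mixing
also solves the Poisson equation, so that `f` is cohomologous to a multiple of the indicator of
`(1/2, 1]` plus a function `ψ` supported on `(1/2, 1]` which is a martingale difference for the
return map (`IsObs.exists_induced`).

To return to `T`, one subtracts the coboundary of `v`, the conditional mean of `ψ` given the current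
point of the excursion (`IsIndDensity.exists_lift`). The variance of the resulting martingale
difference telescopes along the excursion, so it is at most the second moment of `ψ` on `(1/2, 1]`.
That moment is finite when the sums of `f` over excursions are square summable against the return
branches: the preimages of `1` decay like `k ^ (-1/α)` and the `k`-th branch has weight of order
`k ^ (-1/α - 1)`, so it suffices that `|f x| ≤ C x ^ γ'` for some `γ' > α - 1/2` (`exists_isObs`).
The exponent in the theorem is sufficient because `(2α - 1)/(α + 1) > α - 1/2` for `1/2 < α < 1`.
-/

open MeasureTheory Filter Topology

/-- The Liverani–Saussol–Vaienti map `T(x) = x(1 + 2^α x^α)` on `[0, 1/2]`,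
`T(x) = 2x - 1` on `(1/2, 1]`. -/
noncomputable def lsv (α : ℝ) (x : ℝ) : ℝ :=
  if x ≤ 1 / 2 then x * (1 + 2 ^ α * x ^ α) else 2 * x - 1

/-! ### Approximation by bounded coboundaries -/

section Abstract

variable {Ω : Type*} [MeasurableSpace Ω] {m : Measure Ω} [IsProbabilityMeasure m] {T : Ω → Ω}

/-- Mean ergodic theorem in `L¹`, for bounded centred observables. -/
lemma exists_birkhoffAverage_small (hT : Ergodic T m) {q : Ω → ℝ} (hq : Measurable q)
    {M : ℝ} (hM : ∀ x, |q x| ≤ M) (hq0 : ∫ x, q x ∂m = 0) {ε : ℝ} (hε : 0 < ε) :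
    ∃ N : ℕ, 0 < N ∧ ∫ x, |birkhoffAverage ℝ T q N x| ∂m ≤ ε := by
  have hq2 : MemLp q 2 m := MemLp.of_bound hq.aestronglyMeasurable M
    (Eventually.of_forall (by simpa using hM))
  set U : Lp ℝ 2 m →L[ℝ] Lp ℝ 2 m :=
    (Lp.compMeasurePreservingₗᵢ ℝ T hT.toMeasurePreserving).toContinuousLinearMap with hU
  have hUn : ‖U‖ ≤ 1 := LinearIsometry.norm_toContinuousLinearMap_le _
  have hlim := ContinuousLinearMap.tendsto_birkhoffAverage_orthogonalProjection U hUn hq2.toLp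
  set S := U.eqLocus (1 : Lp ℝ 2 m →L[ℝ] Lp ℝ 2 m) with hS
  have hUae : ∀ g : Lp ℝ 2 m, U g =ᵐ[m] g ∘ T := fun g =>
    Lp.coeFn_compMeasurePreserving g hT.toMeasurePreserving
  have hproj : ((S.orthogonalProjectionOnto hq2.toLp : S) : Lp ℝ 2 m) = 0 := by
    set p := S.orthogonalProjectionOnto hq2.toLp with hp
    have hfix : U (p : Lp ℝ 2 m) = p := p.2
    have h1 : (p : Lp ℝ 2 m) ∘ T =ᵐ[m] (p : Lp ℝ 2 m) := by
      have := hUae p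
      rw [hfix] at this
      exact this.symm
    obtain ⟨c, hc⟩ := hT.ae_eq_const_of_ae_eq_comp_ae (Lp.aestronglyMeasurable _) h1
    have h2 : inner ℝ (p : Lp ℝ 2 m) (hq2.toLp) = inner ℝ (p : Lp ℝ 2 m) (p : Lp ℝ 2 m) := by
      have h3 := S.sub_starProjection_mem_orthogonal hq2.toLp
      have h4 := (Submodule.mem_orthogonal _ _).1 h3 (p : Lp ℝ 2 m) p.2
      rw [inner_sub_right, sub_eq_zero] at h4
      exact h4
    have h3 : inner ℝ (p : Lp ℝ 2 m) (hq2.toLp) = 0 := by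
      rw [L2.inner_def]
      have : ∀ᵐ x ∂m, inner ℝ ((p : Lp ℝ 2 m) x) ((hq2.toLp : Lp ℝ 2 m) x) = c * q x := by
        filter_upwards [hc, hq2.coeFn_toLp] with x hx hx2
        rw [hx, hx2]
        simp [mul_comm]
      rw [integral_congr_ae this, integral_const_mul, hq0, mul_zero]
    rw [h3] at h2
    exact inner_self_eq_zero.1 h2.symm
  rw [hproj] at hlim
  have hiter : ∀ k : ℕ, (U^[k] hq2.toLp : Lp ℝ 2 m) =ᵐ[m] q ∘ T^[k] := by
    intro k
    induction k with
    | zero => simpa using hq2.coeFn_toLp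
    | succ k ih =>
      rw [Function.iterate_succ_apply']
      refine (hUae _).trans ?_
      have := hT.quasiMeasurePreserving.ae_eq_comp ih
      rw [Function.iterate_succ]
      exact this
  have hav : ∀ N : ℕ, (birkhoffAverage ℝ U _root_.id N hq2.toLp : Lp ℝ 2 m) =ᵐ[m]
      birkhoffAverage ℝ T q N := by
    intro N
    have hall : ∀ᵐ x ∂m, ∀ k, (U^[k] hq2.toLp : Lp ℝ 2 m) x = (q ∘ T^[k]) x :=
      ae_all_iff.2 hiter
    have h1 := Lp.coeFn_smul (N : ℝ)⁻¹ (birkhoffSum U _root_.id N hq2.toLp)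
    have h2 : (birkhoffSum U _root_.id N hq2.toLp : Lp ℝ 2 m) =ᵐ[m]
        fun x => ∑ k ∈ Finset.range N, (U^[k] hq2.toLp : Lp ℝ 2 m) x := by
      unfold birkhoffSum
      filter_upwards [Lp.coeFn_finsetSum (Finset.range N)
        (fun k => (U^[k] hq2.toLp : Lp ℝ 2 m))] with x hx
      simpa using hx
    filter_upwards [hall, h1, h2] with x hx h1 h2
    unfold birkhoffAverage
    rw [h1, Pi.smul_apply, h2]
    simp [birkhoffSum, hx]
  have hmb : ∀ N, Measurable (birkhoffAverage ℝ T q N) := by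
    intro N
    have h : Measurable (birkhoffSum T q N) :=
      Finset.measurable_sum _ fun k _ => hq.comp (hT.measurable.iterate k)
    exact h.const_mul (N : ℝ)⁻¹
  have hnorm := tendsto_zero_iff_norm_tendsto_zero.1 hlim
  have hev : ∀ᶠ N : ℕ in atTop, ‖birkhoffAverage ℝ U _root_.id N hq2.toLp‖ < ε :=
    hnorm.eventually_lt_const hε
  obtain ⟨N, hN, hN0⟩ := (hev.and (eventually_gt_atTop 0)).exists
  refine ⟨N, hN0, le_trans ?_ hN.le⟩
  have e1 : ∫ x, |birkhoffAverage ℝ T q N x| ∂m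
      = (eLpNorm (birkhoffAverage ℝ T q N) 1 m).toReal := by
    rw [eLpNorm_one_eq_lintegral_enorm, ← integral_norm_eq_lintegral_enorm
      (hmb N).aestronglyMeasurable]
    simp
  rw [e1, Lp.norm_def, eLpNorm_congr_ae (hav N)]
  refine ENNReal.toReal_mono ?_ (eLpNorm_le_eLpNorm_of_exponent_le (by norm_num)
    (hmb N).aestronglyMeasurable)
  rw [← eLpNorm_congr_ae (hav N)]
  exact Lp.eLpNorm_ne_top _


/-- For an ergodic map, the coboundaries of bounded functions are `L¹`-dense in the space of
centred integrable functions. -/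
lemma exists_coboundary_approx (hT : Ergodic T m) {q : Ω → ℝ} (hq : Measurable q)
    (hqi : Integrable q m) (hq0 : ∫ x, q x ∂m = 0) {ε : ℝ} (hε : 0 < ε) :
    ∃ w : Ω → ℝ, Measurable w ∧ (∃ M, ∀ x, |w x| ≤ M) ∧
      ∫ x, |q x - (w (T x) - w x)| ∂m ≤ ε := by
  have htr : Tendsto (fun R : ℕ => ∫ x, |q x - max (min (q x) R) (-R)| ∂m) atTop (𝓝 0) := by
    have : (0 : ℝ) = ∫ _ : Ω, (0 : ℝ) ∂m := by simp
    rw [this]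
    refine tendsto_integral_of_dominated_convergence (fun x => |q x|) ?_ hqi.abs ?_ ?_
    · intro R
      exact ((hq.sub ((hq.min measurable_const).max measurable_const)).abs).aestronglyMeasurable
    · intro R
      refine Eventually.of_forall fun x => ?_
      have hR : (0 : ℝ) ≤ R := Nat.cast_nonneg R
      rw [Real.norm_eq_abs, abs_abs]
      rcases le_total (q x) R with h | h
      · rw [min_eq_left h]
        rcases le_total (q x) (-R) with h' | h'
        · rw [max_eq_right h', abs_of_nonpos (by linarith), abs_of_nonpos (by linarith)]
          linarith
        · rw [max_eq_left h']; simp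
      · rw [min_eq_right h, max_eq_left (by linarith), abs_of_nonneg (by linarith),
          abs_of_nonneg (by linarith)]
        linarith
    · refine Eventually.of_forall fun x => ?_
      refine tendsto_const_nhds.congr' ?_
      obtain ⟨R₀, hR₀⟩ := exists_nat_ge |q x|
      filter_upwards [eventually_ge_atTop R₀] with R hR
      have : |q x| ≤ R := hR₀.trans (by exact_mod_cast hR)
      rw [abs_le] at this
      rw [min_eq_left this.2, max_eq_left this.1]
      simp
  obtain ⟨R, hR⟩ := (htr.eventually_lt_const (show 0 < ε / 3 by positivity)).exists
  set p : Ω → ℝ := fun x => max (min (q x) R) (-R) with hp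
  have hpm : Measurable p := (hq.min measurable_const).max measurable_const
  have hpb : ∀ x, |p x| ≤ R := by
    intro x
    have hR : (0 : ℝ) ≤ R := Nat.cast_nonneg R
    rw [abs_le]
    exact ⟨le_max_right _ _, max_le (min_le_right _ _) (by linarith)⟩
  have hpi : Integrable p m := Integrable.of_bound hpm.aestronglyMeasurable (R : ℝ)
    (Eventually.of_forall hpb)
  set c := ∫ x, p x ∂m with hc
  have hcb : |c| ≤ ε / 3 := by
    have : c = ∫ x, (p x - q x) ∂m := by rw [integral_sub hpi hqi, hq0, sub_zero]
    rw [this]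
    refine (abs_integral_le_integral_abs).trans (le_trans (le_of_eq ?_) hR.le)
    exact integral_congr_ae (Eventually.of_forall fun x => abs_sub_comm _ _)
  obtain ⟨N, hN0, hN⟩ := exists_birkhoffAverage_small hT (q := fun x => p x - c)
    (hpm.sub_const c) (M := R + |c|)
    (fun x => (abs_sub _ _).trans (by gcongr; exact hpb x))
    (by rw [integral_sub hpi (integrable_const _)]; simp [hc]) (show 0 < ε / 3 by positivity)
  set g : Ω → ℝ := fun x => p x - c with hg
  have hgm : Measurable g := hpm.sub_const c
  have hgb : ∀ x, |g x| ≤ R + |c| := fun x => (abs_sub _ _).trans (by gcongr; exact hpb x)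
  have hsm : ∀ k, Measurable (birkhoffSum T g k) := fun k =>
    Finset.measurable_sum _ fun k _ => hgm.comp (hT.measurable.iterate k)
  set w : Ω → ℝ := fun x => -((N : ℝ)⁻¹ * ∑ k ∈ Finset.range N, birkhoffSum T g k x) with hw
  have hwm : Measurable w :=
    ((Finset.measurable_sum _ fun k _ => hsm k).const_mul _).neg
  have hcob : ∀ x, w (T x) - w x = g x - birkhoffAverage ℝ T g N x := by
    intro x
    have h1 : ∀ k, birkhoffSum T g k (T x) = birkhoffSum T g k x + (g (T^[k] x) - g x) := by
      intro k
      have := birkhoffSum_apply_sub_birkhoffSum T g k x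
      linarith
    simp only [hw, h1, Finset.sum_add_distrib, Finset.sum_sub_distrib, birkhoffAverage,
      Finset.sum_const, Finset.card_range, nsmul_eq_mul, smul_eq_mul]
    rw [show birkhoffSum T g N x = ∑ k ∈ Finset.range N, g (T^[k] x) from rfl]
    have : (N : ℝ) ≠ 0 := by positivity
    field_simp
    ring
  refine ⟨w, hwm, ⟨(N : ℝ)⁻¹ * ∑ k ∈ Finset.range N, k * (R + |c|), fun x => ?_⟩, ?_⟩
  · simp only [hw, abs_neg, abs_mul, abs_inv, Nat.abs_cast]
    gcongr
    refine (Finset.abs_sum_le_sum_abs _ _).trans (Finset.sum_le_sum fun k _ => ?_)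
    unfold birkhoffSum
    refine (Finset.abs_sum_le_sum_abs _ _).trans ((Finset.sum_le_sum fun j _ => hgb _).trans ?_)
    rw [Finset.sum_const, Finset.card_range, nsmul_eq_mul]
  · have i1 : Integrable (fun x => |q x - p x|) m := (hqi.sub hpi).abs
    have hAm : Measurable (birkhoffAverage ℝ T g N) := (hsm N).const_mul (N : ℝ)⁻¹
    have hgi : Integrable g m := hpi.sub (integrable_const _)
    have i3 : Integrable (birkhoffAverage ℝ T g N) m := by
      have hsi : Integrable (fun x => ∑ k ∈ Finset.range N, g (T^[k] x)) m :=
        integrable_finsetSum _ fun k _ =>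
          (hT.toMeasurePreserving.iterate k).integrable_comp_of_integrable hgi
      exact hsi.const_mul (N : ℝ)⁻¹
    have i2 : Integrable (fun x => |q x - p x| + |c|) m := i1.add (integrable_const _)
    calc ∫ x, |q x - (w (T x) - w x)| ∂m
        ≤ ∫ x, (|q x - p x| + |c| + |birkhoffAverage ℝ T g N x|) ∂m := by
          refine integral_mono_of_nonneg (Eventually.of_forall fun x => abs_nonneg _)
            ((i1.add (integrable_const _)).add i3.abs) (Eventually.of_forall fun x => ?_)
          simp only
          rw [hcob x, hg]
          calc |q x - (p x - c - birkhoffAverage ℝ T (fun x => p x - c) N x)|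
              = |(q x - p x) + c + birkhoffAverage ℝ T (fun x => p x - c) N x| := by
                congr 1; ring
            _ ≤ _ := (abs_add_le _ _).trans (by gcongr; exact abs_add_le _ _)
      _ = ∫ x, |q x - p x| ∂m + |c| + ∫ x, |birkhoffAverage ℝ T g N x| ∂m := by
          rw [integral_add i2 i3.abs,
            integral_add i1 (integrable_const _)]
          simp
      _ ≤ ε / 3 + ε / 3 + ε / 3 := by gcongr
      _ = ε := by ring

end Abstract

/-! ### Central limit theorem for reversed martingale differences -/

section MartingaleCLT

/-- Second-order Taylor remainder of `x ↦ exp (i x)`. -/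
noncomputable def expRem (x : ℝ) : ℂ :=
  Complex.exp (Complex.I * x) - (1 + Complex.I * x - (x : ℂ) ^ 2 / 2)

lemma continuous_expRem : Continuous expRem := by
  unfold expRem; fun_prop

lemma norm_exp_I_mul (x : ℝ) : ‖Complex.exp (Complex.I * x)‖ = 1 := by
  rw [mul_comm]; exact Complex.norm_exp_ofReal_mul_I x

lemma norm_expRem_le_of_le {x : ℝ} (hx : |x| ≤ 1) : ‖expRem x‖ ≤ |x| ^ 3 := by
  have h := Complex.exp_bound (x := Complex.I * x) (by simpa using hx) (n := 3) (by norm_num)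
  have e : expRem x = Complex.exp (Complex.I * x) -
      ∑ m ∈ Finset.range 3, (Complex.I * x) ^ m / (m.factorial : ℂ) := by
    simp only [expRem, Finset.sum_range_succ, Finset.sum_range_zero, Nat.factorial, mul_pow,
      Complex.I_sq]
    push_cast
    ring
  rw [e]
  refine h.trans ?_
  simp only [norm_mul, Complex.norm_I, one_mul, Complex.norm_real, Real.norm_eq_abs]
  have : (0 : ℝ) ≤ |x| ^ 3 := by positivity
  norm_num [Nat.factorial]
  nlinarith

lemma norm_expRem_le_of_ge {x : ℝ} (hx : 1 ≤ |x|) : ‖expRem x‖ ≤ 4 * |x| ^ 2 := by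
  have h1 : ‖expRem x‖ ≤ 1 + (1 + |x| + |x| ^ 2 / 2) := by
    unfold expRem
    refine (norm_sub_le _ _).trans ?_
    rw [norm_exp_I_mul]
    gcongr
    refine (norm_sub_le _ _).trans ?_
    refine (add_le_add (norm_add_le _ _) le_rfl).trans ?_
    simp
  nlinarith

lemma norm_expRem_le_sq (x : ℝ) : ‖expRem x‖ ≤ 4 * |x| ^ 2 := by
  rcases le_total |x| 1 with h | h
  · refine (norm_expRem_le_of_le h).trans ?_
    have := abs_nonneg x
    nlinarith [sq_nonneg |x|]
  · exact norm_expRem_le_of_ge h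

lemma norm_expRem_le_cube (x : ℝ) : ‖expRem x‖ ≤ 4 * |x| ^ 3 := by
  rcases le_total |x| 1 with h | h
  · refine (norm_expRem_le_of_le h).trans ?_
    have : 0 ≤ |x| ^ 3 := by positivity
    linarith
  · refine (norm_expRem_le_of_ge h).trans ?_
    have := abs_nonneg x
    nlinarith [sq_nonneg |x|]

lemma norm_exp_I_sub_exp_I_le (x y : ℝ) :
    ‖Complex.exp (Complex.I * x) - Complex.exp (Complex.I * y)‖ ≤ |x - y| := by
  have : Complex.exp (Complex.I * x) - Complex.exp (Complex.I * y)
      = Complex.exp (Complex.I * y) * (Complex.exp (Complex.I * ((x - y : ℝ) : ℂ)) - 1) := by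
    rw [mul_sub, ← Complex.exp_add, mul_one]
    congr 2
    push_cast; ring
  rw [this, norm_mul, norm_exp_I_mul, one_mul]
  exact Real.norm_exp_I_mul_ofReal_sub_one_le

variable {Ω : Type*} [MeasurableSpace Ω] {m : Measure Ω} [IsProbabilityMeasure m] {T : Ω → Ω}

lemma measurable_birkhoffSum (hT : Measurable T) {ψ : Ω → ℝ} (hψ : Measurable ψ) (n : ℕ) :
    Measurable (birkhoffSum T ψ n) :=
  Finset.measurable_sum _ fun k _ => hψ.comp (hT.iterate k)

/-- One step of the recursion for the characteristic functions of the Birkhoff sums of a reversed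
martingale difference `ψ`: passing from `k` to `k + 1` multiplies the characteristic function by
`1 - s² σ² / 2` up to a small error. The fluctuation `ψ² - σ²` is handled by the nearby
coboundary `w ∘ T - w`. -/
lemma charFun_step (hT : Ergodic T m) {ψ : Ω → ℝ} (hψ : Measurable ψ) (hψ2 : MemLp ψ 2 m)
    (hmart : ∀ g : Ω → ℂ, Measurable g → (∀ x, ‖g x‖ ≤ 1) → ∫ x, (ψ x : ℂ) * g (T x) ∂m = 0)
    {w : Ω → ℝ} (hw : Measurable w) {M : ℝ} (hM : ∀ x, |w x| ≤ M) {ε σ2 : ℝ}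
    (hε : ∫ x, |(ψ x ^ 2 - σ2) - (w (T x) - w x)| ∂m ≤ ε) (s : ℝ) (k : ℕ) :
    ‖∫ x, Complex.exp (Complex.I * ((s * birkhoffSum T ψ (k + 1) x : ℝ) : ℂ)) ∂m
      - ((1 - s ^ 2 * σ2 / 2 : ℝ) : ℂ) *
        ∫ x, Complex.exp (Complex.I * ((s * birkhoffSum T ψ k x : ℝ) : ℂ)) ∂m‖
    ≤ ∫ x, ‖expRem (s * ψ x)‖ ∂m + s ^ 2 / 2 * (ε + M * (|s| * (2 * ∫ x, |ψ x| ∂m))) := by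
  have hTm := hT.measurable
  have hTp := hT.toMeasurePreserving
  set e : ℕ → Ω → ℂ := fun k x => Complex.exp (Complex.I * ((s * birkhoffSum T ψ k x : ℝ) : ℂ))
    with he
  have hem : ∀ k, Measurable (e k) := fun k => by
    have := measurable_birkhoffSum hTm hψ k
    simp only [he]; fun_prop
  have hen : ∀ k x, ‖e k x‖ = 1 := fun k x => norm_exp_I_mul _
  have hemT : Measurable fun x => e k (T x) := (hem k).comp hTm
  have hψi : Integrable ψ m := hψ2.integrable (by norm_num)
  have hψsq : Integrable (fun x => ψ x ^ 2) m := hψ2.integrable_sq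
  have hbd : ∀ {g : Ω → ℂ} (_ : Integrable g m), Integrable (fun x => g x * e k (T x)) m := by
    intro g hg
    exact hg.mul_bdd (c := 1) hemT.aestronglyMeasurable
      (Eventually.of_forall fun x => (hen k _).le)
  have hRi : Integrable (fun x => expRem (s * ψ x)) m := by
    refine Integrable.mono' (g := fun x => 4 * s ^ 2 * ψ x ^ 2) (hψsq.const_mul _)
      (continuous_expRem.measurable.comp (hψ.const_mul s)).aestronglyMeasurable
      (Eventually.of_forall fun x => (norm_expRem_le_sq _).trans (le_of_eq ?_))
    rw [sq_abs]; ring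
  have hcψ : Integrable (fun x => (ψ x : ℂ)) m := hψi.ofReal
  have hwi : Integrable w m := Integrable.of_bound hw.aestronglyMeasurable M
    (Eventually.of_forall hM)
  have hwTi : Integrable (fun x => w (T x)) m := hTp.integrable_comp_of_integrable hwi
  have hdi : Integrable (fun x => (ψ x ^ 2 - σ2) - (w (T x) - w x)) m :=
    (hψsq.sub (integrable_const _)).sub (hwTi.sub hwi)
  have hdi' : Integrable (fun x => (((ψ x ^ 2 - σ2) - (w (T x) - w x) : ℝ) : ℂ)) m := hdi.ofReal
  have hci : Integrable (fun x => ((w (T x) - w x : ℝ) : ℂ)) m := (hwTi.sub hwi).ofReal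
  -- Since `S_{k+1} = ψ + S_k ∘ T`, Taylor expansion of `exp (i s ψ)` gives three terms: the remainder,
  -- a first-order term with zero integral because `ψ` is a martingale difference, and a second-order
  -- term.
  have hrec : ∀ x, e (k + 1) x =
      expRem (s * ψ x) * e k (T x) + (Complex.I * s) * ((ψ x : ℂ) * e k (T x))
      + ((1 - s ^ 2 * σ2 / 2 : ℝ) : ℂ) * e k (T x)
      - ((s ^ 2 / 2 : ℝ) : ℂ) * ((((ψ x ^ 2 - σ2) - (w (T x) - w x) : ℝ) : ℂ) * e k (T x))
      - ((s ^ 2 / 2 : ℝ) : ℂ) * (((w (T x) - w x : ℝ) : ℂ) * e k (T x)) := by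
    intro x
    have h1 : e (k + 1) x = Complex.exp (Complex.I * ((s * ψ x : ℝ) : ℂ)) * e k (T x) := by
      simp only [he]
      rw [birkhoffSum_succ', ← Complex.exp_add]
      congr 1
      push_cast; ring
    rw [h1]
    have h2 : Complex.exp (Complex.I * ((s * ψ x : ℝ) : ℂ)) = expRem (s * ψ x) +
      (1 + Complex.I * ((s * ψ x : ℝ) : ℂ) - ((s * ψ x : ℝ) : ℂ) ^ 2 / 2) := by
      unfold expRem; ring
    rw [h2]
    push_cast
    ring
  have I1 := hbd hRi
  have I2 := (hbd hcψ).const_mul (Complex.I * s)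
  have I3 : Integrable (fun x => ((1 - s ^ 2 * σ2 / 2 : ℝ) : ℂ) * e k (T x)) m := by
    have := (hbd (integrable_const (1 : ℂ))).const_mul ((1 - s ^ 2 * σ2 / 2 : ℝ) : ℂ)
    simpa using this
  have I4 := (hbd hdi').const_mul ((s ^ 2 / 2 : ℝ) : ℂ)
  have I5 := (hbd hci).const_mul ((s ^ 2 / 2 : ℝ) : ℂ)
  have I12 := I1.add I2
  have I123 := I12.add I3
  have I1234 := I123.sub I4
  have hTe : ∫ x, e k (T x) ∂m = ∫ x, e k x ∂m := by
    rw [← integral_map hTm.aemeasurable (hem k).aestronglyMeasurable, hTp.map_eq]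
  have hTwe : ∫ x, (w (T x) : ℂ) * e k (T x) ∂m = ∫ x, (w x : ℂ) * e k x ∂m := by
    rw [← integral_map (f := fun x => (w x : ℂ) * e k x) hTm.aemeasurable
      ((Complex.measurable_ofReal.comp hw).mul (hem k)).aestronglyMeasurable, hTp.map_eq]
  have h_integral : ∫ x, e (k + 1) x ∂m = ∫ x, expRem (s * ψ x) * e k (T x) ∂m
      + ((1 - s ^ 2 * σ2 / 2 : ℝ) : ℂ) * ∫ x, e k x ∂m
      - ((s ^ 2 / 2 : ℝ) : ℂ) * ∫ x, (((ψ x ^ 2 - σ2) - (w (T x) - w x) : ℝ) : ℂ) * e k (T x) ∂m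
      - ((s ^ 2 / 2 : ℝ) : ℂ) * ∫ x, ((w (T x) - w x : ℝ) : ℂ) * e k (T x) ∂m := by
    refine (integral_congr_ae (Eventually.of_forall hrec)).trans ?_
    refine (integral_sub I1234 I5).trans ?_
    rw [integral_sub' I123 I4, integral_add' I12 I3, integral_add' I1 I2,
      integral_const_mul, integral_const_mul, integral_const_mul, integral_const_mul,
      hmart _ (hem k) (fun x => (hen k x).le), hTe]
    ring
  have hB1 : ‖∫ x, expRem (s * ψ x) * e k (T x) ∂m‖ ≤ ∫ x, ‖expRem (s * ψ x)‖ ∂m := by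
    refine (norm_integral_le_integral_norm _).trans (le_of_eq ?_)
    exact integral_congr_ae (Eventually.of_forall fun x => by simp [hen])
  have hB2 : ‖∫ x, (((ψ x ^ 2 - σ2) - (w (T x) - w x) : ℝ) : ℂ) * e k (T x) ∂m‖ ≤ ε := by
    refine (norm_integral_le_integral_norm _).trans (le_trans (le_of_eq ?_) hε)
    refine integral_congr_ae (Eventually.of_forall fun x => ?_)
    simp only [norm_mul, hen, mul_one, Complex.norm_real, Real.norm_eq_abs]
  have hwe : Integrable (fun x => (w x : ℂ) * e k x) m :=
    (hwi.ofReal (𝕜 := ℂ)).mul_bdd (c := 1) (hem k).aestronglyMeasurable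
      (Eventually.of_forall fun x => (hen k _).le)
  have hB3 : ‖∫ x, ((w (T x) - w x : ℝ) : ℂ) * e k (T x) ∂m‖ ≤
      M * (|s| * (2 * ∫ x, |ψ x| ∂m)) := by
    have h1 : ∫ x, ((w (T x) - w x : ℝ) : ℂ) * e k (T x) ∂m
        = ∫ x, (w x : ℂ) * (e k x - e k (T x)) ∂m := by
      have a1 : Integrable (fun x => (w (T x) : ℂ) * e k (T x)) m :=
        hbd (hwTi.ofReal (𝕜 := ℂ))
      have a2 : Integrable (fun x => (w x : ℂ) * e k (T x)) m := hbd (hwi.ofReal (𝕜 := ℂ))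
      calc ∫ x, ((w (T x) - w x : ℝ) : ℂ) * e k (T x) ∂m
          = ∫ x, ((w (T x) : ℂ) * e k (T x) - (w x : ℂ) * e k (T x)) ∂m := by
            refine integral_congr_ae (Eventually.of_forall fun x => ?_)
            push_cast; ring
        _ = ∫ x, (w x : ℂ) * e k x ∂m - ∫ x, (w x : ℂ) * e k (T x) ∂m := by
            rw [integral_sub a1 a2]
            exact congrArg (· - _) hTwe
        _ = _ := by
            rw [← integral_sub hwe a2]
            refine integral_congr_ae (Eventually.of_forall fun x => ?_)
            simp only; ring
    rw [h1]
    have hψk : Integrable (fun x => |ψ (T^[k] x)|) m :=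
      (hTp.iterate k).integrable_comp_of_integrable hψi.abs
    have hk : ∫ x, |ψ (T^[k] x)| ∂m = ∫ x, |ψ x| ∂m := by
      have hp := hTp.iterate k
      rw [← integral_map (f := fun x => |ψ x|) hp.measurable.aemeasurable
        hψ.abs.aestronglyMeasurable, hp.map_eq]
    have hM0 : 0 ≤ M := by
      obtain ⟨x⟩ := nonempty_of_isProbabilityMeasure m
      exact (abs_nonneg _).trans (hM x)
    calc ‖∫ x, (w x : ℂ) * (e k x - e k (T x)) ∂m‖
        ≤ ∫ x, M * (|s| * (|ψ (T^[k] x)| + |ψ x|)) ∂m := by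
          refine norm_integral_le_of_norm_le (((hψk.add hψi.abs).const_mul _).const_mul _)
            (Eventually.of_forall fun x => ?_)
          rw [norm_mul, Complex.norm_real, Real.norm_eq_abs]
          refine mul_le_mul (hM x) ?_ (norm_nonneg _) hM0
          refine (norm_exp_I_sub_exp_I_le _ _).trans ?_
          rw [← mul_sub, abs_mul, abs_sub_comm, birkhoffSum_apply_sub_birkhoffSum]
          gcongr
          exact abs_sub _ _
      _ = _ := by
          rw [integral_const_mul, integral_const_mul, integral_add hψk hψi.abs, hk]
          ring
  rw [h_integral]
  have hs2 : ‖((s ^ 2 / 2 : ℝ) : ℂ)‖ = s ^ 2 / 2 := by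
    rw [Complex.norm_real, Real.norm_eq_abs, abs_of_nonneg (by positivity)]
  calc _ = ‖∫ x, expRem (s * ψ x) * e k (T x) ∂m - (((s ^ 2 / 2 : ℝ) : ℂ) *
      ∫ x, (((ψ x ^ 2 - σ2) - (w (T x) - w x) : ℝ) : ℂ) * e k (T x) ∂m +
      ((s ^ 2 / 2 : ℝ) : ℂ) * ∫ x, ((w (T x) - w x : ℝ) : ℂ) * e k (T x) ∂m)‖ := by
        congr 1; ring
    _ ≤ _ := by
        refine (norm_sub_le _ _).trans (add_le_add hB1 ?_)
        refine (norm_add_le _ _).trans ?_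
        rw [norm_mul, norm_mul, hs2, mul_add]
        gcongr

/-- Central limit theorem for stationary ergodic reversed martingale differences, in terms of
characteristic functions. -/
lemma martingale_charFun_tendsto (hT : Ergodic T m) {ψ : Ω → ℝ} (hψ : Measurable ψ)
    (hψ2 : MemLp ψ 2 m)
    (hmart : ∀ g : Ω → ℂ, Measurable g → (∀ x, ‖g x‖ ≤ 1) → ∫ x, (ψ x : ℂ) * g (T x) ∂m = 0)
    (t : ℝ) :
    Tendsto (fun n : ℕ => ∫ x, Complex.exp
      (Complex.I * ((t / Real.sqrt n * birkhoffSum T ψ n x : ℝ) : ℂ)) ∂m) atTop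
      (𝓝 (Complex.exp ((-(t ^ 2 * (∫ x, ψ x ^ 2 ∂m) / 2) : ℝ) : ℂ))) := by
  set σ2 := ∫ x, ψ x ^ 2 ∂m with hσ
  have hψi : Integrable ψ m := hψ2.integrable (by norm_num)
  have hψsq : Integrable (fun x => ψ x ^ 2) m := hψ2.integrable_sq
  have hσ0 : 0 ≤ σ2 := integral_nonneg fun x => sq_nonneg _
  have hrem : Tendsto (fun n : ℕ => (n : ℝ) * ∫ x, ‖expRem (t / Real.sqrt n * ψ x)‖ ∂m) atTop
      (𝓝 0) := by
    have h0 : (0 : ℝ) = ∫ _ : Ω, (0 : ℝ) ∂m := by simp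
    rw [h0]
    simp_rw [← integral_const_mul]
    refine tendsto_integral_of_dominated_convergence (fun x => 4 * t ^ 2 * ψ x ^ 2) ?_
      (hψsq.const_mul _) ?_ ?_
    · intro n
      exact ((continuous_expRem.measurable.comp (hψ.const_mul _)).norm.const_mul
        _).aestronglyMeasurable
    · intro n
      refine Eventually.of_forall fun x => ?_
      rw [Real.norm_of_nonneg (by positivity)]
      rcases Nat.eq_zero_or_pos n with rfl | hn
      · simp; positivity
      have hn' : (0 : ℝ) < n := by exact_mod_cast hn
      have h1 := norm_expRem_le_sq (t / Real.sqrt n * ψ x)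
      rw [sq_abs, mul_pow, div_pow, Real.sq_sqrt hn'.le] at h1
      calc (n : ℝ) * ‖expRem (t / Real.sqrt n * ψ x)‖
          ≤ n * (4 * (t ^ 2 / n * ψ x ^ 2)) := by gcongr
        _ = _ := by field_simp
    · refine Eventually.of_forall fun x => ?_
      have hlim : Tendsto (fun n : ℕ => 4 * |t * ψ x| ^ 3 * (Real.sqrt n)⁻¹) atTop (𝓝 0) := by
        have : Tendsto (fun n : ℕ => (Real.sqrt n)⁻¹) atTop (𝓝 0) :=
          tendsto_inv_atTop_zero.comp
            (Real.tendsto_sqrt_atTop.comp tendsto_natCast_atTop_atTop)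
        simpa using this.const_mul (4 * |t * ψ x| ^ 3)
      refine squeeze_zero' (Eventually.of_forall fun n => by positivity) ?_ hlim
      filter_upwards [eventually_gt_atTop 0] with n hn
      have hn' : (0 : ℝ) < n := by exact_mod_cast hn
      have hs := Real.sqrt_pos.2 hn'
      have h1 := norm_expRem_le_cube (t / Real.sqrt n * ψ x)
      have h2 : |t / Real.sqrt n * ψ x| = |t * ψ x| / Real.sqrt n := by
        rw [div_mul_eq_mul_div, abs_div, abs_of_pos hs]
      rw [h2, div_pow] at h1
      calc (n : ℝ) * ‖expRem (t / Real.sqrt n * ψ x)‖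
          ≤ n * (4 * (|t * ψ x| ^ 3 / Real.sqrt n ^ 3)) := by gcongr
        _ = _ := by
          nth_rewrite 1 [← Real.sq_sqrt hn'.le]
          field_simp
  have hpow : Tendsto (fun n : ℕ => (((1 - (t / Real.sqrt n) ^ 2 * σ2 / 2 : ℝ) ^ n : ℝ) : ℂ)) atTop
      (𝓝 (Complex.exp ((-(t ^ 2 * σ2 / 2) : ℝ) : ℂ))) := by
    rw [← Complex.ofReal_exp]
    refine (Complex.continuous_ofReal.tendsto _).comp ?_
    refine (Real.tendsto_one_add_div_pow_exp (-(t ^ 2 * σ2 / 2))).congr fun n => ?_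
    rw [div_pow, Real.sq_sqrt (Nat.cast_nonneg n)]
    congr 1
    ring
  have hdiff : Tendsto (fun n : ℕ => ∫ x, Complex.exp
      (Complex.I * ((t / Real.sqrt n * birkhoffSum T ψ n x : ℝ) : ℂ)) ∂m -
      (((1 - (t / Real.sqrt n) ^ 2 * σ2 / 2 : ℝ) ^ n : ℝ) : ℂ)) atTop (𝓝 0) := by
    rw [Metric.tendsto_atTop']
    intro δ hδ
    obtain ⟨w, hw, ⟨M, hM⟩, hwε⟩ := exists_coboundary_approx hT
      (q := fun x => ψ x ^ 2 - σ2) ((hψ.pow_const 2).sub_const _)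
      (hψsq.sub (integrable_const _))
      (by rw [integral_sub hψsq (integrable_const _)]; simp [hσ])
      (ε := δ / (t ^ 2 + 1)) (by positivity)
    have hlim2 : Tendsto (fun n : ℕ => t ^ 2 / 2 * (M * (2 * ∫ x, |ψ x| ∂m)) *
        (|t| * (Real.sqrt n)⁻¹)) atTop (𝓝 0) := by
      have : Tendsto (fun n : ℕ => (Real.sqrt n)⁻¹) atTop (𝓝 0) :=
        tendsto_inv_atTop_zero.comp
          (Real.tendsto_sqrt_atTop.comp tendsto_natCast_atTop_atTop)
      simpa using (this.const_mul |t|).const_mul (t ^ 2 / 2 * (M * (2 * ∫ x, |ψ x| ∂m)))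
    have hsum := hrem.add hlim2
    rw [add_zero] at hsum
    have hev1 := hsum.eventually_lt_const (show 0 < δ / 2 by positivity)
    have hev2 : ∀ᶠ n : ℕ in atTop, t ^ 2 * σ2 / 2 ≤ n :=
      tendsto_natCast_atTop_atTop.eventually_ge_atTop _
    have hev3 := eventually_gt_atTop (0 : ℕ)
    obtain ⟨N, hN⟩ := eventually_atTop.1 (hev1.and (hev2.and hev3))
    refine ⟨N, fun n hn => ?_⟩
    obtain ⟨h1, h2, h3⟩ := hN n hn.le
    have hn' : (0 : ℝ) < n := by exact_mod_cast h3
    have hs := Real.sqrt_pos.2 hn'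
    have hssq := Real.sq_sqrt hn'.le
    set s := t / Real.sqrt n with hsdef
    have hs2 : s ^ 2 = t ^ 2 / n := by rw [hsdef, div_pow, hssq]
    set η := ∫ x, ‖expRem (s * ψ x)‖ ∂m +
      s ^ 2 / 2 * (δ / (t ^ 2 + 1) + M * (|s| * (2 * ∫ x, |ψ x| ∂m))) with hη
    have hη0 : 0 ≤ η := (norm_nonneg _).trans (charFun_step hT hψ hψ2 hmart hw hM hwε s 0)
    have hlam : |1 - s ^ 2 * σ2 / 2| ≤ 1 := by
      have : s ^ 2 * σ2 / 2 ≤ 1 := by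
        rw [hs2]
        rw [show t ^ 2 / (n : ℝ) * σ2 / 2 = (t ^ 2 * σ2 / 2) / (n : ℝ) by ring]
        exact (div_le_one hn').2 h2
      have h0 : 0 ≤ s ^ 2 * σ2 / 2 := by positivity
      rw [abs_le]; constructor <;> linarith
    have hind : ∀ k : ℕ, ‖∫ x, Complex.exp
        (Complex.I * ((s * birkhoffSum T ψ k x : ℝ) : ℂ)) ∂m -
        (((1 - s ^ 2 * σ2 / 2 : ℝ) ^ k : ℝ) : ℂ)‖ ≤ k * η := by
      intro k
      induction k with
      | zero => simp
      | succ k ih =>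
        have hst := charFun_step hT hψ hψ2 hmart hw hM hwε s k
        set A := ∫ x, Complex.exp (Complex.I * ((s * birkhoffSum T ψ (k + 1) x : ℝ) : ℂ)) ∂m
        set B := ∫ x, Complex.exp (Complex.I * ((s * birkhoffSum T ψ k x : ℝ) : ℂ)) ∂m
        set l : ℝ := 1 - s ^ 2 * σ2 / 2
        calc ‖A - ((l ^ (k + 1) : ℝ) : ℂ)‖
            = ‖(A - (l : ℂ) * B) + (l : ℂ) * (B - ((l ^ k : ℝ) : ℂ))‖ := by
              congr 1; push_cast; ring
          _ ≤ η + 1 * (k * η) := by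
              refine (norm_add_le _ _).trans (add_le_add hst ?_)
              rw [norm_mul, Complex.norm_real, Real.norm_eq_abs]
              exact mul_le_mul hlam ih (norm_nonneg _) zero_le_one
          _ = _ := by push_cast; ring
    rw [dist_zero_right]
    refine (hind n).trans_lt ?_
    have hsabs : |s| = |t| * (Real.sqrt n)⁻¹ := by
      rw [hsdef, abs_div, abs_of_pos hs, div_eq_mul_inv]
    have e1 : (n : ℝ) * η = (n * ∫ x, ‖expRem (s * ψ x)‖ ∂m + t ^ 2 / 2 *
        (M * (2 * ∫ x, |ψ x| ∂m)) * (|t| * (Real.sqrt n)⁻¹)) + t ^ 2 / (t ^ 2 + 1) * (δ / 2) := by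
      rw [hη, hs2, hsabs]
      field_simp
      ring
    rw [e1]
    have h5 : t ^ 2 / (t ^ 2 + 1) ≤ 1 := by rw [div_le_one (by positivity)]; linarith
    have : t ^ 2 / (t ^ 2 + 1) * (δ / 2) ≤ 1 * (δ / 2) := by gcongr
    linarith
  simpa using hdiff.add hpow

end MartingaleCLT

/-! ### Martingale-coboundary decompositions and the central limit theorem -/

section Gordin

variable {Ω : Type*} [MeasurableSpace Ω] {m : Measure Ω} [IsProbabilityMeasure m] {T : Ω → Ω}

/-- A measurable coboundary does not affect the limiting characteristic function. -/
lemma charFun_coboundary_tendsto (hT : MeasurePreserving T m m) {f ψ χ : Ω → ℝ}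
    (hf : Measurable f) (hψ : Measurable ψ) (hχ : Measurable χ)
    (h : ∀ᵐ x ∂m, f x = ψ x + χ (T x) - χ x) (t : ℝ) :
    Tendsto (fun n : ℕ =>
      ∫ x, Complex.exp (Complex.I * ((t / Real.sqrt n * birkhoffSum T f n x : ℝ) : ℂ)) ∂m -
      ∫ x, Complex.exp (Complex.I * ((t / Real.sqrt n * birkhoffSum T ψ n x : ℝ) : ℂ)) ∂m)
      atTop (𝓝 0) := by
  have hTm := hT.measurable
  -- a.e. the Birkhoff sums differ by `χ ∘ Tⁿ - χ`
  have hae : ∀ᵐ x ∂m, ∀ k : ℕ, f (T^[k] x) = ψ (T^[k] x) + χ (T (T^[k] x)) - χ (T^[k] x) :=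
    ae_all_iff.2 fun k => (hT.iterate k).quasiMeasurePreserving.ae h
  have hsum : ∀ᵐ x ∂m, ∀ n : ℕ,
      birkhoffSum T f n x = birkhoffSum T ψ n x + (χ (T^[n] x) - χ x) := by
    filter_upwards [hae] with x hx n
    induction n with
    | zero => simp
    | succ n ih =>
      rw [birkhoffSum_succ, birkhoffSum_succ, ih, hx n, Function.iterate_succ_apply']
      ring
  set κ : ℕ → Ω → ℝ := fun n x => min 2 (|t / Real.sqrt n| * |χ x|) with hκ
  have hκm : ∀ n, Measurable (κ n) := fun n => measurable_const.min (hχ.abs.const_mul _)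
  have hκ0 : ∀ n x, 0 ≤ κ n x := fun n x => le_min (by norm_num) (by positivity)
  have hκ2 : ∀ n x, κ n x ≤ 2 := fun n x => min_le_left _ _
  have hκi : ∀ n, Integrable (κ n) m := fun n => Integrable.of_bound
    (hκm n).aestronglyMeasurable 2 (Eventually.of_forall fun x => by
      rw [Real.norm_of_nonneg (hκ0 n x)]; exact hκ2 n x)
  have hlim : Tendsto (fun n : ℕ => 2 * ∫ x, κ n x ∂m) atTop (𝓝 0) := by
    have : Tendsto (fun n : ℕ => ∫ x, κ n x ∂m) atTop (𝓝 (∫ _ : Ω, (0 : ℝ) ∂m)) := by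
      refine tendsto_integral_of_dominated_convergence (fun _ => 2)
        (fun n => (hκm n).aestronglyMeasurable) (integrable_const _) ?_ ?_
      · intro n
        refine Eventually.of_forall fun x => ?_
        rw [Real.norm_of_nonneg (hκ0 n x)]; exact hκ2 n x
      · refine Eventually.of_forall fun x => ?_
        have h1 : Tendsto (fun n : ℕ => |t / Real.sqrt n| * |χ x|) atTop (𝓝 0) := by
          have h2 : Tendsto (fun n : ℕ => t / Real.sqrt n) atTop (𝓝 0) :=
            tendsto_const_nhds.div_atTop
              (Real.tendsto_sqrt_atTop.comp tendsto_natCast_atTop_atTop)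
          simpa using h2.abs.mul_const |χ x|
        exact squeeze_zero (fun n => hκ0 n x) (fun n => min_le_right _ _) h1
    simpa using this.const_mul 2
  refine squeeze_zero_norm (fun n => ?_) hlim
  have hei : ∀ {g : Ω → ℝ}, Measurable g → Integrable (fun x => Complex.exp
      (Complex.I * ((t / Real.sqrt n * birkhoffSum T g n x : ℝ) : ℂ))) m := by
    intro g hg
    have := measurable_birkhoffSum hTm hg n
    refine Integrable.of_bound (Measurable.aestronglyMeasurable (by fun_prop)) 1
      (Eventually.of_forall fun x => (norm_exp_I_mul _).le)
  rw [← integral_sub (hei hf) (hei hψ)]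
  have hκT : Integrable (fun x => κ n (T^[n] x)) m :=
    (hT.iterate n).integrable_comp_of_integrable (hκi n)
  have hκe : ∫ x, κ n (T^[n] x) ∂m = ∫ x, κ n x ∂m := by
    have hp := hT.iterate n
    rw [← integral_map (f := κ n) hp.measurable.aemeasurable
        (hκm n).aestronglyMeasurable, hp.map_eq]
  calc _ ≤ ∫ x, (κ n (T^[n] x) + κ n x) ∂m := by
        refine norm_integral_le_of_norm_le (hκT.add (hκi n)) ?_
        filter_upwards [hsum] with x hx
        have h1 : ‖Complex.exp (Complex.I * ((t / Real.sqrt n * birkhoffSum T f n x : ℝ) : ℂ)) -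
          Complex.exp (Complex.I * ((t / Real.sqrt n * birkhoffSum T ψ n x : ℝ) : ℂ))‖
            ≤ min 2 (|t / Real.sqrt n| * |χ (T^[n] x) - χ x|) := by
          refine le_min ((norm_sub_le _ _).trans ?_) ((norm_exp_I_sub_exp_I_le _ _).trans ?_)
          · rw [norm_exp_I_mul, norm_exp_I_mul]; norm_num
          · rw [← mul_sub, abs_mul, hx n, add_sub_cancel_left]
        refine h1.trans ?_
        have h2 : |t / Real.sqrt n| * |χ (T^[n] x) - χ x| ≤
          |t / Real.sqrt n| * |χ (T^[n] x)| + |t / Real.sqrt n| * |χ x| := by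
          rw [← mul_add]; gcongr; exact abs_sub _ _
        have p1 : 0 ≤ |t / Real.sqrt n| * |χ (T^[n] x)| := by positivity
        have p2 : 0 ≤ |t / Real.sqrt n| * |χ x| := by positivity
        simp only [hκ]
        rcases min_cases 2 (|t / Real.sqrt n| * |χ (T^[n] x)|) with ⟨e1, _⟩ | ⟨e1, _⟩ <;>
        rcases min_cases 2 (|t / Real.sqrt n| * |χ x|) with ⟨e2, _⟩ | ⟨e2, _⟩ <;>
        rw [e1, e2]
        · exact (min_le_left _ _).trans (by linarith)
        · exact (min_le_left _ _).trans (by linarith)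
        · exact (min_le_left _ _).trans (by linarith)
        · exact (min_le_right _ _).trans h2
    _ = 2 * ∫ x, κ n x ∂m := by rw [integral_add hκT (hκi n), hκe]; ring

/-- An integrable coboundary has zero mean, even if the transfer function is not integrable. -/
lemma integral_coboundary_eq_zero {Ω : Type*} [MeasurableSpace Ω] {m : Measure Ω}
    [IsFiniteMeasure m] {T : Ω → Ω} (hT : MeasurePreserving T m m) {u : Ω → ℝ} (hu : Measurable u)
    (hi : Integrable (fun x => u x - u (T x)) m) : ∫ x, (u x - u (T x)) ∂m = 0 := by
  set c : ℕ → Ω → ℝ := fun N x => max (min (u x) N) (-N) with hc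
  have hcm : ∀ N, Measurable (c N) := fun N => (hu.min measurable_const).max measurable_const
  have hcb : ∀ N x, |c N x| ≤ N := by
    intro N x
    have hR : (0 : ℝ) ≤ N := Nat.cast_nonneg N
    rw [abs_le]
    exact ⟨le_max_right _ _, max_le (min_le_right _ _) (by linarith)⟩
  have hci : ∀ N, Integrable (c N) m := fun N => Integrable.of_bound
    (hcm N).aestronglyMeasurable N (Eventually.of_forall (hcb N))
  have hz : ∀ N, ∫ x, (c N x - c N (T x)) ∂m = 0 := by
    intro N
    have h1 : Integrable (fun x => c N (T x)) m := hT.integrable_comp_of_integrable (hci N)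
    rw [integral_sub (hci N) h1, ← integral_map (f := c N) hT.measurable.aemeasurable
      (hcm N).aestronglyMeasurable, hT.map_eq, sub_self]
  have hlim : Tendsto (fun N : ℕ => ∫ x, (c N x - c N (T x)) ∂m) atTop
      (𝓝 (∫ x, (u x - u (T x)) ∂m)) := by
    refine tendsto_integral_of_dominated_convergence (fun x => |u x - u (T x)|)
      (fun N => ((hcm N).sub ((hcm N).comp hT.measurable)).aestronglyMeasurable) hi.abs ?_ ?_
    · intro N
      refine Eventually.of_forall fun x => ?_
      rw [Real.norm_eq_abs]
      exact (abs_max_sub_max_le_abs _ _ _).trans (by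
        have := abs_min_sub_min_le_max (u x) N (u (T x)) N
        simpa using this)
    · refine Eventually.of_forall fun x => ?_
      refine tendsto_const_nhds.congr' ?_
      obtain ⟨R₀, hR₀⟩ := exists_nat_ge (|u x| + |u (T x)|)
      filter_upwards [eventually_ge_atTop R₀] with R hR
      have h0 : |u x| + |u (T x)| ≤ R := hR₀.trans (by exact_mod_cast hR)
      have h1 : |u x| ≤ R := by linarith [abs_nonneg (u (T x))]
      have h2 : |u (T x)| ≤ R := by linarith [abs_nonneg (u x)]
      rw [abs_le] at h1 h2
      simp only [hc]
      rw [min_eq_left h1.2, max_eq_left h1.1, min_eq_left h2.2, max_eq_left h2.1]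
  exact tendsto_nhds_unique hlim (by simp [hz])

/-- Gordin's method: a martingale-coboundary decomposition yields the central limit theorem
together with the characterization of degeneracy. -/
lemma clt_of_martingale_coboundary (hT : Ergodic T m) {f ψ χ : Ω → ℝ}
    (hf : Measurable f) (hψ : Measurable ψ) (hχ : Measurable χ)
    (h : ∀ᵐ x ∂m, f x = ψ x + χ (T x) - χ x) (hψ2 : MemLp ψ 2 m)
    (hmart : ∀ g : Ω → ℂ, Measurable g → (∀ x, ‖g x‖ ≤ 1) → ∫ x, (ψ x : ℂ) * g (T x) ∂m = 0) :
    ∃ σ2 : NNReal,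
      (∀ g : BoundedContinuousFunction ℝ ℝ,
        Tendsto (fun n => ∫ x, g (birkhoffSum T f n x / Real.sqrt n) ∂m) atTop
          (𝓝 (∫ y, g y ∂(ProbabilityTheory.gaussianReal 0 σ2)))) ∧
      (σ2 = 0 ↔ ∃ χ : Ω → ℝ, Measurable χ ∧ ∀ᵐ x ∂m, f x = χ (T x) - χ x) := by
  have hTp := hT.toMeasurePreserving
  have hσ0 : 0 ≤ ∫ x, ψ x ^ 2 ∂m := integral_nonneg fun x => sq_nonneg _
  have hchar : ∀ t : ℝ, Tendsto (fun n : ℕ => ∫ x, Complex.exp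
      (Complex.I * ((t / Real.sqrt n * birkhoffSum T f n x : ℝ) : ℂ)) ∂m) atTop
      (𝓝 (Complex.exp ((-(t ^ 2 * (∫ x, ψ x ^ 2 ∂m) / 2) : ℝ) : ℂ))) := by
    intro t
    have := (charFun_coboundary_tendsto hTp hf hψ hχ h t).add
      (martingale_charFun_tendsto hT hψ hψ2 hmart t)
    simpa using this
  refine ⟨⟨∫ x, ψ x ^ 2 ∂m, hσ0⟩, ?_, ?_⟩
  · set σ2 : NNReal := ⟨∫ x, ψ x ^ 2 ∂m, hσ0⟩ with hσ
    have hXm : ∀ n : ℕ, Measurable (fun x => birkhoffSum T f n x / Real.sqrt n) := fun n =>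
      (measurable_birkhoffSum hT.measurable hf n).div_const _
    set P : ℕ → ProbabilityMeasure ℝ := fun n =>
      ⟨m.map (fun x => birkhoffSum T f n x / Real.sqrt n),
        Measure.isProbabilityMeasure_map (hXm n).aemeasurable⟩ with hP
    set P0 : ProbabilityMeasure ℝ := ⟨ProbabilityTheory.gaussianReal 0 σ2, inferInstance⟩ with hP0
    have hconv : Tendsto P atTop (𝓝 P0) := by
      rw [ProbabilityMeasure.tendsto_iff_tendsto_charFun]
      intro t
      have e0 : charFun (P0 : Measure ℝ) t
          = Complex.exp ((-(t ^ 2 * (∫ x, ψ x ^ 2 ∂m) / 2) : ℝ) : ℂ) := by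
        change charFun (ProbabilityTheory.gaussianReal 0 σ2) t = _
        rw [ProbabilityTheory.charFun_gaussianReal]
        congr 1
        have : ((σ2 : ℝ) : ℂ) = ((∫ x, ψ x ^ 2 ∂m : ℝ) : ℂ) := rfl
        rw [this]
        push_cast
        ring
      rw [e0]
      refine (hchar t).congr fun n => ?_
      change _ = charFun (m.map (fun x => birkhoffSum T f n x / Real.sqrt n)) t
      rw [charFun_apply_real, integral_map (hXm n).aemeasurable
        (Measurable.aestronglyMeasurable (by fun_prop))]
      refine integral_congr_ae (Eventually.of_forall fun x => ?_)
      simp only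
      congr 1
      push_cast
      ring
    intro g
    have := (ProbabilityMeasure.tendsto_iff_forall_integral_tendsto.1 hconv) g
    refine this.congr fun n => ?_
    change ∫ y, g y ∂(m.map (fun x => birkhoffSum T f n x / Real.sqrt n)) = _
    rw [integral_map (hXm n).aemeasurable g.continuous.measurable.aestronglyMeasurable]
  · constructor
    · intro h0
      have h1 : ∫ x, ψ x ^ 2 ∂m = 0 := congrArg NNReal.toReal h0
      rw [integral_eq_zero_iff_of_nonneg (fun x => sq_nonneg _) hψ2.integrable_sq] at h1
      refine ⟨χ, hχ, ?_⟩
      filter_upwards [h, h1] with x hx hx1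
      have : ψ x = 0 := by simpa using hx1
      rw [hx, this, zero_add]
    · rintro ⟨χ', hχ', hcob⟩
      have h1 := charFun_coboundary_tendsto hTp hf (measurable_const (a := (0 : ℝ))) hχ'
        (hcob.mono fun x hx => by rw [hx]; ring) 1
      have h2 := tendsto_nhds_unique (hchar 1) (by
        have h3 := h1.add_const (1 : ℂ)
        refine (h3.congr fun n => ?_)
        have : birkhoffSum T (fun _ : Ω => (0 : ℝ)) n = fun _ => 0 := by
          ext x; simp [birkhoffSum]
        simp [this])
      have h4 : Complex.exp ((-(1 ^ 2 * (∫ x, ψ x ^ 2 ∂m) / 2) : ℝ) : ℂ) = ((1 : ℝ) : ℂ) := by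
        rw [h2]; simp
      rw [← Complex.ofReal_exp] at h4
      have h5 := Complex.ofReal_injective h4
      rw [Real.exp_eq_one_iff] at h5
      have h6 : ∫ x, ψ x ^ 2 ∂m = 0 := by linarith
      exact NNReal.eq h6

end Gordin

/-! ### Inverse branches and their weights -/

section Geometry

/-- The left branch of the map. -/
noncomputable def lsvL (α x : ℝ) : ℝ := x * (1 + 2 ^ α * x ^ α)

/-- The inverse of the left branch on `[0, 1]`. The supremum makes it monotone on all of `ℝ`,
hence measurable. -/
noncomputable def lsvA (α z : ℝ) : ℝ := sSup {x | x ∈ Set.Icc (0 : ℝ) (1 / 2) ∧ lsvL α x ≤ z}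

/-- The inverse of the right branch. -/
noncomputable def lsvB (z : ℝ) : ℝ := (z + 1) / 2

/-- The derivative of `lsvA`. -/
noncomputable def lsvD (α z : ℝ) : ℝ := (1 + (1 + α) * (2 ^ α * lsvA α z ^ α))⁻¹

/-- The derivative of the inverse branch `z ↦ lsvB (lsvA^[k] z)`. -/
noncomputable def lsvW (α : ℝ) : ℕ → ℝ → ℝ
  | 0, _ => 1 / 2
  | k + 1, z => lsvD α z * lsvW α k (lsvA α z)

variable {α : ℝ}

lemma lsvL_zero : lsvL α 0 = 0 := by simp [lsvL]

lemma lsvL_half : lsvL α (1 / 2) = 1 := by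
  rw [lsvL, ← Real.mul_rpow (by norm_num) (by norm_num)]
  norm_num

lemma lsvL_continuous (h0 : 0 < α) : Continuous (lsvL α) := by
  unfold lsvL
  exact continuous_id.mul (continuous_const.add
    (continuous_const.mul (Real.continuous_rpow_const h0.le)))

lemma lsvL_strictMonoOn (h0 : 0 < α) : StrictMonoOn (lsvL α) (Set.Ici 0) := by
  intro x hx y hy hxy
  have hx0 : (0 : ℝ) ≤ x := hx
  have h1 : x ^ α ≤ y ^ α := Real.rpow_le_rpow hx0 hxy.le h0.le
  have h2 : (0 : ℝ) < 2 ^ α := by positivity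
  have h3 : 0 ≤ x ^ α := Real.rpow_nonneg hx0 _
  unfold lsvL
  have h4 : 2 ^ α * x ^ α ≤ 2 ^ α * y ^ α := by gcongr
  have h5 : 0 ≤ 2 ^ α * x ^ α := by positivity
  nlinarith

lemma exists_lsvL_eq (h0 : 0 < α) {z : ℝ} (hz : z ∈ Set.Icc (0 : ℝ) 1) :
    ∃ x ∈ Set.Icc (0 : ℝ) (1 / 2), lsvL α x = z := by
  have := intermediate_value_Icc (show (0 : ℝ) ≤ 1 / 2 by norm_num)
    (lsvL_continuous h0).continuousOn
  rw [lsvL_zero, lsvL_half] at this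
  exact this hz

lemma lsvA_lsvL (h0 : 0 < α) {x : ℝ} (hx : x ∈ Set.Icc (0 : ℝ) (1 / 2)) :
    lsvA α (lsvL α x) = x := by
  refine IsGreatest.csSup_eq ⟨⟨hx, le_rfl⟩, ?_⟩
  rintro y ⟨hy, hyx⟩
  exact ((lsvL_strictMonoOn h0).le_iff_le hy.1 hx.1).1 hyx

lemma lsvA_mem (h0 : 0 < α) {z : ℝ} (hz : z ∈ Set.Icc (0 : ℝ) 1) :
    lsvA α z ∈ Set.Icc (0 : ℝ) (1 / 2) := by
  obtain ⟨x, hx, rfl⟩ := exists_lsvL_eq h0 hz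
  rwa [lsvA_lsvL h0 hx]

lemma lsvL_lsvA (h0 : 0 < α) {z : ℝ} (hz : z ∈ Set.Icc (0 : ℝ) 1) :
    lsvL α (lsvA α z) = z := by
  obtain ⟨x, hx, rfl⟩ := exists_lsvL_eq h0 hz
  rw [lsvA_lsvL h0 hx]

lemma lsvA_nonneg (z : ℝ) : 0 ≤ lsvA α z := Real.sSup_nonneg fun _ hx => hx.1.1

lemma lsvA_mono : Monotone (lsvA α) := by
  intro z z' hzz
  unfold lsvA
  rcases Set.eq_empty_or_nonempty {x | x ∈ Set.Icc (0 : ℝ) (1 / 2) ∧ lsvL α x ≤ z} with h | h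
  · rw [h, Real.sSup_empty]
    exact Real.sSup_nonneg fun _ hx => hx.1.1
  · exact csSup_le_csSup ⟨1 / 2, fun x hx => hx.1.2⟩ h fun x hx => ⟨hx.1, hx.2.trans hzz⟩

lemma lsvA_measurable : Measurable (lsvA α) := lsvA_mono.measurable

lemma lsvA_zero (h0 : 0 < α) : lsvA α 0 = 0 := by
  have := lsvA_lsvL h0 (x := 0) (by norm_num)
  rwa [lsvL_zero] at this

lemma lsvA_one (h0 : 0 < α) : lsvA α 1 = 1 / 2 := by
  have := lsvA_lsvL h0 (x := 1 / 2) (by norm_num)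
  rwa [lsvL_half] at this

lemma lsvA_pos (h0 : 0 < α) {z : ℝ} (hz : z ∈ Set.Ioc (0 : ℝ) 1) : 0 < lsvA α z := by
  refine lt_of_le_of_ne (lsvA_nonneg z) fun h => ?_
  have := lsvL_lsvA h0 ⟨hz.1.le, hz.2⟩
  rw [← h, lsvL_zero] at this
  exact hz.1.ne this

lemma lsvA_mem' (h0 : 0 < α) {z : ℝ} (hz : z ∈ Set.Ioc (0 : ℝ) 1) :
    lsvA α z ∈ Set.Ioc (0 : ℝ) (1 / 2) :=
  ⟨lsvA_pos h0 hz, (lsvA_mem h0 ⟨hz.1.le, hz.2⟩).2⟩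

lemma lsvA_mem_X (h0 : 0 < α) {z : ℝ} (hz : z ∈ Set.Ioc (0 : ℝ) 1) :
    lsvA α z ∈ Set.Ioc (0 : ℝ) 1 :=
  ⟨lsvA_pos h0 hz, (lsvA_mem' h0 hz).2.trans (by norm_num)⟩

lemma lsvA_iter_mem_X (h0 : 0 < α) {z : ℝ} (hz : z ∈ Set.Ioc (0 : ℝ) 1) (k : ℕ) :
    (lsvA α)^[k] z ∈ Set.Ioc (0 : ℝ) 1 := by
  induction k with
  | zero => exact hz
  | succ k ih => rw [Function.iterate_succ_apply']; exact lsvA_mem_X h0 ih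

lemma lsvB_mem {z : ℝ} (hz : z ∈ Set.Ioc (0 : ℝ) 1) : lsvB z ∈ Set.Ioc (1 / 2 : ℝ) 1 := by
  unfold lsvB; constructor <;> linarith [hz.1, hz.2]

lemma Y_sub_X {y : ℝ} (hy : y ∈ Set.Ioc (1 / 2 : ℝ) 1) : y ∈ Set.Ioc (0 : ℝ) 1 :=
  ⟨by linarith [hy.1], hy.2⟩

lemma lsv_eq_left {x : ℝ} (hx : x ≤ 1 / 2) : lsv α x = lsvL α x := by
  rw [lsv, if_pos hx, lsvL]

lemma lsv_lsvA (h0 : 0 < α) {z : ℝ} (hz : z ∈ Set.Ioc (0 : ℝ) 1) : lsv α (lsvA α z) = z := by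
  rw [lsv_eq_left (lsvA_mem' h0 hz).2, lsvL_lsvA h0 ⟨hz.1.le, hz.2⟩]

lemma lsvA_lsv (h0 : 0 < α) {x : ℝ} (hx : x ∈ Set.Ioc (0 : ℝ) (1 / 2)) :
    lsvA α (lsv α x) = x := by
  rw [lsv_eq_left hx.2, lsvA_lsvL h0 ⟨hx.1.le, hx.2⟩]

lemma lsv_lsvB {z : ℝ} (hz : 0 < z) : lsv α (lsvB z) = z := by
  have : ¬ lsvB z ≤ 1 / 2 := by unfold lsvB; linarith
  rw [lsv, if_neg this, lsvB]; ring

lemma lsvB_lsv {x : ℝ} (hx : 1 / 2 < x) : lsvB (lsv α x) = x := by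
  rw [lsv, if_neg (not_le.2 hx), lsvB]; ring

lemma lsv_measurable : Measurable (lsv α) := by
  unfold lsv
  refine Measurable.ite measurableSet_Iic ?_ ?_
  · exact measurable_id.mul (measurable_const.add
      (measurable_const.mul (measurable_id.pow_const α)))
  · exact (measurable_id.const_mul 2).sub_const 1

lemma lsvL_mem_X (h0 : 0 < α) {x : ℝ} (hx : x ∈ Set.Ioc (0 : ℝ) (1 / 2)) :
    lsvL α x ∈ Set.Ioc (0 : ℝ) 1 := by
  constructor
  · have := lsvL_strictMonoOn h0 (Set.mem_Ici.2 le_rfl) (Set.mem_Ici.2 hx.1.le) hx.1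
    rwa [lsvL_zero] at this
  · have := ((lsvL_strictMonoOn h0).le_iff_le (a := x) (b := 1 / 2) hx.1.le
      (by norm_num [Set.mem_Ici])).2 hx.2
    rwa [lsvL_half] at this

lemma lsv_mem_X (h0 : 0 < α) {x : ℝ} (hx : x ∈ Set.Ioc (0 : ℝ) 1) :
    lsv α x ∈ Set.Ioc (0 : ℝ) 1 := by
  rcases le_or_gt x (1 / 2) with h | h
  · rw [lsv_eq_left h]; exact lsvL_mem_X h0 ⟨hx.1, h⟩
  · rw [lsv, if_neg (not_le.2 h)]
    constructor <;> linarith [hx.2]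

/-- `z - a(z) = 2^α a(z)^(1+α)`, in multiplicative form. -/
lemma lsvA_mul (h0 : 0 < α) {z : ℝ} (hz : z ∈ Set.Ioc (0 : ℝ) 1) :
    lsvA α z * (1 + 2 ^ α * lsvA α z ^ α) = z := lsvL_lsvA h0 ⟨hz.1.le, hz.2⟩

lemma lsvA_lt (h0 : 0 < α) {z : ℝ} (hz : z ∈ Set.Ioc (0 : ℝ) 1) : lsvA α z < z := by
  have h1 := lsvA_mul h0 hz
  have h2 := lsvA_pos h0 hz
  have h3 : 0 < (2 : ℝ) ^ α * lsvA α z ^ α := by positivity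
  nlinarith [mul_pos h2 h3]

lemma lsvA_lip (h0 : 0 < α) {z z' : ℝ} (hz : z ∈ Set.Ioc (0 : ℝ) 1)
    (hz' : z' ∈ Set.Ioc (0 : ℝ) 1) : |lsvA α z - lsvA α z'| ≤ |z - z'| := by
  wlog h : z ≤ z' generalizing z z'
  · rw [abs_sub_comm, abs_sub_comm z]; exact this hz' hz (le_of_not_ge h)
  have h1 := lsvA_mono (α := α) h
  rw [abs_sub_comm, abs_sub_comm z, abs_of_nonneg (by linarith), abs_of_nonneg (by linarith)]
  have e1 := lsvA_mul h0 hz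
  have e2 := lsvA_mul h0 hz'
  have p1 := lsvA_pos h0 hz
  have p2 : lsvA α z ^ α ≤ lsvA α z' ^ α := Real.rpow_le_rpow p1.le h1 h0.le
  have p3 : 2 ^ α * lsvA α z ^ α ≤ 2 ^ α * lsvA α z' ^ α := by gcongr
  have p4 : 0 ≤ 2 ^ α * lsvA α z ^ α := by positivity
  nlinarith

lemma lsvA_iter_lip (h0 : 0 < α) {z z' : ℝ} (hz : z ∈ Set.Ioc (0 : ℝ) 1)
    (hz' : z' ∈ Set.Ioc (0 : ℝ) 1) (k : ℕ) :
    |(lsvA α)^[k] z - (lsvA α)^[k] z'| ≤ |z - z'| := by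
  induction k with
  | zero => exact le_rfl
  | succ k ih =>
    rw [Function.iterate_succ_apply', Function.iterate_succ_apply']
    exact (lsvA_lip h0 (lsvA_iter_mem_X h0 hz k) (lsvA_iter_mem_X h0 hz' k)).trans ih

lemma lsvD_pos (h0 : 0 < α) (z : ℝ) : 0 < lsvD α z := by
  have := lsvA_nonneg (α := α) z
  unfold lsvD; positivity

lemma lsvD_le_one (h0 : 0 < α) (z : ℝ) : lsvD α z ≤ 1 := by
  have := lsvA_nonneg (α := α) z
  unfold lsvD
  refine inv_le_one_of_one_le₀ ?_
  have : 0 ≤ (1 + α) * (2 ^ α * lsvA α z ^ α) := by positivity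
  linarith

lemma lsvD_anti (h0 : 0 < α) : Antitone (lsvD α) := by
  intro z z' h
  have p1 := lsvA_nonneg (α := α) z
  have p2 : lsvA α z ^ α ≤ lsvA α z' ^ α := Real.rpow_le_rpow p1 (lsvA_mono h) h0.le
  unfold lsvD
  gcongr

lemma lsvD_measurable (h0 : 0 < α) : Measurable (lsvD α) := (lsvD_anti h0).measurable

lemma lsvW_pos (h0 : 0 < α) (k : ℕ) (z : ℝ) : 0 < lsvW α k z := by
  induction k generalizing z with
  | zero => norm_num [lsvW]
  | succ k ih => exact mul_pos (lsvD_pos h0 z) (ih _)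

lemma lsvW_anti (h0 : 0 < α) (k : ℕ) : Antitone (lsvW α k) := by
  induction k with
  | zero => intro z z' _; exact le_rfl
  | succ k ih =>
    intro z z' h
    exact mul_le_mul (lsvD_anti h0 h) (ih (lsvA_mono h)) (lsvW_pos h0 _ _).le (lsvD_pos h0 _).le

lemma lsvW_measurable (h0 : 0 < α) (k : ℕ) : Measurable (lsvW α k) :=
  (lsvW_anti h0 k).measurable

lemma lsvW_succ' (k : ℕ) (z : ℝ) :
    lsvW α (k + 1) z = lsvW α k z * lsvD α ((lsvA α)^[k] z) := by
  induction k generalizing z with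
  | zero => simp [lsvW, mul_comm]
  | succ k ih =>
    rw [lsvW, ih, lsvW, Function.iterate_succ_apply, mul_assoc]

/-- `s ↦ (1+s)^(1+α) / (1+(1+α)s)` is nondecreasing; a form of Bernoulli's inequality. -/
lemma bernoulli_ratio (h0 : 0 < α) {s s' : ℝ} (hs : 0 ≤ s) (h : s ≤ s') :
    (1 + s) ^ (1 + α) * (1 + (1 + α) * s)⁻¹ ≤ (1 + s') ^ (1 + α) * (1 + (1 + α) * s')⁻¹ := by
  have p1 : 0 < 1 + (1 + α) * s := by positivity
  have p2 : 0 < 1 + (1 + α) * s' := by have : 0 ≤ s' := hs.trans h; positivity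
  have p3 : 0 < 1 + s := by linarith
  have p4 : 0 < 1 + s' := by linarith
  set δ := (s' - s) / (1 + s) with hδ
  have hδ0 : 0 ≤ δ := div_nonneg (by linarith) p3.le
  have hb := one_add_mul_self_le_rpow_one_add (show -1 ≤ δ by linarith)
    (show 1 ≤ 1 + α by linarith)
  have e1 : 1 + s' = (1 + s) * (1 + δ) := by rw [hδ]; field_simp; ring
  have e2 : (1 + s') ^ (1 + α) = (1 + s) ^ (1 + α) * (1 + δ) ^ (1 + α) := by
    rw [e1, Real.mul_rpow p3.le (by linarith)]
  rw [e2, ← div_eq_mul_inv, ← div_eq_mul_inv, div_le_div_iff₀ p1 p2]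
  have q : 0 < (1 + s) ^ (1 + α) := by positivity
  have : 1 + (1 + α) * s' ≤ (1 + δ) ^ (1 + α) * (1 + (1 + α) * s) := by
    refine le_trans ?_ (mul_le_mul_of_nonneg_right hb p1.le)
    have e3 : s' = s + δ * (1 + s) := by rw [hδ]; field_simp; ring
    rw [e3]
    nlinarith [mul_nonneg (mul_nonneg hδ0 hs) (mul_pos h0 (show 0 < 1 + α by linarith)).le]
  calc (1 + s) ^ (1 + α) * (1 + (1 + α) * s')
      ≤ (1 + s) ^ (1 + α) * ((1 + δ) ^ (1 + α) * (1 + (1 + α) * s)) := by gcongr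
    _ = _ := by ring

/-- Bounded distortion of the inverse branches: together with `lsvW_anti`, this controls the
variation of the weights. -/
lemma rpow_mul_lsvW_mono (h0 : 0 < α) (k : ℕ) {z z' : ℝ} (hz : z ∈ Set.Ioc (0 : ℝ) 1)
    (hz' : z' ∈ Set.Ioc (0 : ℝ) 1) (h : z ≤ z') :
    z ^ (1 + α) * lsvW α k z ≤ z' ^ (1 + α) * lsvW α k z' := by
  induction k generalizing z z' with
  | zero =>
    simp only [lsvW]
    have := Real.rpow_le_rpow hz.1.le h (show 0 ≤ 1 + α by linarith)
    linarith
  | succ k ih =>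
    have key : ∀ x ∈ Set.Ioc (0 : ℝ) 1, x ^ (1 + α) * lsvW α (k + 1) x =
        ((1 + 2 ^ α * lsvA α x ^ α) ^ (1 + α) * (1 + (1 + α) * (2 ^ α * lsvA α x ^ α))⁻¹) *
        (lsvA α x ^ (1 + α) * lsvW α k (lsvA α x)) := by
      intro x hx
      have p := lsvA_pos h0 hx
      have e : x ^ (1 + α) = lsvA α x ^ (1 + α) * (1 + 2 ^ α * lsvA α x ^ α) ^ (1 + α) := by
        rw [← Real.mul_rpow p.le (by positivity), lsvA_mul h0 hx]
      rw [e, lsvW, lsvD]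
      ring
    rw [key z hz, key z' hz']
    have p := lsvA_pos h0 hz
    have p' := lsvA_pos h0 hz'
    have q : lsvA α z ^ α ≤ lsvA α z' ^ α := Real.rpow_le_rpow p.le (lsvA_mono h) h0.le
    refine mul_le_mul (bernoulli_ratio h0 (by positivity) (by gcongr))
      (ih (lsvA_mem_X h0 hz) (lsvA_mem_X h0 hz') (lsvA_mono h)) ?_ (by positivity)
    have := lsvW_pos h0 k (lsvA α z)
    positivity

lemma lsvW_distortion (h0 : 0 < α) (h1 : α < 1) (k : ℕ) {y y' : ℝ}
    (hy : y ∈ Set.Ioc (1 / 2 : ℝ) 1) (hy' : y' ∈ Set.Ioc (1 / 2 : ℝ) 1) :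
    lsvW α k y ≤ Real.exp (4 * |y - y'|) * lsvW α k y' := by
  have hw := lsvW_pos h0 k y'
  rcases le_total y' y with h | h
  · refine (lsvW_anti h0 k h).trans ?_
    exact le_mul_of_one_le_left hw.le (Real.one_le_exp (by positivity))
  · have hm := rpow_mul_lsvW_mono h0 k (Y_sub_X hy) (Y_sub_X hy') h
    have p : 0 < y := (Y_sub_X hy).1
    have p' : 0 < y' := (Y_sub_X hy').1
    have hr : y' ^ (1 + α) ≤ Real.exp (4 * |y - y'|) * y ^ (1 + α) := by
      have e : y' ^ (1 + α) = (y' / y) ^ (1 + α) * y ^ (1 + α) := by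
        rw [← Real.mul_rpow (by positivity) p.le, div_mul_cancel₀ _ p.ne']
      rw [e]
      gcongr
      have h2 : 1 ≤ y' / y := by rw [one_le_div p]; exact h
      have h3 : y' / y ≤ Real.exp (2 * (y' - y)) := by
        have h4 : y' / y ≤ 1 + 2 * (y' - y) := by
          rw [div_le_iff₀ p]
          nlinarith [hy.1]
        linarith [Real.add_one_le_exp (2 * (y' - y))]
      calc (y' / y) ^ (1 + α) ≤ (y' / y) ^ (2 : ℝ) :=
            Real.rpow_le_rpow_of_exponent_le h2 (by linarith)
        _ = (y' / y) ^ 2 := by norm_cast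
        _ ≤ (Real.exp (2 * (y' - y))) ^ 2 := by gcongr
        _ = Real.exp (4 * |y - y'|) := by
            rw [← Real.exp_nat_mul, abs_sub_comm, abs_of_nonneg (by linarith)]
            congr 1; push_cast; ring
    have q : 0 < y ^ (1 + α) := by positivity
    have : y ^ (1 + α) * lsvW α k y ≤ y ^ (1 + α) * (Real.exp (4 * |y - y'|) * lsvW α k y') := by
      refine hm.trans ?_
      calc y' ^ (1 + α) * lsvW α k y' ≤ (Real.exp (4 * |y - y'|) * y ^ (1 + α)) * lsvW α k y' := by
            gcongr
        _ = _ := by ring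
    exact le_of_mul_le_mul_left this q

lemma lsvW_le_Y (h0 : 0 < α) (h1 : α < 1) (k : ℕ) {y : ℝ}
    (hy : y ∈ Set.Ioc (1 / 2 : ℝ) 1) : lsvW α k y ≤ Real.exp 4 * lsvW α k 1 := by
  refine (lsvW_distortion h0 h1 k hy (y' := 1) (by norm_num)).trans ?_
  have := lsvW_pos h0 k 1
  gcongr
  have : |y - 1| ≤ 1 := by rw [abs_le]; constructor <;> linarith [hy.1, hy.2]
  linarith

/-! ### Polynomial decay of the preimages of `1` -/

/-- Successive left preimages of `1`. -/
noncomputable def lsvx (α : ℝ) (k : ℕ) : ℝ := (lsvA α)^[k] 1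

lemma lsvx_succ (k : ℕ) : lsvx α (k + 1) = lsvA α (lsvx α k) := Function.iterate_succ_apply' _ _ _

lemma lsvx_mem (h0 : 0 < α) (k : ℕ) : lsvx α k ∈ Set.Ioc (0 : ℝ) 1 :=
  lsvA_iter_mem_X h0 (by norm_num) k

lemma lsvx_rec (h0 : 0 < α) (k : ℕ) :
    lsvx α k = lsvx α (k + 1) * (1 + 2 ^ α * lsvx α (k + 1) ^ α) := by
  rw [lsvx_succ, lsvA_mul h0 (lsvx_mem h0 k)]

lemma lsvx_succ_le_half (h0 : 0 < α) (k : ℕ) : lsvx α (k + 1) ≤ 1 / 2 := by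
  rw [lsvx_succ]; exact (lsvA_mem' h0 (lsvx_mem h0 k)).2

lemma lsvx_growth (h0 : 0 < α) (k : ℕ) : 1 + α / 2 * k ≤ lsvx α k ^ (-α) := by
  induction k with
  | zero => simp [lsvx]
  | succ k ih =>
    set x := lsvx α (k + 1) with hx
    have hx0 : 0 < x := (lsvx_mem h0 _).1
    have hxh : x ≤ 1 / 2 := lsvx_succ_le_half h0 k
    set s : ℝ := 2 ^ α * x ^ α with hs
    have hs0 : 0 < s := by positivity
    have hs1 : s ≤ 1 := by
      rw [hs, ← Real.mul_rpow (by norm_num) hx0.le]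
      exact Real.rpow_le_one (by positivity) (by linarith) h0.le
    have hrec : lsvx α k = x * (1 + s) := lsvx_rec h0 k
    have e1 : lsvx α k ^ (-α) = x ^ (-α) * (1 + s) ^ (-α) := by
      rw [hrec, Real.mul_rpow hx0.le (by positivity)]
    have hb : 1 + α * s / 2 ≤ (1 + s) ^ α := by
      have hl : s / 2 ≤ Real.log (1 + s) := by
        have := Real.one_sub_inv_le_log_of_pos (show 0 < 1 + s by positivity)
        refine le_trans ?_ this
        rw [le_sub_iff_add_le, ← le_sub_iff_add_le', inv_le_comm₀ (by positivity) (by linarith),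
          ← one_div, div_le_iff₀ (by linarith)]
        nlinarith
      rw [Real.rpow_def_of_pos (by positivity)]
      have := Real.add_one_le_exp (Real.log (1 + s) * α)
      nlinarith
    have e2 : x ^ (-α) = lsvx α k ^ (-α) * (1 + s) ^ α := by
      rw [e1, mul_assoc, ← Real.rpow_add (by positivity)]; simp
    have e3 : 1 ≤ lsvx α k ^ (-α) * s := by
      rw [e1]
      have : x ^ (-α) * s = 2 ^ α := by
        rw [hs, mul_left_comm, ← Real.rpow_add hx0]; simp
      calc (1 : ℝ) = 2 ^ α * 2 ^ (-α) := by rw [← Real.rpow_add (by norm_num)]; simp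
        _ ≤ 2 ^ α * (1 + s) ^ (-α) := by
          gcongr ?_ * ?_
          exact Real.rpow_le_rpow_of_nonpos (by positivity) (by linarith) (by linarith)
        _ = _ := by rw [← this]; ring
    have p : 0 < lsvx α k ^ (-α) := Real.rpow_pos_of_pos (lsvx_mem h0 k).1 _
    rw [e2]
    have : lsvx α k ^ (-α) * (1 + α * s / 2) ≤ lsvx α k ^ (-α) * (1 + s) ^ α := by gcongr
    push_cast
    nlinarith

lemma exists_lsvx_le (h0 : 0 < α) :
    ∃ C > 0, ∀ k, lsvx α k ≤ C * ((k : ℝ) + 1) ^ (-(1 / α)) := by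
  refine ⟨(α / 2 ⊓ 1) ^ (-(1 / α)), by positivity, fun k => ?_⟩
  have hx := (lsvx_mem h0 k).1
  have e : lsvx α k = (lsvx α k ^ (-α)) ^ (-(1 / α)) := by
    rw [← Real.rpow_mul hx.le]
    have : -α * -(1 / α) = 1 := by field_simp
    rw [this, Real.rpow_one]
  rw [e, ← Real.mul_rpow (by positivity) (by positivity)]
  refine Real.rpow_le_rpow_of_nonpos (by positivity) ?_ (by simp; positivity)
  refine le_trans ?_ (lsvx_growth h0 k)
  have i1 : α / 2 ⊓ 1 ≤ α / 2 := inf_le_left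
  have i2 : α / 2 ⊓ 1 ≤ 1 := inf_le_right
  have : (0 : ℝ) ≤ k := Nat.cast_nonneg k
  nlinarith

/-- Convexity of the left branch: each weight is at most the length of the corresponding
partition interval. -/
lemma lsvW_one_le (h0 : 0 < α) (k : ℕ) : lsvW α k 1 ≤ lsvx α k - lsvx α (k + 1) := by
  induction k with
  | zero => simp [lsvW, lsvx, lsvA_one h0]; norm_num
  | succ k ih =>
    rw [lsvW_succ']
    have hp := (lsvx_mem h0 (k + 1)).1
    have hq := (lsvx_mem h0 (k + 2)).1
    have hqp : lsvx α (k + 2) ≤ lsvx α (k + 1) := by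
      rw [lsvx_succ (k + 1)]; exact (lsvA_lt h0 (lsvx_mem h0 _)).le
    have e1 := lsvx_rec h0 k
    have e2 := lsvx_rec h0 (k + 1)
    have ed : lsvD α ((lsvA α)^[k] 1) =
        (1 + (1 + α) * (2 ^ α * lsvx α (k + 1) ^ α))⁻¹ := by
      rw [lsvD, lsvx_succ]; rfl
    rw [ed]
    set p := lsvx α (k + 1)
    set q := lsvx α (k + 2)
    have hconv : p * p ^ α - q * q ^ α ≤ (1 + α) * p ^ α * (p - q) := by
      have hb := one_add_mul_self_le_rpow_one_add (s := -((p - q) / p))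
        (by rw [neg_le_neg_iff, div_le_one hp]; linarith) (show 1 ≤ 1 + α by linarith)
      have e3 : 1 + -((p - q) / p) = q / p := by field_simp; ring
      rw [e3, Real.div_rpow hq.le hp.le, Real.rpow_add hq, Real.rpow_add hp, Real.rpow_one,
        Real.rpow_one] at hb
      have hpp : 0 < p * p ^ α := by positivity
      rw [le_div_iff₀ hpp] at hb
      have e4 : (1 + (1 + α) * -((p - q) / p)) * (p * p ^ α)
          = p * p ^ α - (1 + α) * p ^ α * (p - q) := by field_simp; ring
      rw [e4] at hb
      linarith
    have hd : 0 < 1 + (1 + α) * (2 ^ α * p ^ α) := by positivity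
    rw [← div_eq_mul_inv, div_le_iff₀ hd]
    refine ih.trans ?_
    have h2 : (0 : ℝ) < 2 ^ α := by positivity
    have h3 : 2 ^ α * (p * p ^ α - q * q ^ α) ≤ 2 ^ α * ((1 + α) * p ^ α * (p - q)) := by gcongr
    rw [e1]
    nlinarith

lemma exists_lsvW_one_le (h0 : 0 < α) :
    ∃ C > 0, ∀ k, lsvW α k 1 ≤ C * ((k : ℝ) + 1) ^ (-(1 + 1 / α)) := by
  obtain ⟨C, hC, h⟩ := exists_lsvx_le h0
  refine ⟨2 ^ α * C ^ (1 + α), by positivity, fun k => ?_⟩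
  have hx := (lsvx_mem h0 (k + 1)).1
  have e : lsvx α k - lsvx α (k + 1) = 2 ^ α * lsvx α (k + 1) ^ (1 + α) := by
    rw [lsvx_rec h0 k, Real.rpow_add hx, Real.rpow_one]; ring
  refine (lsvW_one_le h0 k).trans ?_
  have hk : lsvx α (k + 1) ≤ C * ((k : ℝ) + 1) ^ (-(1 / α)) := by
    refine le_trans ?_ (h k)
    rw [lsvx_succ]; exact (lsvA_lt h0 (lsvx_mem h0 _)).le
  rw [e, mul_assoc]
  gcongr
  calc lsvx α (k + 1) ^ (1 + α) ≤ (C * ((k : ℝ) + 1) ^ (-(1 / α))) ^ (1 + α) :=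
        Real.rpow_le_rpow hx.le hk (by linarith)
    _ = C ^ (1 + α) * ((k : ℝ) + 1) ^ (-(1 + 1 / α)) := by
        rw [Real.mul_rpow hC.le (by positivity), ← Real.rpow_mul (by positivity)]
        congr 2
        field_simp
        ring

lemma summable_add_one_rpow {p : ℝ} (hp : p < -1) : Summable fun k : ℕ => ((k : ℝ) + 1) ^ p := by
  have := (summable_nat_add_iff 1).2 (Real.summable_nat_rpow.2 hp)
  simpa using this

lemma summable_lsvx (h0 : 0 < α) (h1 : α < 1) : Summable (lsvx α) := by
  obtain ⟨C, hC, h⟩ := exists_lsvx_le h0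
  refine Summable.of_nonneg_of_le (fun k => (lsvx_mem h0 k).1.le) h
    ((summable_add_one_rpow ?_).mul_left C)
  rw [neg_lt_neg_iff, lt_div_iff₀ h0]; linarith

lemma summable_mul_lsvW (h0 : 0 < α) (h1 : α < 1) :
    Summable fun k : ℕ => ((k : ℝ) + 1) * lsvW α k 1 := by
  obtain ⟨C, hC, h⟩ := exists_lsvW_one_le h0
  refine Summable.of_nonneg_of_le (fun k => mul_nonneg (by positivity) (lsvW_pos h0 k 1).le)
    (fun k => ?_) ((summable_add_one_rpow (p := -(1 / α)) ?_).mul_left C)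
  · have hk : (0 : ℝ) < (k : ℝ) + 1 := by positivity
    calc ((k : ℝ) + 1) * lsvW α k 1
        ≤ ((k : ℝ) + 1) * (C * ((k : ℝ) + 1) ^ (-(1 + 1 / α))) := by gcongr; exact h k
      _ = C * (((k : ℝ) + 1) ^ (1 : ℝ) * ((k : ℝ) + 1) ^ (-(1 + 1 / α))) := by
          rw [Real.rpow_one]; ring
      _ = _ := by rw [← Real.rpow_add hk]; congr 2; ring
  · rw [neg_lt_neg_iff, lt_div_iff₀ h0]; linarith

lemma summable_lsvW_one (h0 : 0 < α) (h1 : α < 1) : Summable fun k : ℕ => lsvW α k 1 :=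
  Summable.of_nonneg_of_le (fun k => (lsvW_pos h0 k 1).le) (fun k =>
    le_mul_of_one_le_left (lsvW_pos h0 k 1).le (by
      have : (0 : ℝ) ≤ k := Nat.cast_nonneg k
      linarith))
    (summable_mul_lsvW h0 h1)

end Geometry

/-! ### Change of variables and the induced transfer operator -/

section Transfer

variable {α : ℝ}

lemma lsvL_hasDerivAt {x : ℝ} (hx : 0 < x) :
    HasDerivAt (lsvL α) (1 + (1 + α) * (2 ^ α * x ^ α)) x := by
  have h1 : HasDerivAt (fun x : ℝ => x ^ α) (α * x ^ (α - 1)) x :=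
    Real.hasDerivAt_rpow_const (Or.inl hx.ne')
  have h2 := (hasDerivAt_id x).mul ((h1.const_mul (2 ^ α)).const_add 1)
  refine h2.congr_deriv ?_
  have : x * x ^ (α - 1) = x ^ α := by
    rw [Real.rpow_sub_one hx.ne']; field_simp
  simp only [id]
  linear_combination (2 ^ α * α) * this

lemma lsvL_image (h0 : 0 < α) {c c' : ℝ} (hc : c ∈ Set.Icc (0 : ℝ) 1)
    (hc' : c' ∈ Set.Icc (0 : ℝ) 1) :
    lsvL α '' Set.Ioc (lsvA α c') (lsvA α c) = Set.Ioc c' c := by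
  have hm := lsvL_strictMonoOn h0
  ext z
  constructor
  · rintro ⟨x, hx, rfl⟩
    have hx0 : 0 ≤ x := (lsvA_nonneg _).trans hx.1.le
    constructor
    · rw [← lsvL_lsvA h0 hc']
      exact hm (lsvA_nonneg (α := α) c') hx0 hx.1
    · rw [← lsvL_lsvA h0 hc]
      exact (hm.le_iff_le hx0 (lsvA_nonneg (α := α) c)).2 hx.2
  · intro hz
    have hz' : z ∈ Set.Icc (0 : ℝ) 1 := ⟨hc'.1.trans hz.1.le, hz.2.trans hc.2⟩
    refine ⟨lsvA α z, ⟨?_, lsvA_mono hz.2⟩, lsvL_lsvA h0 hz'⟩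
    refine lt_of_le_of_ne (lsvA_mono hz.1.le) fun h => ?_
    have h2 := lsvL_lsvA h0 hz'
    rw [← h, lsvL_lsvA h0 hc'] at h2
    exact hz.1.ne h2

lemma lsvD_eq (h0 : 0 < α) {x : ℝ} (hx : x ∈ Set.Ioc (0 : ℝ) (1 / 2)) :
    lsvD α (lsvL α x) = (1 + (1 + α) * (2 ^ α * x ^ α))⁻¹ := by
  rw [lsvD, lsvA_lsvL h0 ⟨hx.1.le, hx.2⟩]

lemma lintegral_lsvA_Ioc (h0 : 0 < α) {c c' : ℝ} (hc : c ∈ Set.Icc (0 : ℝ) 1)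
    (hc' : c' ∈ Set.Icc (0 : ℝ) 1) (F : ℝ → ENNReal) :
    ∫⁻ z in Set.Ioc c' c, ENNReal.ofReal (lsvD α z) * F (lsvA α z) =
      ∫⁻ x in Set.Ioc (lsvA α c') (lsvA α c), F x := by
  have hpos : ∀ x ∈ Set.Ioc (lsvA α c') (lsvA α c), x ∈ Set.Ioc (0 : ℝ) (1 / 2) := fun x hx =>
    ⟨(lsvA_nonneg _).trans_lt hx.1, hx.2.trans (lsvA_mem h0 hc).2⟩
  rw [← lsvL_image h0 hc hc', lintegral_image_eq_lintegral_abs_deriv_mul measurableSet_Ioc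
    (fun x hx => (lsvL_hasDerivAt (hpos x hx).1).hasDerivWithinAt)
    ((lsvL_strictMonoOn h0).injOn.mono fun x hx => (hpos x hx).1.le)]
  refine setLIntegral_congr_fun measurableSet_Ioc fun x hx => ?_
  have hx' := hpos x hx
  have hx0 := hx'.1
  have p : 0 < 1 + (1 + α) * (2 ^ α * x ^ α) := by positivity
  rw [lsvD_eq h0 hx', lsvA_lsvL h0 ⟨hx'.1.le, hx'.2⟩, ← mul_assoc, ← ENNReal.ofReal_mul
    (abs_nonneg _), abs_of_pos p, mul_inv_cancel₀ p.ne', ENNReal.ofReal_one, one_mul]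

lemma lintegral_lsvA (h0 : 0 < α) (F : ℝ → ENNReal) :
    ∫⁻ z in Set.Ioc (0 : ℝ) 1, ENNReal.ofReal (lsvD α z) * F (lsvA α z) =
      ∫⁻ x in Set.Ioc (0 : ℝ) (1 / 2), F x := by
  rw [lintegral_lsvA_Ioc h0 (by norm_num) (by norm_num), lsvA_zero h0, lsvA_one h0]

lemma lsvT_image {c : ℝ} : (fun x : ℝ => 2 * x - 1) '' Set.Ioc (lsvB c) 1 = Set.Ioc c 1 := by
  ext z
  constructor
  · rintro ⟨x, hx, rfl⟩
    have := hx.1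
    unfold lsvB at this
    exact ⟨by linarith, by linarith [hx.2]⟩
  · intro hz
    refine ⟨lsvB z, ⟨?_, ?_⟩, ?_⟩ <;> simp only [lsvB] <;> linarith [hz.1, hz.2]

lemma lintegral_lsvB_Ioc (c : ℝ) (F : ℝ → ENNReal) :
    ∫⁻ z in Set.Ioc c 1, ENNReal.ofReal (1 / 2) * F (lsvB z) =
      ∫⁻ x in Set.Ioc (lsvB c) 1, F x := by
  rw [← lsvT_image (c := c), lintegral_image_eq_lintegral_abs_deriv_mul measurableSet_Ioc
    (f' := fun _ => 2)
    (fun x _ => by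
      have := ((hasDerivAt_id x).const_mul 2).sub_const 1
      simpa using this.hasDerivWithinAt)
    (fun x _ y _ h => by linarith)]
  refine setLIntegral_congr_fun measurableSet_Ioc fun x hx => ?_
  rw [← mul_assoc, ← ENNReal.ofReal_mul (abs_nonneg _), lsvB]
  norm_num

lemma lintegral_lsvB (F : ℝ → ENNReal) :
    ∫⁻ z in Set.Ioc (0 : ℝ) 1, ENNReal.ofReal (1 / 2) * F (lsvB z) =
      ∫⁻ x in Set.Ioc (1 / 2 : ℝ) 1, F x := by
  rw [lintegral_lsvB_Ioc]; norm_num [lsvB]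

lemma lintegral_X_split (F : ℝ → ENNReal) :
    ∫⁻ x in Set.Ioc (0 : ℝ) 1, F x =
      (∫⁻ x in Set.Ioc (0 : ℝ) (1 / 2), F x) + ∫⁻ x in Set.Ioc (1 / 2 : ℝ) 1, F x := by
  rw [← lintegral_union measurableSet_Ioc]
  · rw [Set.Ioc_union_Ioc_eq_Ioc] <;> norm_num
  · exact Set.Ioc_disjoint_Ioc_of_le le_rfl

lemma lintegral_X_branches (h0 : 0 < α) {F : ℝ → ENNReal} (hF : Measurable F) :
    ∫⁻ x in Set.Ioc (0 : ℝ) 1, F x = ∫⁻ z in Set.Ioc (0 : ℝ) 1,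
      (ENNReal.ofReal (lsvD α z) * F (lsvA α z) + ENNReal.ofReal (1 / 2) * F (lsvB z)) := by
  rw [lintegral_X_split, ← lintegral_lsvA h0, ← lintegral_lsvB, ← lintegral_add_left]
  exact (lsvD_measurable h0).ennreal_ofReal.mul (hF.comp lsvA_measurable)

variable {E : Type*} [NormedAddCommGroup E] [NormedSpace ℝ E]

lemma integral_lsvA (h0 : 0 < α) (F : ℝ → E) :
    ∫ z in Set.Ioc (0 : ℝ) 1, lsvD α z • F (lsvA α z) = ∫ x in Set.Ioc (0 : ℝ) (1 / 2), F x := by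
  have hi := lsvL_image h0 (c := 1) (c' := 0) (by norm_num) (by norm_num)
  rw [lsvA_zero h0, lsvA_one h0] at hi
  rw [← hi, integral_image_eq_integral_abs_deriv_smul measurableSet_Ioc
    (fun x hx => (lsvL_hasDerivAt hx.1).hasDerivWithinAt)
    ((lsvL_strictMonoOn h0).injOn.mono fun x hx => hx.1.le)]
  refine setIntegral_congr_fun measurableSet_Ioc fun x hx => ?_
  have hx0 := hx.1
  have p : 0 < 1 + (1 + α) * (2 ^ α * x ^ α) := by positivity
  rw [lsvD_eq h0 hx, lsvA_lsvL h0 ⟨hx.1.le, hx.2⟩, smul_smul, abs_of_pos p,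
    mul_inv_cancel₀ p.ne', one_smul]

lemma integrableOn_lsvA (h0 : 0 < α) {F : ℝ → E}
    (hF : IntegrableOn F (Set.Ioc (0 : ℝ) (1 / 2))) :
    IntegrableOn (fun z => lsvD α z • F (lsvA α z)) (Set.Ioc (0 : ℝ) 1) := by
  have hi := lsvL_image h0 (c := 1) (c' := 0) (by norm_num) (by norm_num)
  rw [lsvA_zero h0, lsvA_one h0] at hi
  rw [← hi, integrableOn_image_iff_integrableOn_abs_deriv_smul measurableSet_Ioc
    (fun x hx => (lsvL_hasDerivAt hx.1).hasDerivWithinAt)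
    ((lsvL_strictMonoOn h0).injOn.mono fun x hx => hx.1.le)]
  refine hF.congr_fun (fun x hx => ?_) measurableSet_Ioc
  have hx0 := hx.1
  have p : 0 < 1 + (1 + α) * (2 ^ α * x ^ α) := by positivity
  rw [lsvD_eq h0 hx, lsvA_lsvL h0 ⟨hx.1.le, hx.2⟩, smul_smul, abs_of_pos p,
    mul_inv_cancel₀ p.ne', one_smul]

lemma integral_lsvB (F : ℝ → E) :
    ∫ z in Set.Ioc (0 : ℝ) 1, (1 / 2 : ℝ) • F (lsvB z) = ∫ x in Set.Ioc (1 / 2 : ℝ) 1, F x := by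
  have hi := lsvT_image (c := 0)
  rw [show lsvB 0 = 1 / 2 by norm_num [lsvB]] at hi
  rw [← hi, integral_image_eq_integral_abs_deriv_smul measurableSet_Ioc
    (f' := fun _ => 2)
    (fun x _ => by
      have := ((hasDerivAt_id x).const_mul 2).sub_const 1
      simpa using this.hasDerivWithinAt)
    (fun x _ y _ h => by linarith)]
  refine setIntegral_congr_fun measurableSet_Ioc fun x hx => ?_
  rw [smul_smul, lsvB]
  norm_num

lemma integrableOn_lsvB {F : ℝ → E} (hF : IntegrableOn F (Set.Ioc (1 / 2 : ℝ) 1)) :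
    IntegrableOn (fun z => (1 / 2 : ℝ) • F (lsvB z)) (Set.Ioc (0 : ℝ) 1) := by
  have hi := lsvT_image (c := 0)
  rw [show lsvB 0 = 1 / 2 by norm_num [lsvB]] at hi
  rw [← hi, integrableOn_image_iff_integrableOn_abs_deriv_smul measurableSet_Ioc
    (f' := fun _ => 2)
    (fun x _ => by
      have := ((hasDerivAt_id x).const_mul 2).sub_const 1
      simpa using this.hasDerivWithinAt)
    (fun x _ y _ h => by linarith)]
  refine hF.congr_fun (fun x hx => ?_) measurableSet_Ioc
  rw [smul_smul, lsvB]
  norm_num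

lemma lsvB_measurable : Measurable lsvB := by unfold lsvB; fun_prop

/-- Change of variables along the `k`-th left inverse branch. -/
lemma lintegral_lsvW (h0 : 0 < α) (k : ℕ) (F : ℝ → ENNReal) :
    ∫⁻ z in Set.Ioc (0 : ℝ) 1, ENNReal.ofReal (2 * lsvW α k z) * F ((lsvA α)^[k] z) =
      ∫⁻ x in Set.Ioc (0 : ℝ) (lsvx α k), F x := by
  induction k generalizing F with
  | zero => simp [lsvW, lsvx]
  | succ k ih =>
    have hx := lsvx_mem h0 k
    rw [lsvx_succ]
    have h1 := lintegral_lsvA_Ioc h0 (c := lsvx α k) (c' := 0) ⟨hx.1.le, hx.2⟩ (by norm_num) F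
    rw [lsvA_zero h0] at h1
    rw [← h1, ← ih (fun z => ENNReal.ofReal (lsvD α z) * F (lsvA α z))]
    refine lintegral_congr fun z => ?_
    rw [lsvW_succ', Function.iterate_succ_apply', ← mul_assoc, ← mul_assoc, ENNReal.ofReal_mul
      (mul_pos two_pos (lsvW_pos h0 _ _)).le]

/-- Every point of `(0, 1]` is reached from `(1/2, 1]` by iterating the left inverse branch. -/
lemma lsv_induction (h0 : 0 < α) (h1 : α < 1) {P : ℝ → Prop}
    (hY : ∀ y ∈ Set.Ioc (1 / 2 : ℝ) 1, P y)
    (hstep : ∀ z ∈ Set.Ioc (0 : ℝ) 1, P z → P (lsvA α z)) : ∀ z ∈ Set.Ioc (0 : ℝ) 1, P z := by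
  have key : ∀ n : ℕ, ∀ z ∈ Set.Ioc (0 : ℝ) 1, lsvx α n < z → P z := by
    intro n
    induction n with
    | zero => intro z hz h; simp [lsvx] at h; linarith [hz.2]
    | succ n ih =>
      intro z hz h
      rcases lt_or_ge (1 / 2) z with hz2 | hz2
      · exact hY z ⟨hz2, hz.2⟩
      · have hz' : z ∈ Set.Ioc (0 : ℝ) (1 / 2) := ⟨hz.1, hz2⟩
        have hT := lsv_mem_X h0 hz
        rw [← lsvA_lsv h0 hz']
        refine hstep _ hT (ih _ hT ?_)
        have hm := lsvL_strictMonoOn h0 (Set.mem_Ici.2 (lsvx_mem h0 (n + 1)).1.le)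
          (Set.mem_Ici.2 hz.1.le) h
        have : lsvL α (lsvx α (n + 1)) = lsvx α n := (lsvx_rec h0 n).symm
        rwa [this, ← lsv_eq_left hz2] at hm
  intro z hz
  have hlim := (summable_lsvx h0 h1).tendsto_atTop_zero
  obtain ⟨n, hn⟩ := (hlim.eventually_lt_const hz.1).exists
  exact key n z hz hn

/-- The terms of the transfer operator of the map induced on `(1/2, 1]`. -/
noncomputable def lsvQterm (α : ℝ) (g : ℝ → ℝ) (z : ℝ) (k : ℕ) : ℝ :=
  lsvW α k z * g (lsvB ((lsvA α)^[k] z))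

/-- The transfer operator of the map induced on `(1/2, 1]` (first return map, with respect to
Lebesgue measure), evaluated at any point of `(0, 1]`. -/
noncomputable def lsvQ (α : ℝ) (g : ℝ → ℝ) (z : ℝ) : ℝ := ∑' k, lsvQterm α g z k

lemma lsvQterm_measurable (h0 : 0 < α) {g : ℝ → ℝ} (hg : Measurable g) (k : ℕ) :
    Measurable fun z => lsvQterm α g z k :=
  (lsvW_measurable h0 k).mul (hg.comp (lsvB_measurable.comp (lsvA_measurable.iterate k)))

lemma lsvQ_measurable (h0 : 0 < α) {g : ℝ → ℝ} (hg : Measurable g) : Measurable (lsvQ α g) :=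
  Measurable.tsum fun k => lsvQterm_measurable h0 hg k

lemma lsvQterm_zero (g : ℝ → ℝ) (z : ℝ) : lsvQterm α g z 0 = 1 / 2 * g (lsvB z) := by
  simp [lsvQterm, lsvW]

lemma lsvQterm_succ (g : ℝ → ℝ) (z : ℝ) (k : ℕ) :
    lsvQterm α g z (k + 1) = lsvD α z * lsvQterm α g (lsvA α z) k := by
  simp [lsvQterm, lsvW, Function.iterate_succ_apply, mul_assoc]

lemma summable_lsvQterm_lsvA_iff (h0 : 0 < α) (g : ℝ → ℝ) (z : ℝ) :
    Summable (lsvQterm α g (lsvA α z)) ↔ Summable (lsvQterm α g z) := by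
  rw [← summable_nat_add_iff 1 (f := lsvQterm α g z)]
  simp_rw [lsvQterm_succ]
  exact (summable_mul_left_iff (lsvD_pos h0 z).ne').symm

/-- It suffices to check convergence of the transfer operator on `(1/2, 1]`. -/
lemma summable_lsvQterm_X (h0 : 0 < α) (h1 : α < 1) {g : ℝ → ℝ}
    (h : ∀ y ∈ Set.Ioc (1 / 2 : ℝ) 1, Summable (lsvQterm α g y)) :
    ∀ z ∈ Set.Ioc (0 : ℝ) 1, Summable (lsvQterm α g z) :=
  lsv_induction h0 h1 h fun z _ hz => (summable_lsvQterm_lsvA_iff h0 g z).2 hz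

lemma lsvQ_rec {g : ℝ → ℝ} {z : ℝ} (hs : Summable (lsvQterm α g z)) :
    lsvQ α g z = 1 / 2 * g (lsvB z) + lsvD α z * lsvQ α g (lsvA α z) := by
  rw [lsvQ, hs.tsum_eq_zero_add, lsvQterm_zero]
  simp_rw [lsvQterm_succ]
  rw [tsum_mul_left]
  rfl

lemma mem_branch (h0 : 0 < α) {z : ℝ} (hz : z ∈ Set.Ioc (0 : ℝ) 1) (k : ℕ) :
    lsvB ((lsvA α)^[k] z) ∈ Set.Ioc (1 / 2 : ℝ) 1 := lsvB_mem (lsvA_iter_mem_X h0 hz k)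

/-- Convergence of the transfer operator for functions bounded by `β k` on the `k`-th
return branch. -/
lemma summable_lsvQterm_of_bound (h0 : 0 < α) (h1 : α < 1) {g : ℝ → ℝ} {β : ℕ → ℝ}
    (hβ : Summable fun k => lsvW α k 1 * β k)
    (hg : ∀ k, ∀ y ∈ Set.Ioc (1 / 2 : ℝ) 1, |g (lsvB ((lsvA α)^[k] y))| ≤ β k) :
    ∀ y ∈ Set.Ioc (1 / 2 : ℝ) 1, Summable (lsvQterm α g y) := by
  intro y hy
  refine Summable.of_norm_bounded (hβ.mul_left (Real.exp 4)) fun k => ?_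
  rw [lsvQterm, norm_mul, Real.norm_of_nonneg (lsvW_pos h0 k y).le, Real.norm_eq_abs, ← mul_assoc]
  have := lsvW_pos h0 k 1
  exact mul_le_mul (lsvW_le_Y h0 h1 k hy) (hg k y hy) (abs_nonneg _) (by positivity)

lemma summable_lsvQterm_of_bdd (h0 : 0 < α) (h1 : α < 1) {g : ℝ → ℝ} {M : ℝ}
    (hg : ∀ y ∈ Set.Ioc (1 / 2 : ℝ) 1, |g y| ≤ M) :
    ∀ z ∈ Set.Ioc (0 : ℝ) 1, Summable (lsvQterm α g z) :=
  summable_lsvQterm_X h0 h1 (summable_lsvQterm_of_bound h0 h1 (β := fun _ => M)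
    ((summable_lsvW_one h0 h1).mul_right M)
    (fun k _ hy => hg _ (mem_branch h0 (Y_sub_X hy) k)))

/-- Total masses of images under the transfer operator are finite, because the preimages of `1`
along the left branch are summable. -/
lemma lintegral_lsvQ_lt_top (h0 : 0 < α) (h1 : α < 1) {g : ℝ → ℝ} {M : ℝ}
    (hgM : ∀ y ∈ Set.Ioc (1 / 2 : ℝ) 1, 0 ≤ g y ∧ g y ≤ M) :
    ∫⁻ z in Set.Ioc (0 : ℝ) 1, ENNReal.ofReal (lsvQ α g z) < ⊤ := by
  have hM : 0 ≤ M := ((hgM 1 (by norm_num)).1).trans (hgM 1 (by norm_num)).2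
  have hs := summable_lsvQterm_of_bdd h0 h1 (g := g) (M := M) fun y hy => by
    rw [abs_of_nonneg (hgM y hy).1]; exact (hgM y hy).2
  have hterm : ∀ z ∈ Set.Ioc (0 : ℝ) 1, ∀ k, 0 ≤ lsvQterm α g z k := fun z hz k =>
    mul_nonneg (lsvW_pos h0 k z).le (hgM _ (mem_branch h0 hz k)).1
  have hb : ∀ z ∈ Set.Ioc (0 : ℝ) 1, ENNReal.ofReal (lsvQ α g z) ≤
      ∑' k, ENNReal.ofReal M * (ENNReal.ofReal (2 * lsvW α k z) * 1) := by
    intro z hz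
    rw [lsvQ, ENNReal.ofReal_tsum_of_nonneg (hterm z hz) (hs z hz)]
    refine ENNReal.tsum_le_tsum fun k => ?_
    rw [mul_one, ← ENNReal.ofReal_mul hM]
    refine ENNReal.ofReal_le_ofReal ?_
    have hw := lsvW_pos h0 k z
    have hk := hgM _ (mem_branch h0 hz k)
    rw [lsvQterm]
    nlinarith [mul_le_mul_of_nonneg_left hk.2 hw.le, mul_nonneg hM hw.le]
  refine (setLIntegral_mono' measurableSet_Ioc hb).trans_lt ?_
  rw [lintegral_tsum fun k => ((((lsvW_measurable h0 k).const_mul 2).ennreal_ofReal.mul_const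
    _).const_mul _).aemeasurable]
  have : ∀ k, ∫⁻ z in Set.Ioc (0 : ℝ) 1,
      ENNReal.ofReal M * (ENNReal.ofReal (2 * lsvW α k z) * 1)
      = ENNReal.ofReal (M * lsvx α k) := by
    intro k
    rw [lintegral_const_mul _ (((lsvW_measurable h0 k).const_mul 2).ennreal_ofReal.mul_const _),
      lintegral_lsvW h0 k (fun _ => 1), ENNReal.ofReal_mul hM]
    simp
  simp_rw [this]
  exact (((summable_lsvx h0 h1).mul_left M).tsum_ofReal_ne_top).lt_top

/-- Duality for the induced transfer operator, against (the restriction of) a `T`-invariant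
bounded function `φ`. The contributions of `(0, 1/2]` cancel because they are finite, which is
where the summability of the preimages of `1` enters. -/
lemma lintegral_lsvQ (h0 : 0 < α) (h1 : α < 1) {g : ℝ → ℝ} (hg : Measurable g) {M : ℝ}
    (hgM : ∀ y ∈ Set.Ioc (1 / 2 : ℝ) 1, 0 ≤ g y ∧ g y ≤ M) {φ : ℝ → ENNReal}
    (hφm : Measurable φ) (hφ1 : ∀ x, φ x ≤ 1)
    (hφ : ∀ x ∈ Set.Ioc (0 : ℝ) 1, φ (lsv α x) = φ x) :
    ∫⁻ y in Set.Ioc (1 / 2 : ℝ) 1, ENNReal.ofReal (lsvQ α g y) * φ y =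
      ∫⁻ y in Set.Ioc (1 / 2 : ℝ) 1, ENNReal.ofReal (g y) * φ y := by
  have hM : 0 ≤ M := ((hgM 1 (by norm_num)).1).trans (hgM 1 (by norm_num)).2
  have hs := summable_lsvQterm_of_bdd h0 h1 (g := g) (M := M) fun y hy => by
    rw [abs_of_nonneg (hgM y hy).1]; exact (hgM y hy).2
  have hterm : ∀ z ∈ Set.Ioc (0 : ℝ) 1, ∀ k, 0 ≤ lsvQterm α g z k := fun z hz k =>
    mul_nonneg (lsvW_pos h0 k z).le (hgM _ (mem_branch h0 hz k)).1
  have hQ0 : ∀ z ∈ Set.Ioc (0 : ℝ) 1, 0 ≤ lsvQ α g z := fun z hz => tsum_nonneg (hterm z hz)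
  have hfin : ∫⁻ z in Set.Ioc (0 : ℝ) 1, ENNReal.ofReal (lsvQ α g z) * φ z < ⊤ :=
    (lintegral_mono fun z => mul_le_of_le_one_right zero_le (hφ1 z)).trans_lt
      (lintegral_lsvQ_lt_top h0 h1 hgM)
  have hsplit := lintegral_X_split (fun z => ENNReal.ofReal (lsvQ α g z) * φ z)
  have hrec : ∫⁻ z in Set.Ioc (0 : ℝ) 1, ENNReal.ofReal (lsvQ α g z) * φ z =
      (∫⁻ y in Set.Ioc (1 / 2 : ℝ) 1, ENNReal.ofReal (g y) * φ y) +
      ∫⁻ z in Set.Ioc (0 : ℝ) (1 / 2), ENNReal.ofReal (lsvQ α g z) * φ z := by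
    rw [← lintegral_lsvA h0, ← lintegral_lsvB, ← lintegral_add_left]
    · refine setLIntegral_congr_fun measurableSet_Ioc fun z hz => ?_
      have ha := lsvA_mem_X h0 hz
      have hb := lsvB_mem hz
      rw [← hφ _ ha, ← hφ _ (Y_sub_X hb), lsv_lsvA h0 hz, lsv_lsvB hz.1, lsvQ_rec (hs z hz),
        ENNReal.ofReal_add (mul_nonneg (by norm_num) (hgM _ hb).1)
        (mul_nonneg (lsvD_pos h0 z).le (hQ0 _ ha)), ENNReal.ofReal_mul (by norm_num),
        ENNReal.ofReal_mul (lsvD_pos h0 z).le]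
      ring
    · exact (((hg.comp lsvB_measurable).ennreal_ofReal.mul
        (hφm.comp lsvB_measurable)).const_mul _)
  rw [hsplit, add_comm] at hrec
  refine ENNReal.add_right_inj ?_ |>.1 ((add_comm _ _).trans (hrec.trans (add_comm _ _)))
  rw [hsplit] at hfin
  exact ((le_self_add).trans_lt hfin).ne

end Transfer

/-! ### Exponential mixing of the induced map, by the cone (coupling) method -/

section Cone

variable {α : ℝ}

/-- The cone of measurable functions that are nonnegative on `(1/2, 1]` and whose logarithm is
`θ`-Hölder there with constant `K`. The condition is written multiplicatively, so that the zero
function belongs to the cone. -/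
structure LogHolder (θ K : ℝ) (g : ℝ → ℝ) : Prop where
  meas : Measurable g
  nonneg : ∀ y ∈ Set.Ioc (1 / 2 : ℝ) 1, 0 ≤ g y
  le : ∀ y ∈ Set.Ioc (1 / 2 : ℝ) 1, ∀ y' ∈ Set.Ioc (1 / 2 : ℝ) 1,
    g y ≤ Real.exp (K * |y - y'| ^ θ) * g y'

lemma dist_Y {y y' : ℝ} (hy : y ∈ Set.Ioc (1 / 2 : ℝ) 1) (hy' : y' ∈ Set.Ioc (1 / 2 : ℝ) 1) :
    |y - y'| ≤ 1 := by
  rw [abs_le]; constructor <;> linarith [hy.1, hy.2, hy'.1, hy'.2]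

lemma dist_Y_rpow {θ : ℝ} (hθ : 0 < θ) {y y' : ℝ} (hy : y ∈ Set.Ioc (1 / 2 : ℝ) 1)
    (hy' : y' ∈ Set.Ioc (1 / 2 : ℝ) 1) : |y - y'| ^ θ ≤ 1 :=
  Real.rpow_le_one (abs_nonneg _) (dist_Y hy hy') hθ.le

lemma volume_Y : volume.real (Set.Ioc (1 / 2 : ℝ) 1) = 1 / 2 := by
  simp [Measure.real]; norm_num

lemma integral_const_Y (c : ℝ) : ∫ _ in Set.Ioc (1 / 2 : ℝ) 1, c = c / 2 := by
  rw [setIntegral_const, volume_Y, smul_eq_mul]; ring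

lemma integrableOn_Y {g : ℝ → ℝ} (hg : Measurable g) {M : ℝ}
    (hM : ∀ y ∈ Set.Ioc (1 / 2 : ℝ) 1, |g y| ≤ M) : IntegrableOn g (Set.Ioc (1 / 2 : ℝ) 1) :=
  Measure.integrableOn_of_bounded (M := M) (by simp) hg.aestronglyMeasurable
    ((ae_restrict_iff' measurableSet_Ioc).2 (Eventually.of_forall hM))

namespace LogHolder

variable {θ K : ℝ} {g : ℝ → ℝ}

lemma le_exp (hg : LogHolder θ K g) (hθ : 0 < θ) (hK : 0 ≤ K) {y y' : ℝ}
    (hy : y ∈ Set.Ioc (1 / 2 : ℝ) 1) (hy' : y' ∈ Set.Ioc (1 / 2 : ℝ) 1) :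
    g y ≤ Real.exp K * g y' := by
  refine (hg.le y hy y' hy').trans (mul_le_mul_of_nonneg_right ?_ (hg.nonneg _ hy'))
  rw [Real.exp_le_exp]
  nlinarith [dist_Y_rpow hθ hy hy']

lemma bdd (hg : LogHolder θ K g) (hθ : 0 < θ) (hK : 0 ≤ K) :
    ∀ y ∈ Set.Ioc (1 / 2 : ℝ) 1, |g y| ≤ Real.exp K * g 1 := fun y hy => by
  rw [abs_of_nonneg (hg.nonneg y hy)]
  exact hg.le_exp hθ hK hy (by norm_num)

lemma integrableOn (hg : LogHolder θ K g) (hθ : 0 < θ) (hK : 0 ≤ K) :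
    IntegrableOn g (Set.Ioc (1 / 2 : ℝ) 1) := integrableOn_Y hg.meas (hg.bdd hθ hK)

lemma integral_nonneg (hg : LogHolder θ K g) : 0 ≤ ∫ y in Set.Ioc (1 / 2 : ℝ) 1, g y :=
  setIntegral_nonneg measurableSet_Ioc hg.nonneg

lemma upper (hg : LogHolder θ K g) (hθ : 0 < θ) (hK : 0 ≤ K) {y : ℝ}
    (hy : y ∈ Set.Ioc (1 / 2 : ℝ) 1) :
    g y ≤ 2 * Real.exp K * ∫ y in Set.Ioc (1 / 2 : ℝ) 1, g y := by
  have := setIntegral_mono_on (f := fun _ => g y) (g := fun y' => Real.exp K * g y')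
    (integrableOn_const (by simp)) ((hg.integrableOn hθ hK).const_mul _) measurableSet_Ioc
    (fun y' hy' => hg.le_exp hθ hK hy hy')
  rw [integral_const_Y, integral_const_mul] at this
  linarith

lemma lower (hg : LogHolder θ K g) (hθ : 0 < θ) (hK : 0 ≤ K) {y : ℝ}
    (hy : y ∈ Set.Ioc (1 / 2 : ℝ) 1) :
    2 * Real.exp (-K) * ∫ y in Set.Ioc (1 / 2 : ℝ) 1, g y ≤ g y := by
  have := setIntegral_mono_on (f := g) (g := fun _ => Real.exp K * g y) (hg.integrableOn hθ hK)
    (integrableOn_const (by simp)) measurableSet_Ioc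
    (fun y' hy' => hg.le_exp hθ hK hy' hy)
  rw [integral_const_Y] at this
  have e : Real.exp (-K) * Real.exp K = 1 := by rw [← Real.exp_add]; simp
  have := mul_le_mul_of_nonneg_left this (Real.exp_pos (-K)).le
  have e2 : Real.exp (-K) * (Real.exp K * g y / 2) = g y / 2 := by
    rw [mul_div_assoc', ← mul_assoc, e, one_mul]
  rw [e2] at this
  linarith

lemma mono {K' : ℝ} (hg : LogHolder θ K' g) (h : K' ≤ K) : LogHolder θ K g where
  meas := hg.meas
  nonneg := hg.nonneg
  le y hy y' hy' := (hg.le y hy y' hy').trans (mul_le_mul_of_nonneg_right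
    (Real.exp_le_exp.2 (mul_le_mul_of_nonneg_right h (by positivity))) (hg.nonneg _ hy'))

lemma const_mul (hg : LogHolder θ K g) {c : ℝ} (hc : 0 ≤ c) :
    LogHolder θ K (fun y => c * g y) where
  meas := hg.meas.const_mul c
  nonneg y hy := mul_nonneg hc (hg.nonneg y hy)
  le y hy y' hy' := by
    have := mul_le_mul_of_nonneg_left (hg.le y hy y' hy') hc
    linarith

lemma const (hK : 0 ≤ K) {c : ℝ} (hc : 0 ≤ c) : LogHolder θ K (fun _ => c) where
  meas := measurable_const
  nonneg _ _ := hc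
  le y _ y' _ := le_mul_of_one_le_left hc (Real.one_le_exp (by positivity))

/-- Subtracting a small multiple of the mass stays in a slightly larger cone. -/
lemma sub_mass {K' : ℝ} (hg : LogHolder θ K' g) (hθ : 0 < θ) (hK' : 0 ≤ K') (h : K' + 1 ≤ K) :
    LogHolder θ K (fun y => g y + -(Real.exp (-(2 * K)) / K *
      ∫ y in Set.Ioc (1 / 2 : ℝ) 1, g y)) := by
  set M := ∫ y in Set.Ioc (1 / 2 : ℝ) 1, g y with hMd
  set δ := Real.exp (-(2 * K)) / K * M with hδ
  have hM : 0 ≤ M := hg.integral_nonneg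
  have hK : 1 ≤ K := by linarith
  have hδ0 : 0 ≤ δ := by positivity
  have hlow : ∀ y ∈ Set.Ioc (1 / 2 : ℝ) 1, δ * (K * Real.exp K) ≤ g y := by
    intro y hy
    refine le_trans ?_ (hg.lower hθ hK' hy)
    have e : δ * (K * Real.exp K) = Real.exp (-K) * M := by
      rw [hδ, show -K = -(2 * K) + K by ring, Real.exp_add]; field_simp
    rw [e]
    have h1 : Real.exp (-K) ≤ Real.exp (-K') := Real.exp_le_exp.2 (by linarith)
    have := mul_le_mul_of_nonneg_right h1 hM
    nlinarith [mul_nonneg (Real.exp_pos (-K')).le hM]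
  have hKe : 1 ≤ K * Real.exp K := by
    nlinarith [Real.one_le_exp (show 0 ≤ K by linarith)]
  refine ⟨hg.meas.add_const _, fun y hy => ?_, fun y hy y' hy' => ?_⟩
  · have := hlow y hy
    nlinarith
  · set t := |y - y'| ^ θ with ht
    have ht0 : 0 ≤ t := by positivity
    have ht1 : t ≤ 1 := dist_Y_rpow hθ hy hy'
    have h1 := hg.le y hy y' hy'
    have h2 := hlow y' hy'
    have a1 : Real.exp (K * t) - 1 ≤ K * t * Real.exp K := by
      have b1 := Real.add_one_le_exp (-(K * t))
      have b2 : Real.exp (K * t) * Real.exp (-(K * t)) = 1 := by rw [← Real.exp_add]; simp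
      have b3 : Real.exp (K * t) ≤ Real.exp K := Real.exp_le_exp.2 (by nlinarith)
      have b4 := Real.exp_pos (K * t)
      have b5 : 0 ≤ K * t := by positivity
      nlinarith
    have a2 : Real.exp (K' * t) + t ≤ Real.exp (K * t) := by
      have b1 : Real.exp (K * t) = Real.exp (K' * t) * Real.exp ((K - K') * t) := by
        rw [← Real.exp_add]; ring_nf
      have b2 := Real.add_one_le_exp ((K - K') * t)
      have b3 : 1 ≤ Real.exp (K' * t) := Real.one_le_exp (by positivity)
      have b4 : 1 + t ≤ Real.exp ((K - K') * t) := by nlinarith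
      rw [b1]
      nlinarith [mul_le_mul_of_nonneg_left b4 (zero_le_one.trans b3)]
    have hg' := hg.nonneg y' hy'
    nlinarith [mul_le_mul_of_nonneg_left a1 hδ0, mul_le_mul_of_nonneg_left h2 ht0,
      mul_le_mul_of_nonneg_right a2 hg', a2]

/-- The induced transfer operator contracts the cone parameter up to an additive constant. -/
lemma lsvQ (hg : LogHolder θ K g) (h0 : 0 < α) (h1 : α < 1) (hθ : 0 < θ) (hθ1 : θ ≤ 1)
    (hK : 0 ≤ K) : LogHolder θ (4 + K * 2⁻¹ ^ θ) (lsvQ α g) := by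
  have hs := summable_lsvQterm_of_bdd h0 h1 (hg.bdd hθ hK)
  refine ⟨lsvQ_measurable h0 hg.meas, fun y hy => tsum_nonneg fun k =>
    mul_nonneg (lsvW_pos h0 k y).le (hg.nonneg _ (mem_branch h0 (Y_sub_X hy) k)),
    fun y hy y' hy' => ?_⟩
  have hX := Y_sub_X hy
  have hX' := Y_sub_X hy'
  rw [_root_.lsvQ, _root_.lsvQ, ← tsum_mul_left]
  refine Summable.tsum_le_tsum (fun k => ?_) (hs y hX) ((hs y' hX').mul_left _)
  have hw := lsvW_distortion h0 h1 k hy hy'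
  have hgk := hg.le _ (mem_branch h0 hX k) _ (mem_branch h0 hX' k)
  have e1 : |lsvB ((lsvA α)^[k] y) - lsvB ((lsvA α)^[k] y')| ≤ 2⁻¹ * |y - y'| := by
    have : lsvB ((lsvA α)^[k] y) - lsvB ((lsvA α)^[k] y') =
      2⁻¹ * ((lsvA α)^[k] y - (lsvA α)^[k] y') := by unfold lsvB; ring
    rw [this, abs_mul, abs_of_pos (by norm_num : (0 : ℝ) < 2⁻¹)]
    exact mul_le_mul_of_nonneg_left (lsvA_iter_lip h0 hX hX' k) (by norm_num)
  have e2 : |lsvB ((lsvA α)^[k] y) - lsvB ((lsvA α)^[k] y')| ^ θ ≤ 2⁻¹ ^ θ * |y - y'| ^ θ := by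
    rw [← Real.mul_rpow (by norm_num) (abs_nonneg _)]
    exact Real.rpow_le_rpow (abs_nonneg _) e1 hθ.le
  have e3 : |y - y'| ≤ |y - y'| ^ θ := by
    have := Real.rpow_le_rpow_of_exponent_ge_of_imp (abs_nonneg (y - y')) (dist_Y hy hy') hθ1
      (fun _ h => absurd h one_ne_zero)
    rwa [Real.rpow_one] at this
  have hg0 := hg.nonneg _ (mem_branch h0 hX' k)
  rw [lsvQterm, lsvQterm]
  calc _ ≤ (Real.exp (4 * |y - y'|) * lsvW α k y') *
        (Real.exp (K * (2⁻¹ ^ θ * |y - y'| ^ θ)) * g (lsvB ((lsvA α)^[k] y'))) := by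
        refine mul_le_mul hw (hgk.trans (mul_le_mul_of_nonneg_right (Real.exp_le_exp.2
          (mul_le_mul_of_nonneg_left e2 hK)) hg0)) (hg.nonneg _ (mem_branch h0 hX k)) ?_
        have := lsvW_pos h0 k y'
        positivity
    _ = Real.exp (4 * |y - y'| + K * (2⁻¹ ^ θ * |y - y'| ^ θ)) *
        (lsvW α k y' * g (lsvB ((lsvA α)^[k] y'))) := by rw [Real.exp_add]; ring
    _ ≤ _ := by
        refine mul_le_mul_of_nonneg_right (Real.exp_le_exp.2 ?_)
          (mul_nonneg (lsvW_pos h0 k y').le hg0)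
        linarith

end LogHolder

/-- Boundedness on `(1/2, 1]`. -/
def BddY (g : ℝ → ℝ) : Prop := ∃ M, ∀ y ∈ Set.Ioc (1 / 2 : ℝ) 1, |g y| ≤ M

lemma exists_lsvQ_bound (h0 : 0 < α) (h1 : α < 1) : ∃ C, 0 < C ∧ ∀ (g : ℝ → ℝ) (M : ℝ),
    (∀ y ∈ Set.Ioc (1 / 2 : ℝ) 1, |g y| ≤ M) →
    ∀ y ∈ Set.Ioc (1 / 2 : ℝ) 1, |lsvQ α g y| ≤ C * M := by
  have hs := summable_lsvW_one h0 h1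
  refine ⟨Real.exp 4 * ∑' k, lsvW α k 1, mul_pos (Real.exp_pos _)
    (hs.tsum_pos (fun k => (lsvW_pos h0 k 1).le) 0 (lsvW_pos h0 0 1)), fun g M hg y hy => ?_⟩
  have hb := (hs.mul_right M).mul_left (Real.exp 4)
  have := tsum_of_norm_bounded (f := lsvQterm α g y) hb.hasSum fun k => by
    rw [lsvQterm, norm_mul, Real.norm_of_nonneg (lsvW_pos h0 k y).le, Real.norm_eq_abs,
      ← mul_assoc]
    have := lsvW_pos h0 k 1
    exact mul_le_mul (lsvW_le_Y h0 h1 k hy) (hg _ (mem_branch h0 (Y_sub_X hy) k))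
      (abs_nonneg _) (by positivity)
  rwa [tsum_mul_left, tsum_mul_right, ← mul_assoc] at this

lemma BddY.lsvQ (h0 : 0 < α) (h1 : α < 1) {g : ℝ → ℝ} (hg : BddY g) : BddY (lsvQ α g) := by
  obtain ⟨C, _, hC⟩ := exists_lsvQ_bound h0 h1
  obtain ⟨M, hM⟩ := hg
  exact ⟨C * M, hC g M hM⟩

lemma BddY.add_mul {g g' : ℝ → ℝ} (hg : BddY g) (hg' : BddY g') (c : ℝ) :
    BddY fun y => g y + c * g' y := by
  obtain ⟨M, hM⟩ := hg
  obtain ⟨M', hM'⟩ := hg'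
  refine ⟨M + |c| * M', fun y hy => (abs_add_le _ _).trans (add_le_add (hM y hy) ?_)⟩
  rw [abs_mul]
  exact mul_le_mul_of_nonneg_left (hM' y hy) (abs_nonneg _)

lemma BddY.const (c : ℝ) : BddY fun _ => c := ⟨|c|, fun _ _ => le_rfl⟩

lemma LogHolder.bddY {θ K : ℝ} {g : ℝ → ℝ} (hg : LogHolder θ K g) (hθ : 0 < θ) (hK : 0 ≤ K) :
    BddY g := ⟨_, hg.bdd hθ hK⟩

lemma lsvQ_congr (h0 : 0 < α) {g g' : ℝ → ℝ} (h : ∀ y ∈ Set.Ioc (1 / 2 : ℝ) 1, g y = g' y) :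
    ∀ z ∈ Set.Ioc (0 : ℝ) 1, lsvQ α g z = lsvQ α g' z := fun z hz => by
  unfold lsvQ lsvQterm
  congr 1; ext k
  rw [h _ (mem_branch h0 hz k)]

lemma lsvQ_add_mul {g g' : ℝ → ℝ} {z : ℝ} (hg : Summable (lsvQterm α g z))
    (hg' : Summable (lsvQterm α g' z)) (c : ℝ) :
    lsvQ α (fun y => g y + c * g' y) z = lsvQ α g z + c * lsvQ α g' z := by
  unfold lsvQ
  rw [← tsum_mul_left, ← hg.tsum_add (hg'.mul_left c)]
  congr 1; ext k
  unfold lsvQterm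
  ring

lemma lsvQ_iter_congr (h0 : 0 < α) (n : ℕ) {g g' : ℝ → ℝ}
    (h : ∀ y ∈ Set.Ioc (1 / 2 : ℝ) 1, g y = g' y) :
    ∀ y ∈ Set.Ioc (1 / 2 : ℝ) 1, (lsvQ α)^[n] g y = (lsvQ α)^[n] g' y := by
  induction n generalizing g g' with
  | zero => exact h
  | succ n ih =>
    intro y hy
    rw [Function.iterate_succ_apply, Function.iterate_succ_apply]
    exact ih (fun y hy => lsvQ_congr h0 h y (Y_sub_X hy)) y hy

lemma lsvQ_iter_add_mul (h0 : 0 < α) (h1 : α < 1) (n : ℕ) {g g' : ℝ → ℝ} (hg : BddY g)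
    (hg' : BddY g') (c : ℝ) : ∀ y ∈ Set.Ioc (1 / 2 : ℝ) 1,
    (lsvQ α)^[n] (fun y => g y + c * g' y) y = (lsvQ α)^[n] g y + c * (lsvQ α)^[n] g' y := by
  induction n generalizing g g' with
  | zero => intro y _; rfl
  | succ n ih =>
    intro y hy
    simp only [Function.iterate_succ_apply]
    rw [← ih (hg.lsvQ h0 h1) (hg'.lsvQ h0 h1) y hy]
    refine lsvQ_iter_congr h0 n (fun y hy => ?_) y hy
    obtain ⟨M, hM⟩ := hg
    obtain ⟨M', hM'⟩ := hg'
    exact lsvQ_add_mul (summable_lsvQterm_of_bdd h0 h1 hM y (Y_sub_X hy))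
      (summable_lsvQterm_of_bdd h0 h1 hM' y (Y_sub_X hy)) c

lemma LogHolder.integral_lsvQ {θ K : ℝ} {g : ℝ → ℝ} (hg : LogHolder θ K g) (h0 : 0 < α)
    (h1 : α < 1) (hθ : 0 < θ) (hθ1 : θ ≤ 1) (hK : 0 ≤ K) :
    ∫ y in Set.Ioc (1 / 2 : ℝ) 1, _root_.lsvQ α g y = ∫ y in Set.Ioc (1 / 2 : ℝ) 1, g y := by
  have hQ := hg.lsvQ h0 h1 hθ hθ1 hK
  have := lintegral_lsvQ h0 h1 hg.meas (M := Real.exp K * g 1) (fun y hy => ⟨hg.nonneg y hy,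
    (le_abs_self _).trans (hg.bdd hθ hK y hy)⟩) (φ := fun _ => 1) measurable_const
    (fun _ => le_rfl) (fun _ _ => rfl)
  simp only [mul_one] at this
  rw [integral_eq_lintegral_of_nonneg_ae _ hQ.meas.aestronglyMeasurable,
    integral_eq_lintegral_of_nonneg_ae _ hg.meas.aestronglyMeasurable, this]
  · exact (ae_restrict_iff' measurableSet_Ioc).2 (Eventually.of_forall hg.nonneg)
  · exact (ae_restrict_iff' measurableSet_Ioc).2 (Eventually.of_forall hQ.nonneg)

/-- Exponential contraction on the cone: two functions of equal mass `M`. At each step a fixed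
proportion of the mass, in the form of a constant function, is removed from both. -/
lemma LogHolder.contraction {θ K : ℝ} (h0 : 0 < α) (h1 : α < 1) (hθ : 0 < θ) (hθ1 : θ ≤ 1)
    (hK : 0 ≤ K) (hKK : 4 + K * 2⁻¹ ^ θ + 1 ≤ K) (n : ℕ) {g g' : ℝ → ℝ}
    (hg : LogHolder θ K g) (hg' : LogHolder θ K g')
    (hM : ∫ y in Set.Ioc (1 / 2 : ℝ) 1, g y = ∫ y in Set.Ioc (1 / 2 : ℝ) 1, g' y) :
    ∀ y ∈ Set.Ioc (1 / 2 : ℝ) 1, |(_root_.lsvQ α)^[n] g y - (_root_.lsvQ α)^[n] g' y| ≤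
      2 * Real.exp K * (1 - Real.exp (-(2 * K)) / K / 2) ^ n *
        ∫ y in Set.Ioc (1 / 2 : ℝ) 1, g y := by
  induction n generalizing g g' with
  | zero =>
    intro y hy
    have a1 := hg.upper hθ hK hy
    have a2 := hg'.upper hθ hK hy
    have a3 := hg.nonneg y hy
    have a4 := hg'.nonneg y hy
    rw [← hM] at a2
    simp only [Function.iterate_zero, id, pow_zero, mul_one]
    rw [abs_le]; constructor <;> linarith
  | succ n ih =>
    intro y hy
    have hK' : 0 ≤ 4 + K * 2⁻¹ ^ θ := by positivity
    have b := hg.lsvQ h0 h1 hθ hθ1 hK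
    have b' := hg'.lsvQ h0 h1 hθ hθ1 hK
    have i := hg.integral_lsvQ h0 h1 hθ hθ1 hK
    have i' := hg'.integral_lsvQ h0 h1 hθ hθ1 hK
    have d := b.sub_mass hθ hK' hKK
    have d' := b'.sub_mass hθ hK' hKK
    rw [i] at d
    rw [i', ← hM] at d'
    set M := ∫ y in Set.Ioc (1 / 2 : ℝ) 1, g y
    set ε := Real.exp (-(2 * K)) / K
    have j : ∫ y in Set.Ioc (1 / 2 : ℝ) 1, (_root_.lsvQ α g y + -(ε * M)) = (1 - ε / 2) * M := by
      rw [integral_add (b.integrableOn hθ hK') (integrableOn_const (by simp)), i,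
        integral_const_Y]; ring
    have j' : ∫ y in Set.Ioc (1 / 2 : ℝ) 1, (_root_.lsvQ α g' y + -(ε * M))
        = (1 - ε / 2) * M := by
      rw [integral_add (b'.integrableOn hθ hK') (integrableOn_const (by simp)), i', ← hM,
        integral_const_Y]; ring
    have key := ih d d' (j.trans j'.symm) y hy
    have l := lsvQ_iter_add_mul h0 h1 n (b.bddY hθ hK') (BddY.const 1) (-(ε * M)) y hy
    have l' := lsvQ_iter_add_mul h0 h1 n (b'.bddY hθ hK') (BddY.const 1) (-(ε * M)) y hy
    simp only [mul_one] at l l'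
    rw [l, l', j] at key
    rw [Function.iterate_succ_apply, Function.iterate_succ_apply, pow_succ]
    calc _ = _ := by congr 1; ring
      _ ≤ _ := key
      _ = _ := by ring

end Cone

/-! ### The invariant density of the induced map and exponential mixing -/

section Density

variable {α : ℝ}

/-- The properties of an invariant density `ρ₀` of the induced map that are used below:
fixed by the transfer operator, of mass `1/2` on `(1/2, 1]` (the value of the mass is a convenient
normalization), bounded away from `0` and infinity, `θ`-Hölder, and attracting all bounded Hölder
functions exponentially fast. -/
structure IsIndDensity (α θ : ℝ) (ρ₀ : ℝ → ℝ) : Prop where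
  meas : Measurable ρ₀
  fixed : ∀ y ∈ Set.Ioc (1 / 2 : ℝ) 1, lsvQ α ρ₀ y = ρ₀ y
  mass : ∫ y in Set.Ioc (1 / 2 : ℝ) 1, ρ₀ y = 1 / 2
  lower : ∃ c, 0 < c ∧ ∀ y ∈ Set.Ioc (1 / 2 : ℝ) 1, c ≤ ρ₀ y
  upper : ∃ C, 0 < C ∧ ∀ y ∈ Set.Ioc (1 / 2 : ℝ) 1, ρ₀ y ≤ C
  holder : ∃ C, 0 < C ∧ ∀ y ∈ Set.Ioc (1 / 2 : ℝ) 1, ∀ y' ∈ Set.Ioc (1 / 2 : ℝ) 1,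
    |ρ₀ y - ρ₀ y'| ≤ C * |y - y'| ^ θ
  mixing : ∃ r, 0 < r ∧ r < 1 ∧ ∀ G : ℝ → ℝ, Measurable G → BddY G →
    (∃ L, ∀ y ∈ Set.Ioc (1 / 2 : ℝ) 1, ∀ y' ∈ Set.Ioc (1 / 2 : ℝ) 1,
      |G y - G y'| ≤ L * |y - y'| ^ θ) →
    ∃ C, 0 ≤ C ∧ ∀ n : ℕ, ∀ y ∈ Set.Ioc (1 / 2 : ℝ) 1,
      |(lsvQ α)^[n] G y - 2 * (∫ y in Set.Ioc (1 / 2 : ℝ) 1, G y) * ρ₀ y| ≤ C * r ^ n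

lemma LogHolder.holder {θ K : ℝ} {g : ℝ → ℝ} (hg : LogHolder θ K g) (hθ : 0 < θ) (hK : 0 ≤ K)
    {C : ℝ} (hC : ∀ y ∈ Set.Ioc (1 / 2 : ℝ) 1, g y ≤ C) :
    ∀ y ∈ Set.Ioc (1 / 2 : ℝ) 1, ∀ y' ∈ Set.Ioc (1 / 2 : ℝ) 1,
    |g y - g y'| ≤ (K * Real.exp K * C) * |y - y'| ^ θ := by
  have key : ∀ y ∈ Set.Ioc (1 / 2 : ℝ) 1, ∀ y' ∈ Set.Ioc (1 / 2 : ℝ) 1,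
      g y - g y' ≤ (K * Real.exp K * C) * |y - y'| ^ θ := by
    intro y hy y' hy'
    have h1 := hg.le y hy y' hy'
    set t := |y - y'| ^ θ with ht
    have ht0 : 0 ≤ t := by positivity
    have ht1 : t ≤ 1 := dist_Y_rpow hθ hy hy'
    have a1 : Real.exp (K * t) - 1 ≤ K * t * Real.exp K := by
      have b1 := Real.add_one_le_exp (-(K * t))
      have b2 : Real.exp (K * t) * Real.exp (-(K * t)) = 1 := by rw [← Real.exp_add]; simp
      have b3 : Real.exp (K * t) ≤ Real.exp K := Real.exp_le_exp.2 (by nlinarith)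
      have b4 := Real.exp_pos (K * t)
      have b5 : 0 ≤ K * t := by positivity
      nlinarith
    have h2 := hg.nonneg y' hy'
    have h3 := hC y' hy'
    have h4 : 0 ≤ K * t * Real.exp K := by positivity
    nlinarith [mul_le_mul_of_nonneg_right a1 h2, mul_le_mul_of_nonneg_left h3 h4]
  intro y hy y' hy'
  rw [abs_le]
  have a := key y hy y' hy'
  have b := key y' hy' y hy
  rw [abs_sub_comm] at b
  constructor <;> linarith

/-- The density is the limit of the iterates of the constant `1`, which form a Cauchy sequence by
the contraction on the cone. A Hölder function lies in the cone after a large constant is added. -/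
lemma exists_isIndDensity (h0 : 0 < α) (h1 : α < 1) {θ : ℝ} (hθ : 0 < θ) (hθ1 : θ ≤ 1) :
    ∃ ρ₀, IsIndDensity α θ ρ₀ := by
  have hq : (2⁻¹ : ℝ) ^ θ < 1 := Real.rpow_lt_one (by norm_num) (by norm_num) hθ
  -- This `K` solves `4 + K * 2⁻¹ ^ θ + 1 = K`, which leaves the cone invariant with room to spare.
  set K : ℝ := 5 / (1 - 2⁻¹ ^ θ) with hKdef
  have hq0 : (0 : ℝ) < 1 - 2⁻¹ ^ θ := by linarith
  have hKq : K * (1 - 2⁻¹ ^ θ) = 5 := by rw [hKdef]; exact div_mul_cancel₀ _ hq0.ne'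
  have hKK : 4 + K * 2⁻¹ ^ θ + 1 ≤ K := by linarith
  have hK0 : 0 < K := by positivity
  have hK : 0 ≤ K := hK0.le
  have hK5 : 1 ≤ K := by
    have : 0 ≤ K * 2⁻¹ ^ θ := by positivity
    linarith
  set r : ℝ := 1 - Real.exp (-(2 * K)) / K / 2 with hr
  have hexp : Real.exp (-(2 * K)) / K ≤ 1 := by
    rw [div_le_one hK0]
    exact (Real.exp_le_one_iff.2 (by linarith)).trans hK5
  have hr1 : r < 1 := by
    have : 0 < Real.exp (-(2 * K)) / K / 2 := by positivity
    linarith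
  have hr0 : 0 < r := by linarith
  have hiter : ∀ (n : ℕ) (g : ℝ → ℝ), LogHolder θ K g → LogHolder θ K ((lsvQ α)^[n] g) ∧
      ∫ y in Set.Ioc (1 / 2 : ℝ) 1, (lsvQ α)^[n] g y = ∫ y in Set.Ioc (1 / 2 : ℝ) 1, g y := by
    intro n
    induction n with
    | zero => intro g hg; exact ⟨hg, rfl⟩
    | succ n ih =>
      intro g hg
      rw [Function.iterate_succ_apply]
      obtain ⟨a, b⟩ := ih _ ((hg.lsvQ h0 h1 hθ hθ1 hK).mono (by linarith))
      exact ⟨a, b.trans (hg.integral_lsvQ h0 h1 hθ hθ1 hK)⟩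
  set one : ℝ → ℝ := fun _ => 1 with hone
  have h1c : LogHolder θ K one := LogHolder.const hK zero_le_one
  have hm1 : ∫ y in Set.Ioc (1 / 2 : ℝ) 1, one y = 1 / 2 := integral_const_Y 1
  have hcau : ∀ n j : ℕ, ∀ y ∈ Set.Ioc (1 / 2 : ℝ) 1,
      |(lsvQ α)^[n] one y - (lsvQ α)^[n + j] one y| ≤ Real.exp K * r ^ n := by
    intro n j y hy
    rw [Function.iterate_add_apply]
    have := LogHolder.contraction h0 h1 hθ hθ1 hK hKK n h1c (hiter j one h1c).1
      (hiter j one h1c).2.symm y hy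
    rw [hm1] at this
    linarith
  have hrlim : Tendsto (fun n : ℕ => Real.exp K * r ^ n) atTop (𝓝 0) := by
    simpa using (tendsto_pow_atTop_nhds_zero_of_lt_one hr0.le hr1).const_mul (Real.exp K)
  have hex : ∀ y, ∃ l, Tendsto (fun n => (Set.Ioc (1 / 2 : ℝ) 1).indicator
      ((lsvQ α)^[n] one) y) atTop (𝓝 l) := by
    intro y
    by_cases hy : y ∈ Set.Ioc (1 / 2 : ℝ) 1
    · simp only [Set.indicator_of_mem hy]
      refine cauchySeq_tendsto_of_complete (cauchySeq_of_le_tendsto_0 _ (fun n m N hn hm => ?_)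
        (by simpa using hrlim.const_mul 2))
      obtain ⟨i, rfl⟩ := Nat.exists_eq_add_of_le hn
      obtain ⟨j, rfl⟩ := Nat.exists_eq_add_of_le hm
      have a := hcau N i y hy
      have b := hcau N j y hy
      rw [Real.dist_eq]
      rw [abs_le] at a b ⊢
      constructor <;> linarith [a.1, a.2, b.1, b.2]
    · exact ⟨0, by simp only [Set.indicator_of_notMem hy, tendsto_const_nhds]⟩
  choose ρ₀ hρ using hex
  have hlim : ∀ y ∈ Set.Ioc (1 / 2 : ℝ) 1,
      Tendsto (fun n => (lsvQ α)^[n] one y) atTop (𝓝 (ρ₀ y)) := fun y hy => by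
    simpa only [Set.indicator_of_mem hy] using hρ y
  have hmeas : Measurable ρ₀ := measurable_of_tendsto_metrizable
    (fun n => ((hiter n one h1c).1.meas.indicator measurableSet_Ioc)) (tendsto_pi_nhds.2 hρ)
  have hclose : ∀ n : ℕ, ∀ y ∈ Set.Ioc (1 / 2 : ℝ) 1,
      |(lsvQ α)^[n] one y - ρ₀ y| ≤ Real.exp K * r ^ n := by
    intro n y hy
    have : Tendsto (fun j => |(lsvQ α)^[n] one y - (lsvQ α)^[j + n] one y|) atTop
        (𝓝 |(lsvQ α)^[n] one y - ρ₀ y|) :=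
      (tendsto_const_nhds.sub ((tendsto_add_atTop_iff_nat n).2 (hlim y hy))).abs
    refine le_of_tendsto this (Eventually.of_forall fun j => ?_)
    rw [add_comm j n]
    exact hcau n j y hy
  have hLH : LogHolder θ K ρ₀ := ⟨hmeas,
    fun y hy => ge_of_tendsto (hlim y hy) (Eventually.of_forall fun n =>
      (hiter n one h1c).1.nonneg y hy),
    fun y hy y' hy' => le_of_tendsto_of_tendsto (hlim y hy) ((hlim y' hy').const_mul _)
      (Eventually.of_forall fun n => (hiter n one h1c).1.le y hy y' hy')⟩
  have hbd : BddY ρ₀ := hLH.bddY hθ hK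
  have hmass : ∫ y in Set.Ioc (1 / 2 : ℝ) 1, ρ₀ y = 1 / 2 := by
    have hle : ∀ n : ℕ, |(∫ y in Set.Ioc (1 / 2 : ℝ) 1, ρ₀ y) - 1 / 2| ≤ Real.exp K * r ^ n := by
      intro n
      obtain ⟨a, b⟩ := hiter n one h1c
      rw [hm1] at b
      have e : (∫ y in Set.Ioc (1 / 2 : ℝ) 1, ρ₀ y) - 1 / 2 =
          ∫ y in Set.Ioc (1 / 2 : ℝ) 1, (ρ₀ y - (lsvQ α)^[n] one y) := by
        rw [integral_sub (hLH.integrableOn hθ hK) (a.integrableOn hθ hK), b]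
      rw [e, ← Real.norm_eq_abs]
      refine (norm_setIntegral_le_of_norm_le_const (μ := volume) (s := Set.Ioc (1 / 2 : ℝ) 1)
        (C := Real.exp K * r ^ n) measure_Ioc_lt_top fun y hy => ?_).trans ?_
      · rw [Real.norm_eq_abs, abs_sub_comm]; exact hclose n y hy
      · rw [volume_Y]
        have : 0 ≤ Real.exp K * r ^ n := by positivity
        linarith
    have := ge_of_tendsto' hrlim hle
    have := abs_nonpos_iff.1 this
    linarith
  have hfix : ∀ y ∈ Set.Ioc (1 / 2 : ℝ) 1, lsvQ α ρ₀ y = ρ₀ y := by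
    intro y hy
    obtain ⟨C, hC, hCQ⟩ := exists_lsvQ_bound h0 h1
    have hle : ∀ n : ℕ, |lsvQ α ρ₀ y - (lsvQ α)^[n + 1] one y| ≤ C * (Real.exp K * r ^ n) := by
      intro n
      have hb : BddY ((lsvQ α)^[n] one) := (hiter n one h1c).1.bddY hθ hK
      have := hCQ (fun y => ρ₀ y + (-1) * (lsvQ α)^[n] one y) (Real.exp K * r ^ n)
        (fun y hy => by
          have := hclose n y hy
          rw [abs_sub_comm] at this
          convert this using 2; ring) y hy
      obtain ⟨M, hM⟩ := hbd
      obtain ⟨M', hM'⟩ := hb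
      rw [lsvQ_add_mul (summable_lsvQterm_of_bdd h0 h1 hM y (Y_sub_X hy))
        (summable_lsvQterm_of_bdd h0 h1 hM' y (Y_sub_X hy))] at this
      rw [Function.iterate_succ_apply']
      convert this using 2; ring
    have ht : Tendsto (fun n : ℕ => (lsvQ α)^[n + 1] one y) atTop (𝓝 (lsvQ α ρ₀ y)) := by
      rw [tendsto_iff_dist_tendsto_zero]
      refine squeeze_zero (fun _ => dist_nonneg) (fun n => ?_) (by simpa using hrlim.const_mul C)
      rw [dist_comm, Real.dist_eq]
      exact hle n
    exact tendsto_nhds_unique ht ((tendsto_add_atTop_iff_nat 1).2 (hlim y hy))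
  have hfixn : ∀ n : ℕ, ∀ y ∈ Set.Ioc (1 / 2 : ℝ) 1, (lsvQ α)^[n] ρ₀ y = ρ₀ y := by
    intro n
    induction n with
    | zero => intro y _; rfl
    | succ n ih =>
      intro y hy
      rw [Function.iterate_succ_apply, lsvQ_iter_congr h0 n hfix y hy, ih y hy]
  have hup : ∀ y ∈ Set.Ioc (1 / 2 : ℝ) 1, ρ₀ y ≤ Real.exp K := fun y hy => by
    have := hLH.upper hθ hK hy
    rw [hmass] at this
    linarith
  have hmix : ∀ g, LogHolder θ K g → ∀ n : ℕ, ∀ y ∈ Set.Ioc (1 / 2 : ℝ) 1,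
      |(lsvQ α)^[n] g y - 2 * (∫ y in Set.Ioc (1 / 2 : ℝ) 1, g y) * ρ₀ y| ≤
      (2 * Real.exp K * ∫ y in Set.Ioc (1 / 2 : ℝ) 1, g y) * r ^ n := by
    intro g hg n y hy
    set M := ∫ y in Set.Ioc (1 / 2 : ℝ) 1, g y with hM
    have hM0 : 0 ≤ M := hg.integral_nonneg
    have hg' := hLH.const_mul (c := 2 * M) (by positivity)
    have hmg' : ∫ y in Set.Ioc (1 / 2 : ℝ) 1, 2 * M * ρ₀ y = M := by
      rw [integral_const_mul, hmass]; ring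
    have := LogHolder.contraction h0 h1 hθ hθ1 hK hKK n hg hg' (hM.symm.trans hmg'.symm) y hy
    have e := lsvQ_iter_add_mul h0 h1 n (BddY.const 0) hbd (2 * M) y hy
    have e0 := lsvQ_iter_add_mul h0 h1 n (BddY.const 0) (BddY.const 0) 1 y hy
    simp only [zero_add, one_mul, add_zero] at e e0
    rw [e, hfixn n y hy] at this
    have e00 : (lsvQ α)^[n] (fun _ => 0) y = 0 := by linarith
    rw [e00, zero_add, ← hM] at this
    linarith
  refine ⟨ρ₀, hmeas, hfix, hmass, ⟨Real.exp (-K), Real.exp_pos _, fun y hy => ?_⟩,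
    ⟨Real.exp K, Real.exp_pos _, hup⟩, ⟨_, ?_, hLH.holder hθ hK hup⟩, r, hr0, hr1, ?_⟩
  · have := hLH.lower hθ hK hy
    rw [hmass] at this
    linarith
  · positivity
  · rintro G hGm ⟨M, hM⟩ ⟨L, hL⟩
    -- `G + c` and `c` both lie in the cone once `c` is large
    set c := M + |L| / K with hc
    have hM0 : 0 ≤ M := (abs_nonneg _).trans (hM 1 (by norm_num))
    have hc0 : 0 ≤ c := by positivity
    have hG : LogHolder θ K (fun y => G y + c) := by
      refine ⟨hGm.add_const c, fun y hy => ?_, fun y hy y' hy' => ?_⟩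
      · have := (abs_le.1 (hM y hy)).1
        have : 0 ≤ |L| / K := by positivity
        linarith
      · set t := |y - y'| ^ θ with ht
        have ht0 : 0 ≤ t := by positivity
        have a := (abs_le.1 (hL y hy y' hy')).2
        have b : |L| / K ≤ G y' + c := by linarith [(abs_le.1 (hM y' hy')).1]
        have b2 : |L| ≤ K * (G y' + c) := by rwa [div_le_iff₀' hK0] at b
        have d := Real.add_one_le_exp (K * t)
        have e : 0 ≤ G y' + c := le_trans (by positivity) b
        have l : L * t ≤ K * (G y' + c) * t :=
          mul_le_mul_of_nonneg_right ((le_abs_self L).trans b2) ht0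
        nlinarith [mul_le_mul_of_nonneg_right d e]
    have hcc : LogHolder θ K (fun _ => c) := LogHolder.const hK hc0
    refine ⟨(2 * Real.exp K * ∫ y in Set.Ioc (1 / 2 : ℝ) 1, (G y + c)) +
      (2 * Real.exp K * ∫ _ in Set.Ioc (1 / 2 : ℝ) 1, c), ?_, fun n y hy => ?_⟩
    · have := hG.integral_nonneg
      have := hcc.integral_nonneg
      positivity
    · have a := hmix _ hG n y hy
      have b := hmix _ hcc n y hy
      have e := lsvQ_iter_add_mul h0 h1 n ⟨M, hM⟩ (BddY.const c) 1 y hy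
      simp only [one_mul] at e
      rw [e] at a
      rw [integral_add (integrableOn_Y hGm hM) (integrableOn_const (by simp))] at a ⊢
      rw [abs_le] at a b ⊢
      constructor <;> nlinarith [a.1, a.2, b.1, b.2]

end Density

/-! ### The invariant measure of the map and its ergodicity -/

section InvariantMeasure

variable {α θ : ℝ} {ρ₀ : ℝ → ℝ}

lemma integral_lsvQ_inter (h0 : 0 < α) (h1 : α < 1) {g : ℝ → ℝ} (hg : Measurable g)
    (hg0 : ∀ y ∈ Set.Ioc (1 / 2 : ℝ) 1, 0 ≤ g y) (hgb : BddY g) {s : Set ℝ}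
    (hs : MeasurableSet s) (hinv : lsv α ⁻¹' s = s) :
    ∫ y in Set.Ioc (1 / 2 : ℝ) 1 ∩ s, lsvQ α g y = ∫ y in Set.Ioc (1 / 2 : ℝ) 1 ∩ s, g y := by
  obtain ⟨M, hM⟩ := hgb
  have hφ : ∀ x, s.indicator (fun _ => (1 : ENNReal)) (lsv α x) = s.indicator (fun _ => 1) x := by
    intro x
    have : lsv α x ∈ s ↔ x ∈ s := by rw [← Set.mem_preimage, hinv]
    by_cases hx : x ∈ s
    · rw [Set.indicator_of_mem hx, Set.indicator_of_mem (this.2 hx)]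
    · rw [Set.indicator_of_notMem hx, Set.indicator_of_notMem (fun h => hx (this.1 h))]
  have key := lintegral_lsvQ h0 h1 hg (M := M) (fun y hy => ⟨hg0 y hy,
    (le_abs_self _).trans (hM y hy)⟩) (φ := s.indicator fun _ => 1)
    (measurable_const.indicator hs) (fun x => Set.indicator_le_self' (by simp) x)
    (fun x _ => hφ x)
  have e : ∀ u : ℝ → ℝ, ∫⁻ y in Set.Ioc (1 / 2 : ℝ) 1, ENNReal.ofReal (u y) *
      s.indicator (fun _ => (1 : ENNReal)) y =
      ∫⁻ y in Set.Ioc (1 / 2 : ℝ) 1 ∩ s, ENNReal.ofReal (u y) := by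
    intro u
    rw [Set.inter_comm, ← Measure.restrict_restrict hs, ← lintegral_indicator hs]
    refine lintegral_congr fun y => ?_
    by_cases hy : y ∈ s <;> simp [hy]
  rw [e, e] at key
  have hmeas : MeasurableSet (Set.Ioc (1 / 2 : ℝ) 1 ∩ s) := measurableSet_Ioc.inter hs
  rw [integral_eq_lintegral_of_nonneg_ae _ (lsvQ_measurable h0 hg).aestronglyMeasurable,
    integral_eq_lintegral_of_nonneg_ae _ hg.aestronglyMeasurable, key]
  · exact (ae_restrict_iff' hmeas).2 (Eventually.of_forall fun y hy => hg0 y hy.1)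
  · exact (ae_restrict_iff' hmeas).2 (Eventually.of_forall fun y hy => tsum_nonneg fun k =>
      mul_nonneg (lsvW_pos h0 k y).le (hg0 _ (mem_branch h0 (Y_sub_X hy.1) k)))

lemma integral_lsvQ_iter_inter (h0 : 0 < α) (h1 : α < 1) {s : Set ℝ}
    (hs : MeasurableSet s) (hinv : lsv α ⁻¹' s = s) (n : ℕ) {g : ℝ → ℝ} (hg : Measurable g)
    (hg0 : ∀ y ∈ Set.Ioc (1 / 2 : ℝ) 1, 0 ≤ g y) (hgb : BddY g) :
    Measurable ((lsvQ α)^[n] g) ∧ BddY ((lsvQ α)^[n] g) ∧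
    ∫ y in Set.Ioc (1 / 2 : ℝ) 1 ∩ s, (lsvQ α)^[n] g y
      = ∫ y in Set.Ioc (1 / 2 : ℝ) 1 ∩ s, g y := by
  induction n generalizing g with
  | zero => exact ⟨hg, hgb, rfl⟩
  | succ n ih =>
    rw [Function.iterate_succ_apply]
    obtain ⟨a, b, c⟩ := ih (lsvQ_measurable h0 hg) (fun y hy => tsum_nonneg fun k =>
      mul_nonneg (lsvW_pos h0 k y).le (hg0 _ (mem_branch h0 (Y_sub_X hy) k))) (hgb.lsvQ h0 h1)
    exact ⟨a, b, c.trans (integral_lsvQ_inter h0 h1 hg hg0 hgb hs hinv)⟩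

lemma IsIndDensity.bddY (hρ : IsIndDensity α θ ρ₀) : BddY ρ₀ := by
  obtain ⟨c, hc, hl⟩ := hρ.lower
  obtain ⟨C, hC, hu⟩ := hρ.upper
  exact ⟨C, fun y hy => abs_le.2 ⟨by linarith [hl y hy], hu y hy⟩⟩

lemma IsIndDensity.pos (hρ : IsIndDensity α θ ρ₀) : ∀ y ∈ Set.Ioc (1 / 2 : ℝ) 1, 0 < ρ₀ y := by
  obtain ⟨c, hc, hl⟩ := hρ.lower
  exact fun y hy => hc.trans_le (hl y hy)

/-- Mixing forces the integral of a Hölder function over an invariant set to be proportional to its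
integral over `(1/2, 1]`. -/
lemma IsIndDensity.integral_inter_nonneg (hρ : IsIndDensity α θ ρ₀) (h0 : 0 < α) (h1 : α < 1)
    {s : Set ℝ} (hs : MeasurableSet s) (hinv : lsv α ⁻¹' s = s) {g : ℝ → ℝ} (hg : Measurable g)
    (hg0 : ∀ y ∈ Set.Ioc (1 / 2 : ℝ) 1, 0 ≤ g y) (hgb : BddY g)
    (hL : ∃ L, ∀ y ∈ Set.Ioc (1 / 2 : ℝ) 1, ∀ y' ∈ Set.Ioc (1 / 2 : ℝ) 1,
      |g y - g y'| ≤ L * |y - y'| ^ θ) :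
    ∫ y in Set.Ioc (1 / 2 : ℝ) 1 ∩ s, g y =
      2 * (∫ y in Set.Ioc (1 / 2 : ℝ) 1, g y) * ∫ y in Set.Ioc (1 / 2 : ℝ) 1 ∩ s, ρ₀ y := by
  obtain ⟨r, hr0, hr1, hmix⟩ := hρ.mixing
  obtain ⟨C, hC, hmix⟩ := hmix g hg hgb hL
  have h_integral : ∀ u : ℝ → ℝ, Measurable u → BddY u →
      IntegrableOn u (Set.Ioc (1 / 2 : ℝ) 1 ∩ s) := fun u hu ⟨M, hM⟩ =>
    (integrableOn_Y hu hM).mono_set Set.inter_subset_left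
  have hle : ∀ n : ℕ, |(∫ y in Set.Ioc (1 / 2 : ℝ) 1 ∩ s, g y) -
      2 * (∫ y in Set.Ioc (1 / 2 : ℝ) 1, g y) * ∫ y in Set.Ioc (1 / 2 : ℝ) 1 ∩ s, ρ₀ y|
      ≤ C * r ^ n := by
    intro n
    obtain ⟨a, b, c⟩ := integral_lsvQ_iter_inter h0 h1 hs hinv n hg hg0 hgb
    rw [← c, ← integral_const_mul, ← integral_sub (h_integral _ a b)
      ((h_integral _ hρ.meas hρ.bddY).const_mul _), ← Real.norm_eq_abs]
    have hvol : volume (Set.Ioc (1 / 2 : ℝ) 1 ∩ s) ≤ volume (Set.Ioc (1 / 2 : ℝ) 1) :=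
      measure_mono Set.inter_subset_left
    refine (norm_setIntegral_le_of_norm_le_const (μ := volume) (C := C * r ^ n)
      (hvol.trans_lt measure_Ioc_lt_top) fun y hy => hmix n y hy.1).trans ?_
    have : volume.real (Set.Ioc (1 / 2 : ℝ) 1 ∩ s) ≤ 1 := by
      refine (measureReal_mono Set.inter_subset_left measure_Ioc_lt_top.ne).trans ?_
      rw [volume_Y]; norm_num
    have : 0 ≤ C * r ^ n := by positivity
    nlinarith
  have hlim : Tendsto (fun n : ℕ => C * r ^ n) atTop (𝓝 0) := by
    simpa using (tendsto_pow_atTop_nhds_zero_of_lt_one hr0.le hr1).const_mul C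
  have := abs_nonpos_iff.1 (ge_of_tendsto' hlim hle)
  linarith

lemma IsIndDensity.integral_inter (hρ : IsIndDensity α θ ρ₀) (h0 : 0 < α) (h1 : α < 1)
    {s : Set ℝ} (hs : MeasurableSet s) (hinv : lsv α ⁻¹' s = s) {g : ℝ → ℝ} (hg : Measurable g)
    (hgb : BddY g)
    (hL : ∃ L, ∀ y ∈ Set.Ioc (1 / 2 : ℝ) 1, ∀ y' ∈ Set.Ioc (1 / 2 : ℝ) 1,
      |g y - g y'| ≤ L * |y - y'| ^ θ) :
    ∫ y in Set.Ioc (1 / 2 : ℝ) 1 ∩ s, g y =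
      2 * (∫ y in Set.Ioc (1 / 2 : ℝ) 1, g y) * ∫ y in Set.Ioc (1 / 2 : ℝ) 1 ∩ s, ρ₀ y := by
  obtain ⟨M, hM⟩ := hgb
  obtain ⟨L, hL⟩ := hL
  have hM0 : 0 ≤ M := (abs_nonneg _).trans (hM 1 (by norm_num))
  have hi := integrableOn_Y hg hM
  have hi' := hi.mono_set (Set.inter_subset_left (t := s))
  have hc : IntegrableOn (fun _ : ℝ => M) (Set.Ioc (1 / 2 : ℝ) 1) := integrableOn_const (by simp)
  have hc' := hc.mono_set (Set.inter_subset_left (t := s))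
  have a := hρ.integral_inter_nonneg h0 h1 hs hinv (g := fun y => g y + M) (hg.add_const M)
    (fun y hy => by linarith [(abs_le.1 (hM y hy)).1])
    ⟨M + M, fun y hy => (abs_add_le _ _).trans (add_le_add (hM y hy) (abs_of_nonneg hM0).le)⟩
    ⟨L, fun y hy y' hy' => by simpa using hL y hy y' hy'⟩
  have b := hρ.integral_inter_nonneg h0 h1 hs hinv (g := fun _ => M) measurable_const
    (fun _ _ => hM0) (BddY.const M) ⟨0, fun y hy y' hy' => by simp⟩
  rw [integral_add hi' hc', integral_add hi hc, b] at a
  linarith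

/-- An invariant set meets `(1/2, 1]` in a null set or in a set of full measure: by
`IsIndDensity.integral_inter`, its indicator integrates smooth functions like a constant. -/
lemma IsIndDensity.zero_or_one (hρ : IsIndDensity α θ ρ₀) (h0 : 0 < α) (h1 : α < 1)
    (hθ1 : θ ≤ 1) {s : Set ℝ} (hs : MeasurableSet s) (hinv : lsv α ⁻¹' s = s) :
    volume (Set.Ioc (1 / 2 : ℝ) 1 ∩ s) = 0 ∨ volume (Set.Ioc (1 / 2 : ℝ) 1 ∩ sᶜ) = 0 := by
  set κ := 2 * ∫ y in Set.Ioc (1 / 2 : ℝ) 1 ∩ s, ρ₀ y with hκ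
  set F : ℝ → ℝ := (Set.Ioc (1 / 2 : ℝ) 1).indicator (fun y => s.indicator (fun _ => 1) y - κ)
    with hF
  have hFi : Integrable F := by
    rw [hF, integrable_indicator_iff measurableSet_Ioc]
    refine integrableOn_Y ((measurable_const.indicator hs).sub_const κ) (M := 1 + |κ|)
      fun y _ => (abs_sub _ _).trans (add_le_add ?_ le_rfl)
    by_cases hy : y ∈ s <;> simp [hy]
  have key : ∀ᵐ x : ℝ, F x = 0 := by
    refine ae_eq_zero_of_integral_contDiff_smul_eq_zero hFi.locallyIntegrable fun g hg hgc => ?_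
    obtain ⟨L, hL⟩ := ContDiff.lipschitzWith_of_hasCompactSupport hgc hg (by simp)
    obtain ⟨M, hM⟩ := hgc.exists_bound_of_continuous hg.continuous
    have hgm := hg.continuous.measurable
    have hgb : BddY g := ⟨M, fun y _ => hM y⟩
    have e := hρ.integral_inter h0 h1 hs hinv hgm hgb ⟨L, fun y hy y' hy' => by
      have a := hL.dist_le_mul y y'
      rw [Real.dist_eq, Real.dist_eq] at a
      refine a.trans (mul_le_mul_of_nonneg_left ?_ L.2)
      have := Real.rpow_le_rpow_of_exponent_ge_of_imp (abs_nonneg (y - y')) (dist_Y hy hy') hθ1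
        (fun _ h => absurd h one_ne_zero)
      rwa [Real.rpow_one] at this⟩
    have hi := integrableOn_Y hgm (fun y _ => hM y)
    have : ∫ x, g x • F x = ∫ y in Set.Ioc (1 / 2 : ℝ) 1,
        (s.indicator g y - κ * g y) := by
      rw [← integral_indicator measurableSet_Ioc]
      congr 1; ext x
      by_cases hx : x ∈ Set.Ioc (1 / 2 : ℝ) 1
      · rw [Set.indicator_of_mem hx, hF, Set.indicator_of_mem hx]
        by_cases hxs : x ∈ s <;> simp [hxs] <;> ring
      · rw [Set.indicator_of_notMem hx, hF, Set.indicator_of_notMem hx, smul_zero]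
    rw [this, integral_sub (hi.indicator hs) (hi.const_mul κ), integral_const_mul,
      setIntegral_indicator hs, e, hκ]
    ring
  by_cases h : κ = 1
  · right
    refine measure_mono_null (fun x hx => ?_) key
    have : F x = -κ := by
      rw [hF, Set.indicator_of_mem hx.1, Set.indicator_of_notMem hx.2]; ring
    show ¬ F x = 0
    rw [this, h]; norm_num
  · left
    refine measure_mono_null (fun x hx => ?_) key
    have : F x = 1 - κ := by
      rw [hF, Set.indicator_of_mem hx.1, Set.indicator_of_mem hx.2]
    show ¬ F x = 0
    rw [this, sub_eq_zero]
    exact fun h' => h h'.symm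

/-- An invariant set that is null on `(1/2, 1]` is null on `(0, 1]`. -/
lemma null_of_null_Y (h0 : 0 < α) (h1 : α < 1) {s : Set ℝ} (hs : MeasurableSet s)
    (hinv : lsv α ⁻¹' s = s) (h : volume (Set.Ioc (1 / 2 : ℝ) 1 ∩ s) = 0) :
    volume (Set.Ioc (0 : ℝ) 1 ∩ s) = 0 := by
  have step : ∀ n : ℕ, volume (Set.Ioc (lsvx α n) 1 ∩ s) = 0 := by
    intro n
    induction n with
    | zero => simp [lsvx]
    | succ n ih =>
      have hx := lsvx_mem h0 n
      have e := lintegral_lsvA_Ioc h0 (c := 1) (c' := lsvx α n) (by norm_num)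
        ⟨hx.1.le, hx.2⟩ (s.indicator 1)
      rw [lintegral_indicator_one hs, Measure.restrict_apply hs, lsvA_one h0, ← lsvx_succ] at e
      have z : ∫⁻ z in Set.Ioc (lsvx α n) 1, ENNReal.ofReal (lsvD α z) *
          s.indicator (1 : ℝ → ENNReal) (lsvA α z) = 0 := by
        refine le_antisymm ?_ zero_le
        rw [← ih, Set.inter_comm, ← Measure.restrict_apply hs, ← lintegral_indicator_one hs]
        refine setLIntegral_mono' measurableSet_Ioc fun z hz => ?_
        have hz' : z ∈ Set.Ioc (0 : ℝ) 1 := ⟨hx.1.trans hz.1, hz.2⟩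
        have : lsvA α z ∈ s ↔ z ∈ s := by
          conv_lhs => rw [← hinv]
          rw [Set.mem_preimage, lsv_lsvA h0 hz']
        by_cases hzs : z ∈ s
        · simpa [hzs, this] using lsvD_le_one h0 z
        · simp [hzs, this]
      rw [z] at e
      have sub : Set.Ioc (lsvx α (n + 1)) 1 ∩ s ⊆
          (s ∩ Set.Ioc (lsvx α (n + 1)) (1 / 2)) ∪ (Set.Ioc (1 / 2 : ℝ) 1 ∩ s) := by
        rintro x ⟨hx, hxs⟩
        rcases le_or_gt x (1 / 2) with h | h
        · exact Or.inl ⟨hxs, hx.1, h⟩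
        · exact Or.inr ⟨⟨h, hx.2⟩, hxs⟩
      exact measure_mono_null sub (measure_union_null e.symm h)
  refine measure_mono_null (fun x hx => ?_) (measure_iUnion_null step)
  obtain ⟨n, hn⟩ := ((summable_lsvx h0 h1).tendsto_atTop_zero.eventually_lt_const hx.1.1).exists
  exact Set.mem_iUnion.2 ⟨n, ⟨hn, hx.1.2⟩, hx.2⟩

/-- The invariant measure with density `lsvQ α ρ₀` on `(0, 1]` (not normalized). -/
noncomputable def lsvMu (α : ℝ) (ρ₀ : ℝ → ℝ) : Measure ℝ :=
  (volume.restrict (Set.Ioc (0 : ℝ) 1)).withDensity fun z => ENNReal.ofReal (lsvQ α ρ₀ z)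

namespace IsIndDensity

lemma summable (hρ : IsIndDensity α θ ρ₀) (h0 : 0 < α) (h1 : α < 1) :
    ∀ z ∈ Set.Ioc (0 : ℝ) 1, Summable (lsvQterm α ρ₀ z) := by
  obtain ⟨M, hM⟩ := hρ.bddY
  exact summable_lsvQterm_of_bdd h0 h1 hM

lemma pos_X (hρ : IsIndDensity α θ ρ₀) (h0 : 0 < α) (h1 : α < 1) :
    ∀ z ∈ Set.Ioc (0 : ℝ) 1, 0 < lsvQ α ρ₀ z := fun z hz => by
  have hp : ∀ k, 0 < lsvQterm α ρ₀ z k := fun k =>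
    mul_pos (lsvW_pos h0 k z) (hρ.pos _ (mem_branch h0 hz k))
  exact (hρ.summable h0 h1 z hz).tsum_pos (fun k => (hp k).le) 0 (hp 0)

lemma rec_X (hρ : IsIndDensity α θ ρ₀) (h0 : 0 < α) (h1 : α < 1) {z : ℝ}
    (hz : z ∈ Set.Ioc (0 : ℝ) 1) :
    lsvQ α ρ₀ z = 1 / 2 * lsvQ α ρ₀ (lsvB z) + lsvD α z * lsvQ α ρ₀ (lsvA α z) := by
  rw [hρ.fixed _ (lsvB_mem hz)]
  exact lsvQ_rec (hρ.summable h0 h1 z hz)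

lemma meas_X (hρ : IsIndDensity α θ ρ₀) (h0 : 0 < α) :
    Measurable fun z => ENNReal.ofReal (lsvQ α ρ₀ z) := (lsvQ_measurable h0 hρ.meas).ennreal_ofReal

lemma lintegral_mu (hρ : IsIndDensity α θ ρ₀) (h0 : 0 < α) {F : ℝ → ENNReal} (hF : Measurable F) :
    ∫⁻ x, F x ∂(lsvMu α ρ₀) = ∫⁻ x in Set.Ioc (0 : ℝ) 1, ENNReal.ofReal (lsvQ α ρ₀ x) * F x := by
  rw [lsvMu, lintegral_withDensity_eq_lintegral_mul _ (hρ.meas_X h0) hF]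
  rfl

lemma finite_mu (hρ : IsIndDensity α θ ρ₀) (h0 : 0 < α) (h1 : α < 1) :
    IsFiniteMeasure (lsvMu α ρ₀) := by
  obtain ⟨C, hC, hu⟩ := hρ.upper
  exact isFiniteMeasure_withDensity (lintegral_lsvQ_lt_top h0 h1
    fun y hy => ⟨(hρ.pos y hy).le, hu y hy⟩).ne

lemma measurePreserving_mu (hρ : IsIndDensity α θ ρ₀) (h0 : 0 < α) (h1 : α < 1) :
    MeasurePreserving (lsv α) (lsvMu α ρ₀) (lsvMu α ρ₀) := by
  refine ⟨lsv_measurable, Measure.ext_of_lintegral _ fun F hF => ?_⟩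
  rw [lintegral_map hF lsv_measurable,
    hρ.lintegral_mu h0 (F := fun x => F (lsv α x)) (hF.comp lsv_measurable),
    hρ.lintegral_mu h0 hF, lintegral_X_branches h0
      (F := fun x => ENNReal.ofReal (lsvQ α ρ₀ x) * F (lsv α x))
      ((hρ.meas_X h0).mul (hF.comp lsv_measurable))]
  refine setLIntegral_congr_fun measurableSet_Ioc fun z hz => ?_
  have ha := hρ.pos_X h0 h1 _ (lsvA_mem_X h0 hz)
  have hb := hρ.pos_X h0 h1 _ (Y_sub_X (lsvB_mem hz))
  have hd := lsvD_pos h0 z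
  simp only [lsv_lsvA h0 hz, lsv_lsvB hz.1]
  rw [hρ.rec_X h0 h1 hz, ENNReal.ofReal_add (by positivity) (by positivity),
    ENNReal.ofReal_mul (by norm_num), ENNReal.ofReal_mul hd.le]
  ring

lemma ergodic_mu (hρ : IsIndDensity α θ ρ₀) (h0 : 0 < α) (h1 : α < 1) (hθ1 : θ ≤ 1) :
    Ergodic (lsv α) (lsvMu α ρ₀) := by
  refine ⟨hρ.measurePreserving_mu h0 h1, ⟨fun s hs hinv => ?_⟩⟩
  have hac : lsvMu α ρ₀ ≪ volume.restrict (Set.Ioc (0 : ℝ) 1) :=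
    withDensity_absolutelyContinuous _ _
  rw [eventuallyConst_set']
  rcases hρ.zero_or_one h0 h1 hθ1 hs hinv with h | h
  · left
    have := null_of_null_Y h0 h1 hs hinv h
    rw [Set.inter_comm, ← Measure.restrict_apply hs] at this
    exact ae_eq_empty.2 (hac this)
  · right
    have := null_of_null_Y h0 h1 hs.compl (by rw [Set.preimage_compl, hinv]) h
    rw [Set.inter_comm, ← Measure.restrict_apply hs.compl] at this
    exact ae_eq_univ.2 (hac this)

/-- An absolutely continuous invariant probability on `[0, 1]` is a multiple of `lsvMu α ρ₀`, because
it is absolutely continuous with respect to the ergodic measure `lsvMu α ρ₀`. -/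
lemma eq_smul_mu (hρ : IsIndDensity α θ ρ₀) (h0 : 0 < α) (h1 : α < 1) (hθ1 : θ ≤ 1)
    {m : Measure ℝ} [IsProbabilityMeasure m] (hsupp : m (Set.Icc (0 : ℝ) 1) = 1)
    (hT : MeasurePreserving (lsv α) m m) (hm : m ≪ volume) :
    ∃ c : ENNReal, m = c • lsvMu α ρ₀ := by
  have := hρ.finite_mu h0 h1
  refine (hρ.ergodic_mu h0 h1 hθ1).eq_smul_of_absolutelyContinuous hT ?_
  have hac : volume.restrict (Set.Ioc (0 : ℝ) 1) ≪ lsvMu α ρ₀ := by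
    refine withDensity_absolutelyContinuous' (hρ.meas_X h0).aemeasurable
      ((ae_restrict_iff' measurableSet_Ioc).2 (Eventually.of_forall fun z hz => ?_))
    simpa using hρ.pos_X h0 h1 z hz
  refine Measure.AbsolutelyContinuous.mk fun s hs h => ?_
  have h2 := hac h
  rw [Measure.restrict_apply hs] at h2
  have h3 : m (Set.Icc (0 : ℝ) 1)ᶜ = 0 := by
    rw [prob_compl_eq_zero_iff measurableSet_Icc]; exact hsupp
  have h4 : m {0} = 0 := hm (by simp)
  refine measure_mono_null (fun x hx => ?_) (measure_union_null (hm h2) (measure_union_null h3 h4))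
  by_cases hx1 : x ∈ Set.Icc (0 : ℝ) 1
  · rcases eq_or_lt_of_le hx1.1 with h | h
    · exact Or.inr (Or.inr h.symm)
    · exact Or.inl ⟨hx, h, hx1.2⟩
  · exact Or.inr (Or.inl hx1)

end IsIndDensity

end InvariantMeasure

/-! ### Induced Birkhoff sums -/

section Induced

variable {α θ : ℝ} {ρ₀ f : ℝ → ℝ}

/-- The Birkhoff sum of `f` along the excursion that starts at `lsvB ((lsvA α)^[k] z)` and
returns to `z` after `k + 1` steps. -/
noncomputable def lsvS (α : ℝ) (f : ℝ → ℝ) : ℕ → ℝ → ℝ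
  | 0, z => f (lsvB z)
  | k + 1, z => lsvS α f k (lsvA α z) + f (lsvA α z)

lemma lsvS_measurable (hf : Measurable f) (k : ℕ) : Measurable (lsvS α f k) := by
  induction k with
  | zero => exact hf.comp lsvB_measurable
  | succ k ih => exact (ih.comp lsvA_measurable).add (hf.comp lsvA_measurable)

lemma lsvS_eq (k : ℕ) (z : ℝ) : lsvS α f k z =
    f (lsvB ((lsvA α)^[k] z)) + ∑ i ∈ Finset.range k, f ((lsvA α)^[i + 1] z) := by
  induction k generalizing z with
  | zero => simp [lsvS]
  | succ k ih =>
    rw [lsvS, ih, Finset.sum_range_succ']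
    simp only [Function.iterate_succ_apply, Function.iterate_zero, id]
    ring

lemma lsvS_holder (h0 : 0 < α) (hθ : 0 < θ) {C : ℝ} (hC : 0 ≤ C)
    (hf : ∀ x ∈ Set.Ioc (0 : ℝ) 1, ∀ x' ∈ Set.Ioc (0 : ℝ) 1, |f x - f x'| ≤ C * |x - x'| ^ θ)
    (k : ℕ) : ∀ z ∈ Set.Ioc (0 : ℝ) 1, ∀ z' ∈ Set.Ioc (0 : ℝ) 1,
      |lsvS α f k z - lsvS α f k z'| ≤ C * ((k : ℝ) + 1) * |z - z'| ^ θ := by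
  induction k with
  | zero =>
    intro z hz z' hz'
    have h := hf _ (Y_sub_X (lsvB_mem hz)) _ (Y_sub_X (lsvB_mem hz'))
    simp only [lsvS, Nat.cast_zero, zero_add, mul_one]
    refine h.trans (mul_le_mul_of_nonneg_left (Real.rpow_le_rpow (abs_nonneg _) ?_ hθ.le) hC)
    have : lsvB z - lsvB z' = 1 / 2 * (z - z') := by unfold lsvB; ring
    rw [this, abs_mul, abs_of_pos (by norm_num : (0 : ℝ) < 1 / 2)]
    linarith [abs_nonneg (z - z')]
  | succ k ih =>
    intro z hz z' hz'
    have ha := lsvA_mem_X h0 hz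
    have ha' := lsvA_mem_X h0 hz'
    have h1 := ih _ ha _ ha'
    have h2 := hf _ ha _ ha'
    have h3 : |lsvA α z - lsvA α z'| ^ θ ≤ |z - z'| ^ θ :=
      Real.rpow_le_rpow (abs_nonneg _) (lsvA_lip h0 hz hz') hθ.le
    simp only [lsvS]
    push_cast
    have h4 : C * ((k : ℝ) + 1) * |lsvA α z - lsvA α z'| ^ θ ≤
        C * ((k : ℝ) + 1) * |z - z'| ^ θ := mul_le_mul_of_nonneg_left h3 (by positivity)
    have h5 : C * |lsvA α z - lsvA α z'| ^ θ ≤ C * |z - z'| ^ θ :=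
      mul_le_mul_of_nonneg_left h3 hC
    rw [abs_le] at h1 h2 ⊢
    constructor <;> linarith [h1.1, h1.2, h2.1, h2.2]

lemma sum_rpow_le {p : ℝ} (hp : 0 < p) (hp1 : p < 1) (k : ℕ) :
    ∑ i ∈ Finset.range k, ((i : ℝ) + 1) ^ (p - 1) ≤ (k : ℝ) ^ p / p := by
  induction k with
  | zero => simp [Real.zero_rpow hp.ne']
  | succ k ih =>
    rw [Finset.sum_range_succ]
    refine (add_le_add_left ih _).trans ?_
    have hk : (0 : ℝ) < (k : ℝ) + 1 := by positivity
    -- Bernoulli's inequality for `k = (k + 1) (1 - 1 / (k + 1))`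
    have hb := rpow_one_add_le_one_add_mul_self (s := -(1 / ((k : ℝ) + 1)))
      (by rw [neg_le_neg_iff, div_le_one hk]; linarith [(Nat.cast_nonneg k : (0 : ℝ) ≤ k)])
      hp.le hp1.le
    have e : (k : ℝ) = ((k : ℝ) + 1) * (1 + -(1 / ((k : ℝ) + 1))) := by field_simp; ring
    have e1 : (k : ℝ) ^ p = ((k : ℝ) + 1) ^ p * (1 + -(1 / ((k : ℝ) + 1))) ^ p := by
      conv_lhs => rw [e]
      refine Real.mul_rpow hk.le ?_
      have : 1 / ((k : ℝ) + 1) ≤ 1 := by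
        rw [div_le_one hk]; linarith [(Nat.cast_nonneg k : (0 : ℝ) ≤ k)]
      linarith
    have e2 : ((k : ℝ) + 1) ^ p = ((k : ℝ) + 1) ^ (p - 1) * ((k : ℝ) + 1) := by
      rw [Real.rpow_sub_one hk.ne']; field_simp
    have h3 := mul_le_mul_of_nonneg_left hb (Real.rpow_nonneg hk.le p)
    rw [← e1] at h3
    push_cast
    rw [div_add' _ _ _ hp.ne', div_le_div_iff_of_pos_right hp]
    have e3 : ((k : ℝ) + 1) ^ p * (1 + p * -(1 / ((k : ℝ) + 1))) =
        ((k : ℝ) + 1) ^ p - ((k : ℝ) + 1) ^ (p - 1) * p := by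
      rw [e2]; field_simp; ring
    linarith

/-- The observables to which the martingale construction applies: bounded, Hölder, and with
excursion sums bounded by a sequence that is square summable against the return branches. -/
structure IsObs (α θ : ℝ) (f : ℝ → ℝ) (C : ℝ) (B : ℕ → ℝ) : Prop where
  meas : Measurable f
  bdd : ∀ x ∈ Set.Ioc (0 : ℝ) 1, |f x| ≤ C
  holder : ∀ x ∈ Set.Ioc (0 : ℝ) 1, ∀ x' ∈ Set.Ioc (0 : ℝ) 1, |f x - f x'| ≤ C * |x - x'| ^ θ
  sum : Summable fun k => lsvW α k 1 * B k ^ 2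
  bound : ∀ k, ∀ z ∈ Set.Ioc (0 : ℝ) 1, |lsvS α f k z| ≤ B k

lemma IsObs.nonneg {C : ℝ} {B : ℕ → ℝ} (h : IsObs α θ f C B) : 0 ≤ C :=
  (abs_nonneg _).trans (h.bdd 1 (by norm_num))

lemma IsObs.bound_lin {C : ℝ} {B : ℕ → ℝ} (h0 : 0 < α) (h : IsObs α θ f C B) (k : ℕ) :
    ∀ z ∈ Set.Ioc (0 : ℝ) 1, |lsvS α f k z| ≤ C * ((k : ℝ) + 1) := by
  induction k with
  | zero =>
    intro z hz
    simpa [lsvS] using h.bdd _ (Y_sub_X (lsvB_mem hz))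
  | succ k ih =>
    intro z hz
    have ha := lsvA_mem_X h0 hz
    rw [lsvS]
    push_cast
    refine (abs_add_le _ _).trans ?_
    linarith [ih _ ha, h.bdd _ ha]

/-- Decay of `f` at the neutral point, at a rate faster than `x ^ (α - 1/2)`, makes the excursion
sums square summable against the return branches. -/
lemma exists_isObs (h0 : 0 < α) {C C' γ : ℝ} (hf : Measurable f)
    (hbd : ∀ x ∈ Set.Ioc (0 : ℝ) 1, |f x| ≤ C)
    (hH : ∀ x ∈ Set.Ioc (0 : ℝ) 1, ∀ x' ∈ Set.Ioc (0 : ℝ) 1, |f x - f x'| ≤ C * |x - x'| ^ θ)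
    (hγ0 : 0 < γ) (hγ : α - 1 / 2 < γ) (hγα : γ < α)
    (hdec : ∀ x ∈ Set.Ioc (0 : ℝ) 1, |f x| ≤ C' * x ^ γ) :
    ∃ B, IsObs α θ f C B := by
  obtain ⟨c, hc, hx⟩ := exists_lsvx_le h0
  obtain ⟨w, hw, hW⟩ := exists_lsvW_one_le h0
  have hC' : 0 ≤ C' := by simpa using (abs_nonneg _).trans (hdec 1 (by norm_num))
  have hC : 0 ≤ C := (abs_nonneg _).trans (hbd 1 (by norm_num))
  set p := 1 - γ / α with hp
  have hq : γ / α < 1 := (div_lt_one h0).2 hγα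
  have hq0 : 0 < γ / α := by positivity
  have hp0 : 0 < p := by linarith
  have hp1 : p < 1 := by linarith
  set A := C + C' * c ^ γ / p with hA
  refine ⟨fun k => A * ((k : ℝ) + 1) ^ p, hf, hbd, hH, ?_, ?_⟩
  · refine Summable.of_nonneg_of_le
      (fun k => mul_nonneg (lsvW_pos h0 k 1).le (sq_nonneg _)) (fun k => ?_)
      ((summable_add_one_rpow (p := -(1 + 1 / α) + (p + p)) ?_).mul_left (w * A ^ 2))
    · have hk : (0 : ℝ) < (k : ℝ) + 1 := by positivity
      rw [Real.rpow_add hk, Real.rpow_add hk]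
      calc _ ≤ (w * ((k : ℝ) + 1) ^ (-(1 + 1 / α))) * (A * ((k : ℝ) + 1) ^ p) ^ 2 :=
            mul_le_mul_of_nonneg_right (hW k) (sq_nonneg _)
        _ = _ := by ring
    · have : p + p < 1 / α := by
        rw [hp, lt_div_iff₀ h0]
        have : (1 - γ / α + (1 - γ / α)) * α = 2 * α - 2 * γ := by field_simp; ring
        rw [this]; linarith
      linarith
  · intro k z hz
    have hk : (0 : ℝ) < (k : ℝ) + 1 := by positivity
    rw [lsvS_eq]
    have h1 : ∀ i, |f ((lsvA α)^[i + 1] z)| ≤ C' * c ^ γ * ((i : ℝ) + 1) ^ (p - 1) := by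
      intro i
      have hm := lsvA_iter_mem_X h0 hz (i + 1)
      have hle : (lsvA α)^[i + 1] z ≤ c * ((i : ℝ) + 1) ^ (-(1 / α)) := by
        refine (lsvA_mono.iterate (i + 1) hz.2).trans ((hx (i + 1)).trans ?_)
        refine mul_le_mul_of_nonneg_left (Real.rpow_le_rpow_of_nonpos (by positivity) ?_ ?_) hc.le
        · push_cast; linarith
        · have : 0 < 1 / α := by positivity
          linarith
      refine (hdec _ hm).trans ?_
      rw [mul_assoc]
      refine mul_le_mul_of_nonneg_left ((Real.rpow_le_rpow hm.1.le hle hγ0.le).trans ?_) hC'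
      rw [Real.mul_rpow hc.le (by positivity), ← Real.rpow_mul (by positivity)]
      refine le_of_eq ?_
      congr 2
      rw [hp]; field_simp; ring
    have h2 := Finset.abs_sum_le_sum_abs (fun i => f ((lsvA α)^[i + 1] z)) (Finset.range k)
    have h3 := h2.trans (Finset.sum_le_sum fun i _ => h1 i)
    rw [← Finset.mul_sum] at h3
    have h4 := mul_le_mul_of_nonneg_left (sum_rpow_le hp0 hp1 k)
      (show 0 ≤ C' * c ^ γ by positivity)
    have h5 : (k : ℝ) ^ p ≤ ((k : ℝ) + 1) ^ p :=
      Real.rpow_le_rpow (Nat.cast_nonneg k) (by linarith) hp0.le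
    have h6 : (1 : ℝ) ≤ ((k : ℝ) + 1) ^ p :=
      Real.one_le_rpow (by linarith [(Nat.cast_nonneg k : (0 : ℝ) ≤ k)]) hp0.le
    have h7 := hbd _ (Y_sub_X (mem_branch h0 hz k))
    refine (abs_add_le _ _).trans ?_
    have h8 : C' * c ^ γ * ((k : ℝ) ^ p / p) ≤ C' * c ^ γ / p * ((k : ℝ) + 1) ^ p := by
      rw [mul_div_assoc', div_mul_eq_mul_div]
      exact div_le_div_of_nonneg_right (mul_le_mul_of_nonneg_left h5 (by positivity)) hp0.le
    rw [hA, add_mul]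
    nlinarith

/-- Extension of a function from `(1/2, 1]` to `(0, 1]`, prescribing the coboundary relation along
the left branch. -/
lemma exists_extension (h0 : 0 < α) (h1 : α < 1) {q : ℝ → ℝ} (hq : Measurable q)
    (hf : Measurable f) : ∃ u : ℝ → ℝ, Measurable u ∧
      (∀ y ∈ Set.Ioc (1 / 2 : ℝ) 1, u y = q y) ∧
      ∀ z ∈ Set.Ioc (0 : ℝ) 1, u (lsvA α z) = u z - f (lsvA α z) := by
  classical
  set Φ : (ℝ → ℝ) → ℝ → ℝ := fun v => (Set.Ioc (1 / 2 : ℝ) 1).piecewise q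
    (fun x => v (lsv α x) - f x) with hΦ
  set un : ℕ → ℝ → ℝ := fun n => Φ^[n] q with hun
  have hsucc : ∀ n, un (n + 1) = Φ (un n) := fun n => Function.iterate_succ_apply' _ _ _
  have hmeas : ∀ n, Measurable (un n) := by
    intro n
    induction n with
    | zero => exact hq
    | succ n ih =>
      rw [hsucc]
      exact Measurable.piecewise measurableSet_Ioc hq ((ih.comp lsv_measurable).sub hf)
  have hY : ∀ n, ∀ y ∈ Set.Ioc (1 / 2 : ℝ) 1, un n y = q y := by
    intro n y hy
    cases n with
    | zero => rfl
    | succ n => rw [hsucc, hΦ]; exact Set.piecewise_eq_of_mem _ _ _ hy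
  have hA : ∀ n, ∀ z ∈ Set.Ioc (0 : ℝ) 1, un (n + 1) (lsvA α z) = un n z - f (lsvA α z) := by
    intro n z hz
    rw [hsucc, hΦ]
    have : lsvA α z ∉ Set.Ioc (1 / 2 : ℝ) 1 := fun h => by
      linarith [h.1, (lsvA_mem' h0 hz).2]
    simp only
    rw [Set.piecewise_eq_of_notMem _ _ _ this, lsv_lsvA h0 hz]
  have hlim : ∀ z ∈ Set.Ioc (0 : ℝ) 1, ∃ l, Tendsto (fun n => un n z) atTop (𝓝 l) := by
    refine lsv_induction h0 h1 (fun y hy => ⟨q y, ?_⟩) ?_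
    · simp only [hY _ y hy]; exact tendsto_const_nhds
    · rintro z hz ⟨l, hl⟩
      refine ⟨l - f (lsvA α z), (tendsto_add_atTop_iff_nat 1).1 ?_⟩
      simp only [hA _ z hz]
      exact hl.sub_const _
  have hlim' : ∀ z, ∃ l, Tendsto (fun n => (Set.Ioc (0 : ℝ) 1).indicator (un n) z) atTop
      (𝓝 l) := by
    intro z
    by_cases hz : z ∈ Set.Ioc (0 : ℝ) 1
    · simpa only [Set.indicator_of_mem hz] using hlim z hz
    · exact ⟨0, by simp only [Set.indicator_of_notMem hz, tendsto_const_nhds]⟩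
  choose u hu using hlim'
  have hu' : ∀ z ∈ Set.Ioc (0 : ℝ) 1, Tendsto (fun n => un n z) atTop (𝓝 (u z)) := fun z hz => by
    simpa only [Set.indicator_of_mem hz] using hu z
  refine ⟨u, measurable_of_tendsto_metrizable (fun n => (hmeas n).indicator measurableSet_Ioc)
    (tendsto_pi_nhds.2 hu), fun y hy => ?_, fun z hz => ?_⟩
  · have := hu' y (Y_sub_X hy)
    simp only [hY _ y hy] at this
    exact tendsto_nhds_unique this tendsto_const_nhds |>.symm ▸ rfl
  · have a := (tendsto_add_atTop_iff_nat 1).2 (hu' _ (lsvA_mem_X h0 hz))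
    simp only [hA _ z hz] at a
    exact tendsto_nhds_unique a ((hu' z hz).sub_const _)

/-- Solution of the Poisson equation for the induced transfer operator, by the Neumann series
`∑ (Qⁿ G - 2 (∫ G) ρ₀)`. -/
lemma IsIndDensity.exists_poisson (hρ : IsIndDensity α θ ρ₀) (h0 : 0 < α) (h1 : α < 1)
    {G : ℝ → ℝ} (hG : Measurable G) (hGb : BddY G)
    (hL : ∃ L, ∀ y ∈ Set.Ioc (1 / 2 : ℝ) 1, ∀ y' ∈ Set.Ioc (1 / 2 : ℝ) 1,
      |G y - G y'| ≤ L * |y - y'| ^ θ) :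
    ∃ U : ℝ → ℝ, Measurable U ∧ BddY U ∧ ∀ y ∈ Set.Ioc (1 / 2 : ℝ) 1,
      U y - lsvQ α U y = G y - 2 * (∫ y in Set.Ioc (1 / 2 : ℝ) 1, G y) * ρ₀ y := by
  obtain ⟨r, hr0, hr1, hmix⟩ := hρ.mixing
  obtain ⟨C, hC, hmix⟩ := hmix G hG hGb hL
  set c := 2 * ∫ y in Set.Ioc (1 / 2 : ℝ) 1, G y with hc
  set g : ℕ → ℝ → ℝ := fun n y => (lsvQ α)^[n] G y + -c * ρ₀ y with hg
  have hgm : ∀ n, Measurable ((lsvQ α)^[n] G) ∧ BddY ((lsvQ α)^[n] G) := by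
    intro n
    induction n with
    | zero => exact ⟨hG, hGb⟩
    | succ n ih =>
      rw [Function.iterate_succ_apply']
      exact ⟨lsvQ_measurable h0 ih.1, ih.2.lsvQ h0 h1⟩
  have hgb : ∀ n, BddY (g n) := fun n => (hgm n).2.add_mul hρ.bddY _
  have hgmeas : ∀ n, Measurable (g n) := fun n => (hgm n).1.add (hρ.meas.const_mul _)
  have hgle : ∀ n, ∀ y ∈ Set.Ioc (1 / 2 : ℝ) 1, |g n y| ≤ C * r ^ n := fun n y hy => by
    have := hmix n y hy
    rw [hg]
    convert this using 2; ring
  have hgeo : HasSum (fun n : ℕ => C * r ^ n) (C * (1 - r)⁻¹) :=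
    (hasSum_geometric_of_lt_one hr0.le hr1).mul_left C
  have hsum : ∀ y ∈ Set.Ioc (1 / 2 : ℝ) 1, Summable fun n => g n y := fun y hy =>
    Summable.of_norm_bounded hgeo.summable (fun n => hgle n y hy)
  set U : ℝ → ℝ := fun y => ∑' n, g n y with hU
  have hUm : Measurable U := Measurable.tsum hgmeas
  have hUb : BddY U := ⟨C * (1 - r)⁻¹, fun y hy => by
    rw [← Real.norm_eq_abs]; exact tsum_of_norm_bounded hgeo fun n => hgle n y hy⟩
  refine ⟨U, hUm, hUb, fun y hy => ?_⟩
  have bs : ∀ {u : ℝ → ℝ}, BddY u → Summable (lsvQterm α u y) := fun {u} ⟨M, hM⟩ =>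
    summable_lsvQterm_of_bdd h0 h1 hM y (Y_sub_X hy)
  have hQg : ∀ n, lsvQ α (g n) y = g (n + 1) y := by
    intro n
    rw [hg, lsvQ_add_mul (bs (hgm n).2) (bs hρ.bddY), hρ.fixed y hy]
    simp only [Function.iterate_succ_apply']
  have hpart : ∀ N : ℕ, BddY (fun y => ∑ n ∈ Finset.range N, g n y) ∧
      lsvQ α (fun y => ∑ n ∈ Finset.range N, g n y) y = ∑ n ∈ Finset.range N, g (n + 1) y := by
    intro N
    induction N with
    | zero => exact ⟨by simpa using BddY.const 0, by simp [lsvQ, lsvQterm]⟩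
    | succ N ih =>
      have e : (fun y => ∑ n ∈ Finset.range (N + 1), g n y) =
          fun y => (∑ n ∈ Finset.range N, g n y) + 1 * g N y := by
        ext y; rw [Finset.sum_range_succ, one_mul]
      rw [e]
      refine ⟨ih.1.add_mul (hgb N) 1, ?_⟩
      rw [lsvQ_add_mul (bs ih.1) (bs (hgb N)), ih.2, hQg, Finset.sum_range_succ, one_mul]
  obtain ⟨D, hD, hDQ⟩ := exists_lsvQ_bound h0 h1
  have hclose : ∀ N : ℕ, |lsvQ α U y - ∑ n ∈ Finset.range N, g (n + 1) y| ≤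
      D * (C * (1 - r)⁻¹ * r ^ N) := by
    intro N
    have := hDQ (fun y => U y + -1 * ∑ n ∈ Finset.range N, g n y) (C * (1 - r)⁻¹ * r ^ N)
      (fun y hy => by
        have e : U y + -1 * ∑ n ∈ Finset.range N, g n y = ∑' n, g (n + N) y := by
          have := (hsum y hy).sum_add_tsum_nat_add N
          simp only [hU]; linarith
        rw [e]
        have hg2 : HasSum (fun n : ℕ => C * r ^ (n + N)) (C * (1 - r)⁻¹ * r ^ N) := by
          have := hgeo.mul_right (r ^ N)
          simpa only [pow_add, mul_assoc] using this
        rw [← Real.norm_eq_abs]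
        exact tsum_of_norm_bounded hg2 fun n => hgle (n + N) y hy) y hy
    rw [lsvQ_add_mul (bs hUb) (bs (hpart N).1), (hpart N).2] at this
    convert this using 2
    ring
  have hl1 : Tendsto (fun N => ∑ n ∈ Finset.range N, g (n + 1) y) atTop (𝓝 (lsvQ α U y)) := by
    rw [tendsto_iff_dist_tendsto_zero]
    refine squeeze_zero (g := fun N => D * (C * (1 - r)⁻¹ * r ^ N)) (fun _ => dist_nonneg)
      (fun N => by rw [dist_comm, Real.dist_eq]; exact hclose N) ?_
    simpa using ((tendsto_pow_atTop_nhds_zero_of_lt_one hr0.le hr1).const_mul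
      (C * (1 - r)⁻¹)).const_mul D
  have hl2 := ((summable_nat_add_iff 1).2 (hsum y hy)).hasSum.tendsto_sum_nat
  have e := tendsto_nhds_unique hl1 hl2
  have e2 := (hsum y hy).tsum_eq_zero_add
  rw [e]
  simp only [hU]
  rw [e2]
  simp only [hg, Function.iterate_zero, id]
  ring

end Induced

/-! ### Martingale approximation for the induced map -/

section InducedSum

variable {α θ C : ℝ} {ρ₀ f : ℝ → ℝ} {B : ℕ → ℝ}

lemma abs_lsvW_sub_le (h0 : 0 < α) (h1 : α < 1) (k : ℕ) {y y' : ℝ}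
    (hy : y ∈ Set.Ioc (1 / 2 : ℝ) 1) (hy' : y' ∈ Set.Ioc (1 / 2 : ℝ) 1) :
    |lsvW α k y - lsvW α k y'| ≤ 4 * Real.exp 8 * lsvW α k 1 * |y - y'| := by
  have key : ∀ y ∈ Set.Ioc (1 / 2 : ℝ) 1, ∀ y' ∈ Set.Ioc (1 / 2 : ℝ) 1,
      lsvW α k y - lsvW α k y' ≤ 4 * Real.exp 8 * lsvW α k 1 * |y - y'| := by
    intro y hy y' hy'
    have hd := lsvW_distortion h0 h1 k hy hy'
    have hw := lsvW_le_Y h0 h1 k hy'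
    have hp := lsvW_pos h0 k y'
    have ht : |y - y'| ≤ 1 := by
      rw [abs_le]; constructor <;> linarith [hy.1, hy.2, hy'.1, hy'.2]
    set t := |y - y'| with htd
    have ht0 : 0 ≤ t := abs_nonneg _
    have a1 : Real.exp (4 * t) - 1 ≤ 4 * t * Real.exp 4 := by
      have b1 := Real.add_one_le_exp (-(4 * t))
      have b2 : Real.exp (4 * t) * Real.exp (-(4 * t)) = 1 := by rw [← Real.exp_add]; simp
      have b3 : Real.exp (4 * t) ≤ Real.exp 4 := Real.exp_le_exp.2 (by linarith)
      have b4 := Real.exp_pos (4 * t)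
      nlinarith [mul_le_mul_of_nonneg_left b1 b4.le, mul_le_mul_of_nonneg_left b3 ht0]
    have e8 : Real.exp 8 = Real.exp 4 * Real.exp 4 := by rw [← Real.exp_add]; norm_num
    calc lsvW α k y - lsvW α k y' ≤ (Real.exp (4 * t) - 1) * lsvW α k y' := by linarith
      _ ≤ 4 * t * Real.exp 4 * (Real.exp 4 * lsvW α k 1) :=
          mul_le_mul a1 hw hp.le (by positivity)
      _ = _ := by rw [e8]; ring
  rw [abs_le]
  have a := key y hy y' hy'
  have b := key y' hy' y hy
  rw [abs_sub_comm] at b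
  constructor <;> linarith

/-- The transfer operator of the induced map, applied to the induced observable times the density,
is bounded and Hölder. -/
lemma IsObs.induced (hf : IsObs α θ f C B) (hρ : IsIndDensity α θ ρ₀) (h0 : 0 < α) (h1 : α < 1)
    (hθ : 0 < θ) (hθ1 : θ ≤ 1) :
    ∃ G : ℝ → ℝ, Measurable G ∧ BddY G ∧
      (∃ L, ∀ y ∈ Set.Ioc (1 / 2 : ℝ) 1, ∀ y' ∈ Set.Ioc (1 / 2 : ℝ) 1,
        |G y - G y'| ≤ L * |y - y'| ^ θ) ∧
      ∀ y ∈ Set.Ioc (1 / 2 : ℝ) 1,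
        HasSum (fun k => lsvW α k y * (ρ₀ (lsvB ((lsvA α)^[k] y)) * lsvS α f k y)) (G y) := by
  obtain ⟨R, hR, hup⟩ := hρ.upper
  obtain ⟨H, hH, hhol⟩ := hρ.holder
  have hC := hf.nonneg
  set g : ℕ → ℝ → ℝ := fun k y => lsvW α k y * (ρ₀ (lsvB ((lsvA α)^[k] y)) * lsvS α f k y) with hg
  have hW := summable_mul_lsvW h0 h1
  have hb : ∀ k, ∀ y ∈ Set.Ioc (1 / 2 : ℝ) 1,
      ‖g k y‖ ≤ Real.exp 4 * R * C * (((k : ℝ) + 1) * lsvW α k 1) := by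
    intro k y hy
    have hmem := mem_branch h0 (Y_sub_X hy) k
    have hw1 := lsvW_pos h0 k 1
    simp only [hg]
    rw [norm_mul, norm_mul, Real.norm_of_nonneg (lsvW_pos h0 k y).le,
      Real.norm_of_nonneg (hρ.pos _ hmem).le, Real.norm_eq_abs]
    calc _ ≤ (Real.exp 4 * lsvW α k 1) * (R * (C * ((k : ℝ) + 1))) :=
          mul_le_mul (lsvW_le_Y h0 h1 k hy) (mul_le_mul (hup _ hmem)
            (hf.bound_lin h0 k y (Y_sub_X hy)) (abs_nonneg _) hR.le)
            (mul_nonneg (hρ.pos _ hmem).le (abs_nonneg _)) (by positivity)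
      _ = _ := by ring
  have hs : ∀ y ∈ Set.Ioc (1 / 2 : ℝ) 1, Summable fun k => g k y := fun y hy =>
    Summable.of_norm_bounded (hW.mul_left _) fun k => hb k y hy
  set L := 4 * Real.exp 8 * R * C + Real.exp 4 * H * C + Real.exp 4 * R * C with hL
  have hd : ∀ k, ∀ y ∈ Set.Ioc (1 / 2 : ℝ) 1, ∀ y' ∈ Set.Ioc (1 / 2 : ℝ) 1,
      ‖g k y - g k y'‖ ≤ L * |y - y'| ^ θ * (((k : ℝ) + 1) * lsvW α k 1) := by
    intro k y hy y' hy'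
    have hyX := Y_sub_X hy
    have hyX' := Y_sub_X hy'
    have hmem := mem_branch h0 hyX k
    have hmem' := mem_branch h0 hyX' k
    have ht1 : |y - y'| ≤ 1 := by
      rw [abs_le]; constructor <;> linarith [hy.1, hy.2, hy'.1, hy'.2]
    set τ := |y - y'| ^ θ with hτ
    have hτ0 : 0 ≤ τ := by positivity
    have htτ : |y - y'| ≤ τ := by
      have := Real.rpow_le_rpow_of_exponent_ge' (abs_nonneg _) ht1 hθ.le hθ1
      simpa using this
    have hw1 := lsvW_pos h0 k 1
    have hk : (1 : ℝ) ≤ (k : ℝ) + 1 := by linarith [(Nat.cast_nonneg k : (0 : ℝ) ≤ k)]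
    have dw : |lsvW α k y - lsvW α k y'| ≤ 4 * Real.exp 8 * lsvW α k 1 * τ :=
      (abs_lsvW_sub_le h0 h1 k hy hy').trans (mul_le_mul_of_nonneg_left htτ (by positivity))
    have dρ : |ρ₀ (lsvB ((lsvA α)^[k] y)) - ρ₀ (lsvB ((lsvA α)^[k] y'))| ≤ H * τ := by
      refine (hhol _ hmem _ hmem').trans (mul_le_mul_of_nonneg_left
        (Real.rpow_le_rpow (abs_nonneg _) ?_ hθ.le) hH.le)
      have e : lsvB ((lsvA α)^[k] y) - lsvB ((lsvA α)^[k] y') =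
        1 / 2 * ((lsvA α)^[k] y - (lsvA α)^[k] y') := by unfold lsvB; ring
      rw [e, abs_mul, abs_of_pos (by norm_num : (0 : ℝ) < 1 / 2)]
      linarith [lsvA_iter_lip h0 hyX hyX' k, abs_nonneg (y - y')]
    have dS := lsvS_holder h0 hθ hC hf.holder k y hyX y' hyX'
    have bw := lsvW_le_Y h0 h1 k hy'
    have bρ := hup _ hmem
    have bρ' := hup _ hmem'
    have pρ := hρ.pos _ hmem
    have pρ' := hρ.pos _ hmem'
    have pw' := lsvW_pos h0 k y'
    have bS := hf.bound_lin h0 k y hyX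
    set P := ρ₀ (lsvB ((lsvA α)^[k] y))
    set P' := ρ₀ (lsvB ((lsvA α)^[k] y'))
    have e : g k y - g k y' = (lsvW α k y - lsvW α k y') * (P * lsvS α f k y) +
        lsvW α k y' * ((P - P') * lsvS α f k y) +
        lsvW α k y' * (P' * (lsvS α f k y - lsvS α f k y')) := by simp only [hg]; ring
    rw [e, Real.norm_eq_abs]
    have i1 : |(lsvW α k y - lsvW α k y') * (P * lsvS α f k y)| ≤
        (4 * Real.exp 8 * lsvW α k 1 * τ) * (R * (C * ((k : ℝ) + 1))) := by
      rw [abs_mul, abs_mul, abs_of_pos pρ]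
      exact mul_le_mul dw (mul_le_mul bρ bS (abs_nonneg _) hR.le)
        (mul_nonneg pρ.le (abs_nonneg _)) (by positivity)
    have i2 : |lsvW α k y' * ((P - P') * lsvS α f k y)| ≤
        (Real.exp 4 * lsvW α k 1) * ((H * τ) * (C * ((k : ℝ) + 1))) := by
      rw [abs_mul, abs_mul, abs_of_pos pw']
      exact mul_le_mul bw (mul_le_mul dρ bS (abs_nonneg _) (by positivity))
        (mul_nonneg (abs_nonneg _) (abs_nonneg _)) (by positivity)
    have i3 : |lsvW α k y' * (P' * (lsvS α f k y - lsvS α f k y'))| ≤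
        (Real.exp 4 * lsvW α k 1) * (R * (C * ((k : ℝ) + 1) * τ)) := by
      rw [abs_mul, abs_mul, abs_of_pos pw', abs_of_pos pρ']
      exact mul_le_mul bw (mul_le_mul bρ' dS (abs_nonneg _) (by positivity))
        (mul_nonneg pρ'.le (abs_nonneg _)) (by positivity)
    refine (abs_add_le _ _).trans ((add_le_add ((abs_add_le _ _).trans (add_le_add i1 i2))
      i3).trans (le_of_eq ?_))
    rw [hL]; ring
  refine ⟨fun y => ∑' k, g k y, Measurable.tsum fun k => (lsvW_measurable h0 k).mul
    ((hρ.meas.comp (lsvB_measurable.comp (lsvA_measurable.iterate k))).mul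
      (lsvS_measurable hf.meas k)),
    ⟨∑' k : ℕ, Real.exp 4 * R * C * (((k : ℝ) + 1) * lsvW α k 1), fun y hy => ?_⟩,
    ⟨L * ∑' k : ℕ, ((k : ℝ) + 1) * lsvW α k 1, fun y hy y' hy' => ?_⟩, fun y hy => (hs y hy).hasSum⟩
  · rw [← Real.norm_eq_abs]
    exact tsum_of_norm_bounded (hW.mul_left _).hasSum fun k => hb k y hy
  · rw [← Real.norm_eq_abs]
    simp only
    rw [← (hs y hy).tsum_sub (hs y' hy')]
    have := tsum_of_norm_bounded (hW.mul_left (L * |y - y'| ^ θ)).hasSum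
      fun k => hd k y hy y' hy'
    rw [tsum_mul_left] at this
    convert this using 1
    ring

lemma extension_iter (h0 : 0 < α) {u : ℝ → ℝ}
    (hu : ∀ z ∈ Set.Ioc (0 : ℝ) 1, u (lsvA α z) = u z - f (lsvA α z)) (k : ℕ) {z : ℝ}
    (hz : z ∈ Set.Ioc (0 : ℝ) 1) :
    u ((lsvA α)^[k] z) = u z - ∑ i ∈ Finset.range k, f ((lsvA α)^[i + 1] z) := by
  induction k with
  | zero => simp
  | succ k ih =>
    rw [Finset.sum_range_succ, Function.iterate_succ_apply', hu _ (lsvA_iter_mem_X h0 hz k), ih]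
    ring

/-- First step of the martingale approximation: up to a multiple of the indicator of `(1/2, 1]` and
a coboundary, `f` is a function `ψ` supported on `(1/2, 1]` which is a martingale difference for
the induced map. -/
lemma IsObs.exists_induced (hf : IsObs α θ f C B) (hρ : IsIndDensity α θ ρ₀) (h0 : 0 < α)
    (h1 : α < 1) (hθ : 0 < θ) (hθ1 : θ ≤ 1) :
    ∃ (c : ℝ) (u ψ : ℝ → ℝ) (β : ℕ → ℝ), Measurable u ∧ Measurable ψ ∧
      (∀ x ∈ Set.Ioc (0 : ℝ) 1, f x - (Set.Ioc (1 / 2 : ℝ) 1).indicator (fun _ => c) x =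
        ψ x + u (lsv α x) - u x) ∧
      (∀ z ∈ Set.Ioc (0 : ℝ) 1, ψ (lsvA α z) = 0) ∧
      (Summable fun k => lsvW α k 1 * β k ^ 2) ∧
      (∀ k, ∀ y ∈ Set.Ioc (1 / 2 : ℝ) 1, |ψ (lsvB ((lsvA α)^[k] y))| ≤ β k) ∧
      ∀ y ∈ Set.Ioc (1 / 2 : ℝ) 1, lsvQ α (fun x => ρ₀ x * ψ x) y = 0 := by
  obtain ⟨G, hGm, hGb, hGL, hGs⟩ := hf.induced hρ h0 h1 hθ hθ1
  obtain ⟨U, hUm, hUb, hU⟩ := hρ.exists_poisson h0 h1 hGm hGb hGL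
  obtain ⟨u, hum, huY, huA⟩ := exists_extension h0 h1 (hUm.div hρ.meas) hf.meas
  obtain ⟨M, hM⟩ := hUb
  obtain ⟨l, hl, hlow⟩ := hρ.lower
  set c := 2 * ∫ y in Set.Ioc (1 / 2 : ℝ) 1, G y with hc
  have huU : ∀ y ∈ Set.Ioc (1 / 2 : ℝ) 1, ρ₀ y * u y = U y := fun y hy => by
    have := (hρ.pos y hy).ne'
    rw [huY y hy, Pi.div_apply]; field_simp
  have hub : ∀ y ∈ Set.Ioc (1 / 2 : ℝ) 1, |u y| ≤ M / l := fun y hy => by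
    rw [huY y hy, Pi.div_apply, abs_div, abs_of_pos (hρ.pos y hy)]
    exact div_le_div₀ ((abs_nonneg _).trans (hM y hy)) (hM y hy) hl (hlow y hy)
  set ψ : ℝ → ℝ := (Set.Ioc (1 / 2 : ℝ) 1).indicator fun x => f x - c + u x - u (lsv α x) with hψ
  have hψb : ∀ k, ∀ z ∈ Set.Ioc (0 : ℝ) 1, ψ (lsvB ((lsvA α)^[k] z)) =
      lsvS α f k z - c + u (lsvB ((lsvA α)^[k] z)) - u z := by
    intro k z hz
    rw [hψ, Set.indicator_of_mem (mem_branch h0 hz k), lsv_lsvB (lsvA_iter_mem_X h0 hz k).1,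
      extension_iter h0 huA k hz, lsvS_eq]
    ring
  have hnot : ∀ z ∈ Set.Ioc (0 : ℝ) 1, lsvA α z ∉ Set.Ioc (1 / 2 : ℝ) 1 := fun z hz h => by
    linarith [h.1, (lsvA_mem' h0 hz).2]
  have hψa : ∀ z ∈ Set.Ioc (0 : ℝ) 1, ψ (lsvA α z) = 0 := fun z hz => by
    rw [hψ, Set.indicator_of_notMem (hnot z hz)]
  set K := |c| + 2 * (M / l) with hK
  refine ⟨c, u, ψ, fun k => B k + K, hum, ((((hf.meas.sub_const c).add hum).sub
    (hum.comp lsv_measurable)).indicator measurableSet_Ioc), ?_, hψa, ?_, ?_, ?_⟩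
  · intro x hx
    by_cases hY : x ∈ Set.Ioc (1 / 2 : ℝ) 1
    · rw [hψ, Set.indicator_of_mem hY, Set.indicator_of_mem hY]; ring
    · have hx2 : x ∈ Set.Ioc (0 : ℝ) (1 / 2) :=
        ⟨hx.1, not_lt.1 fun h => hY ⟨h, hx.2⟩⟩
      rw [hψ, Set.indicator_of_notMem hY, Set.indicator_of_notMem hY]
      have := huA _ (lsv_mem_X h0 hx)
      rw [lsvA_lsv h0 hx2] at this
      linarith
  · refine Summable.of_nonneg_of_le (fun k => mul_nonneg (lsvW_pos h0 k 1).le (sq_nonneg _))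
      (fun k => ?_) ((hf.sum.mul_left 2).add ((summable_lsvW_one h0 h1).mul_right (2 * K ^ 2)))
    have := lsvW_pos h0 k 1
    nlinarith [mul_nonneg this.le (sq_nonneg (B k - K))]
  · intro k y hy
    rw [hψb k y (Y_sub_X hy)]
    have a1 := hf.bound k y (Y_sub_X hy)
    have a2 := hub y hy
    have a3 := hub _ (mem_branch h0 (Y_sub_X hy) k)
    have a4 := le_abs_self c
    have a5 := neg_abs_le c
    rw [abs_le] at a1 a2 a3 ⊢
    rw [hK]
    constructor <;> linarith [a1.1, a1.2, a2.1, a2.2, a3.1, a3.2]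
  · intro y hy
    have hyX := Y_sub_X hy
    have s1 := hGs y hy
    have s2 : HasSum (lsvQterm α ρ₀ y) (ρ₀ y) := by
      have := (hρ.summable h0 h1 y hyX).hasSum
      rwa [← lsvQ, hρ.fixed y hy] at this
    have s3 : HasSum (lsvQterm α U y) (lsvQ α U y) :=
      (summable_lsvQterm_of_bdd h0 h1 hM y hyX).hasSum
    have s := (s1.add s3).sub (s2.mul_left (c + u y))
    have e : G y + lsvQ α U y - (c + u y) * ρ₀ y = 0 := by
      linarith [hU y hy, huU y hy]
    rw [e] at s
    rw [lsvQ]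
    refine HasSum.tsum_eq ?_
    refine s.congr_fun ?_
    intro k
    have hm := mem_branch h0 hyX k
    simp only [lsvQterm]
    rw [hψb k y hyX, ← huU _ hm]
    ring

end InducedSum

/-! ### From the induced map back to the original map -/

section Lift

variable {α θ C : ℝ} {ρ₀ f : ℝ → ℝ} {B : ℕ → ℝ}

/-- Iterating the functional equation `p + D' = D`, where `D'` is the transported `D`, over
`(x_N, 1]`: the total mass of `p` is controlled by that of `D` on `(1/2, 1]`. -/
lemma lintegral_le_of_telescope (h0 : 0 < α) (h1 : α < 1) {p D : ℝ → ENNReal} (hp : Measurable p)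
    (hD : ∀ z ∈ Set.Ioc (0 : ℝ) 1,
      p z + ENNReal.ofReal (lsvD α z) * D (lsvA α z) = D z)
    (hfin : ∫⁻ y in Set.Ioc (1 / 2 : ℝ) 1, D y ≠ ⊤) :
    ∫⁻ z in Set.Ioc (0 : ℝ) 1, p z ≤ ∫⁻ y in Set.Ioc (1 / 2 : ℝ) 1, D y := by
  have hx1 : lsvx α 1 = 1 / 2 := by rw [lsvx_succ]; simp [lsvx, lsvA_one h0]
  have hanti : Antitone (lsvx α) := antitone_nat_of_succ_le fun n => by
    rw [lsvx_succ]; exact (lsvA_lt h0 (lsvx_mem h0 n)).le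
  set J : ℕ → ENNReal := fun n => ∫⁻ z in Set.Ioc (lsvx α (n + 1)) (1 / 2), D z with hJ
  set P : ℕ → ENNReal := fun n => ∫⁻ z in Set.Ioc (lsvx α (n + 1)) 1, p z with hP
  set DY := ∫⁻ y in Set.Ioc (1 / 2 : ℝ) 1, D y with hDY
  have hrel : ∀ n, P n + J (n + 1) = J n + DY := by
    intro n
    have hm := lsvx_mem h0 (n + 1)
    have hle : lsvx α (n + 1) ≤ 1 / 2 := by
      rw [← hx1]; exact hanti (by omega)
    have e1 : J (n + 1) = ∫⁻ z in Set.Ioc (lsvx α (n + 1)) 1,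
        ENNReal.ofReal (lsvD α z) * D (lsvA α z) := by
      rw [lintegral_lsvA_Ioc h0 (by norm_num) ⟨hm.1.le, hm.2⟩, lsvA_one h0, ← lsvx_succ]
    have e2 : J n + DY = ∫⁻ z in Set.Ioc (lsvx α (n + 1)) 1, D z := by
      rw [hJ, hDY, ← lintegral_union measurableSet_Ioc
        (Set.Ioc_disjoint_Ioc_of_le le_rfl), Set.Ioc_union_Ioc_eq_Ioc hle (by norm_num)]
    rw [e1, e2, hP, ← lintegral_add_left hp]
    refine setLIntegral_congr_fun measurableSet_Ioc fun z hz => hD z ⟨hm.1.trans hz.1, hz.2⟩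
  have hJfin : ∀ n, J n ≠ ⊤ := by
    intro n
    induction n with
    | zero => simp [hJ, hx1]
    | succ n ih =>
      refine ne_top_of_le_ne_top (ENNReal.add_ne_top.2 ⟨ih, hfin⟩) ?_
      rw [← hrel n]; exact le_add_self
  have hJmono : ∀ n, J n ≤ J (n + 1) := fun n =>
    lintegral_mono_set (Set.Ioc_subset_Ioc_left (hanti (by omega)))
  have hPle : ∀ n, P n ≤ DY := by
    intro n
    have h := hrel n
    refine (ENNReal.add_le_add_iff_right (hJfin n)).1 ?_
    calc P n + J n ≤ P n + J (n + 1) := by gcongr; exact hJmono n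
      _ = DY + J n := by rw [h, add_comm]
  have hU : Set.Ioc (0 : ℝ) 1 = ⋃ n, Set.Ioc (lsvx α (n + 1)) 1 := by
    ext z
    simp only [Set.mem_iUnion]
    constructor
    · intro hz
      have hlim := (summable_lsvx h0 h1).tendsto_atTop_zero
      obtain ⟨n, hn⟩ := (((tendsto_add_atTop_iff_nat 1).2 hlim).eventually_lt_const hz.1).exists
      exact ⟨n, hn, hz.2⟩
    · rintro ⟨n, hn⟩
      exact ⟨(lsvx_mem h0 (n + 1)).1.trans hn.1, hn.2⟩
  rw [hU, setLIntegral_iUnion_of_directed]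
  · exact iSup_le hPle
  · exact Monotone.directed_le fun i j hij => Set.Ioc_subset_Ioc_left (hanti (by omega))

/-- Integrals against the invariant measure, split along the two inverse branches. -/
lemma IsIndDensity.integral_mu (hρ : IsIndDensity α θ ρ₀) (h0 : 0 < α) (h1 : α < 1) {F : ℝ → ℂ}
    (hF : Integrable F (lsvMu α ρ₀)) :
    ∫ x, F x ∂(lsvMu α ρ₀) = ∫ z in Set.Ioc (0 : ℝ) 1,
      ((lsvD α z * lsvQ α ρ₀ (lsvA α z)) • F (lsvA α z) + (1 / 2 * ρ₀ (lsvB z)) • F (lsvB z)) := by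
  have hlt : ∀ᵐ x ∂(volume.restrict (Set.Ioc (0 : ℝ) 1)), ENNReal.ofReal (lsvQ α ρ₀ x) < ⊤ :=
    Eventually.of_forall fun x => ENNReal.ofReal_lt_top
  set Φ : ℝ → ℂ := fun x => (ENNReal.ofReal (lsvQ α ρ₀ x)).toReal • F x with hΦ
  have hΦi : IntegrableOn Φ (Set.Ioc (0 : ℝ) 1) :=
    (integrable_withDensity_iff_integrable_smul' (hρ.meas_X h0) hlt).1 hF
  have hval : ∀ x ∈ Set.Ioc (0 : ℝ) 1, Φ x = lsvQ α ρ₀ x • F x := fun x hx => by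
    rw [hΦ]; simp only [ENNReal.toReal_ofReal (hρ.pos_X h0 h1 x hx).le]
  rw [lsvMu, integral_withDensity_eq_integral_toReal_smul (hρ.meas_X h0) hlt]
  have hsub1 : Set.Ioc (0 : ℝ) (1 / 2) ⊆ Set.Ioc 0 1 := Set.Ioc_subset_Ioc_right (by norm_num)
  have hi1 := hΦi.mono_set hsub1
  have hi2 := hΦi.mono_set (t := Set.Ioc (0 : ℝ) 1) (s := Set.Ioc (1 / 2 : ℝ) 1)
    fun _ hx => Y_sub_X hx
  have hu : Set.Ioc (0 : ℝ) 1 = Set.Ioc 0 (1 / 2) ∪ Set.Ioc (1 / 2) 1 := by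
    rw [Set.Ioc_union_Ioc_eq_Ioc] <;> norm_num
  have e : ∫ x in Set.Ioc (0 : ℝ) 1, Φ x =
      (∫ x in Set.Ioc (0 : ℝ) (1 / 2), Φ x) + ∫ x in Set.Ioc (1 / 2 : ℝ) 1, Φ x := by
    conv_lhs => rw [hu]
    exact setIntegral_union (Set.Ioc_disjoint_Ioc_of_le le_rfl) measurableSet_Ioc hi1 hi2
  refine e.trans ?_
  rw [← integral_lsvA h0, ← integral_lsvB, ← integral_add (integrableOn_lsvA h0 hi1)
    (integrableOn_lsvB hi2)]
  refine setIntegral_congr_fun measurableSet_Ioc fun z hz => ?_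
  have hb := lsvB_mem hz
  rw [hval _ (lsvA_mem_X h0 hz), hval _ (Y_sub_X hb), hρ.fixed _ hb, smul_smul, smul_smul]

/-- Second step of the martingale approximation: a martingale difference for the induced map,
extended by zero, becomes a square integrable martingale difference for the original map after
adding the coboundary of `v`, the conditional mean of `ψ` over the excursion in progress. -/
lemma IsIndDensity.exists_lift (hρ : IsIndDensity α θ ρ₀) (h0 : 0 < α) (h1 : α < 1)
    {ψ : ℝ → ℝ} {β : ℕ → ℝ} (hψ : Measurable ψ)
    (hψa : ∀ z ∈ Set.Ioc (0 : ℝ) 1, ψ (lsvA α z) = 0)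
    (hβ : Summable fun k => lsvW α k 1 * β k ^ 2)
    (hψβ : ∀ k, ∀ y ∈ Set.Ioc (1 / 2 : ℝ) 1, |ψ (lsvB ((lsvA α)^[k] y))| ≤ β k)
    (hQ : ∀ y ∈ Set.Ioc (1 / 2 : ℝ) 1, lsvQ α (fun x => ρ₀ x * ψ x) y = 0) :
    ∃ v : ℝ → ℝ, Measurable v ∧
      MemLp (fun x => ψ x + v x - v (lsv α x)) 2 (lsvMu α ρ₀) ∧
      ∀ g : ℝ → ℂ, Measurable g → (∀ x, ‖g x‖ ≤ 1) →
        ∫ x, ((ψ x + v x - v (lsv α x) : ℝ) : ℂ) * g (lsv α x) ∂(lsvMu α ρ₀) = 0 := by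
  obtain ⟨R, hR, hup⟩ := hρ.upper
  have hβ0 : ∀ k, 0 ≤ β k := fun k => (abs_nonneg _).trans (hψβ k 1 (by norm_num))
  have hE2 : ∀ k, ∀ y ∈ Set.Ioc (1 / 2 : ℝ) 1,
      |(fun x => ρ₀ x * ψ x ^ 2) (lsvB ((lsvA α)^[k] y))| ≤ R * β k ^ 2 := by
    intro k y hy
    have hm := mem_branch h0 (Y_sub_X hy) k
    simp only
    rw [abs_mul, abs_of_pos (hρ.pos _ hm), abs_pow]
    exact mul_le_mul (hup _ hm) (pow_le_pow_left₀ (abs_nonneg _) (hψβ k y hy) 2) (by positivity)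
      hR.le
  have hRβ : Summable fun k => lsvW α k 1 * (R * β k ^ 2) := by
    refine (hβ.mul_left R).congr fun k => by ring
  have sE := summable_lsvQterm_X h0 h1
    (summable_lsvQterm_of_bound (g := fun x => ρ₀ x * ψ x ^ 2) h0 h1 hRβ hE2)
  have sV : ∀ z ∈ Set.Ioc (0 : ℝ) 1, Summable (lsvQterm α (fun x => ρ₀ x * ψ x) z) := by
    refine summable_lsvQterm_X h0 h1 (summable_lsvQterm_of_bound h0 h1
      (β := fun k => R * (1 + β k ^ 2)) ?_ ?_)
    · refine (((summable_lsvW_one h0 h1).mul_left R).add (hβ.mul_left R)).congr fun k => by ring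
    · intro k y hy
      have hm := mem_branch h0 (Y_sub_X hy) k
      rw [abs_mul, abs_of_pos (hρ.pos _ hm)]
      refine mul_le_mul (hup _ hm) ((hψβ k y hy).trans ?_) (abs_nonneg _) hR.le
      nlinarith [sq_nonneg (β k - 1)]
  have sH := hρ.summable h0 h1
  set hh : ℝ → ℝ := lsvQ α ρ₀ with hhh
  set V : ℝ → ℝ := lsvQ α (fun x => ρ₀ x * ψ x) with hV
  set E : ℝ → ℝ := lsvQ α (fun x => ρ₀ x * ψ x ^ 2) with hE
  have mh : Measurable hh := lsvQ_measurable h0 hρ.meas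
  have mV : Measurable V := lsvQ_measurable h0 (hρ.meas.mul hψ)
  have mE : Measurable E := lsvQ_measurable h0 (hρ.meas.mul (hψ.pow_const 2))
  set v : ℝ → ℝ := fun z => V z / hh z with hv
  have mv : Measurable v := mV.div mh
  have hpos : ∀ z ∈ Set.Ioc (0 : ℝ) 1, 0 < hh z := hρ.pos_X h0 h1
  have hVv : ∀ z ∈ Set.Ioc (0 : ℝ) 1, V z = v z * hh z := fun z hz => by
    have := (hpos z hz).ne'
    simp only [hv]; field_simp
  have hvY : ∀ y ∈ Set.Ioc (1 / 2 : ℝ) 1, v y = 0 := fun y hy => by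
    simp only [hv]; rw [hQ y hy, zero_div]
  set D : ℝ → ℝ := fun z => E z - v z * V z with hD
  have mD : Measurable D := mE.sub (mv.mul mV)
  have hD0 : ∀ z ∈ Set.Ioc (0 : ℝ) 1, 0 ≤ D z := by
    intro z hz
    -- `D z` is the sum of the nonnegative numbers `w_k ρ₀ (ψ - v z) ^ 2`
    have hs := (((sE z hz).hasSum).sub ((sV z hz).hasSum.mul_left (2 * v z))).add
      ((sH z hz).hasSum.mul_left (v z ^ 2))
    have e : D z = E z - 2 * v z * V z + v z ^ 2 * hh z := by
      simp only [hD]; rw [hVv z hz]; ring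
    rw [e]
    refine hs.nonneg fun k => ?_
    have hm := mem_branch h0 hz k
    simp only [lsvQterm]
    have := mul_nonneg (mul_nonneg (lsvW_pos h0 k z).le (hρ.pos _ hm).le)
      (sq_nonneg (ψ (lsvB ((lsvA α)^[k] z)) - v z))
    nlinarith
  set ψ' : ℝ → ℝ := fun x => ψ x + v x - v (lsv α x) with hψ'
  have mψ' : Measurable ψ' := (hψ.add mv).sub (mv.comp lsv_measurable)
  have ψ'a : ∀ z ∈ Set.Ioc (0 : ℝ) 1, ψ' (lsvA α z) = v (lsvA α z) - v z := fun z hz => by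
    simp only [hψ']; rw [hψa z hz, lsv_lsvA h0 hz]; ring
  have ψ'b : ∀ z ∈ Set.Ioc (0 : ℝ) 1, ψ' (lsvB z) = ψ (lsvB z) - v z := fun z hz => by
    simp only [hψ']; rw [hvY _ (lsvB_mem hz), lsv_lsvB hz.1]; ring
  have rh : ∀ z ∈ Set.Ioc (0 : ℝ) 1,
      hh z = 1 / 2 * ρ₀ (lsvB z) + lsvD α z * hh (lsvA α z) := fun z hz => lsvQ_rec (sH z hz)
  have rV : ∀ z ∈ Set.Ioc (0 : ℝ) 1,
      V z = 1 / 2 * (ρ₀ (lsvB z) * ψ (lsvB z)) + lsvD α z * V (lsvA α z) :=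
    fun z hz => lsvQ_rec (sV z hz)
  have rE : ∀ z ∈ Set.Ioc (0 : ℝ) 1,
      E z = 1 / 2 * (ρ₀ (lsvB z) * ψ (lsvB z) ^ 2) + lsvD α z * E (lsvA α z) :=
    fun z hz => lsvQ_rec (sE z hz)
  have hmart : ∀ z ∈ Set.Ioc (0 : ℝ) 1, lsvD α z * hh (lsvA α z) * ψ' (lsvA α z) +
      1 / 2 * ρ₀ (lsvB z) * ψ' (lsvB z) = 0 := by
    intro z hz
    have e1 := rV z hz
    rw [hVv z hz, hVv _ (lsvA_mem_X h0 hz)] at e1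
    have e2 := rh z hz
    rw [ψ'a z hz, ψ'b z hz]
    linear_combination -e1 + v z * e2
  set p : ℝ → ℝ := fun z => lsvD α z * (hh (lsvA α z) * ψ' (lsvA α z) ^ 2) +
      1 / 2 * (hh (lsvB z) * ψ' (lsvB z) ^ 2) with hp
  have mp : Measurable p := ((lsvD_measurable h0).mul ((mh.comp lsvA_measurable).mul
    ((mψ'.comp lsvA_measurable).pow_const 2))).add (((mh.comp lsvB_measurable).mul
    ((mψ'.comp lsvB_measurable).pow_const 2)).const_mul _)
  have hp0 : ∀ z ∈ Set.Ioc (0 : ℝ) 1, 0 ≤ p z := fun z hz => by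
    have := hpos _ (lsvA_mem_X h0 hz)
    have := hpos _ (Y_sub_X (lsvB_mem hz))
    have := lsvD_pos h0 z
    positivity
  -- `p` is the transfer operator of `lsv α` applied to `hh * ψ' ^ 2`, so that the integral of `p` is
  -- the squared `L²` norm of the martingale difference.
  have hpD : ∀ z ∈ Set.Ioc (0 : ℝ) 1, p z + lsvD α z * D (lsvA α z) = D z := by
    intro z hz
    have e1 := rV z hz
    have e2 := rh z hz
    have e3 := rE z hz
    have e4 := hVv z hz
    have e5 := hVv _ (lsvA_mem_X h0 hz)
    have e6 : hh (lsvB z) = ρ₀ (lsvB z) := hρ.fixed _ (lsvB_mem hz)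
    simp only [hp, hD]
    rw [ψ'a z hz, ψ'b z hz, e6]
    rw [e5] at e1 ⊢
    linear_combination -e3 + 2 * v z * e1 - v z ^ 2 * e2 - v z * e4
  have hDY : ∫⁻ y in Set.Ioc (1 / 2 : ℝ) 1, ENNReal.ofReal (D y) ≠ ⊤ := by
    set S := ∑' k, Real.exp 4 * (lsvW α k 1 * (R * β k ^ 2)) with hS
    have hb : ∀ y ∈ Set.Ioc (1 / 2 : ℝ) 1, ENNReal.ofReal (D y) ≤ ENNReal.ofReal S := by
      intro y hy
      refine ENNReal.ofReal_le_ofReal ?_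
      simp only [hD]
      rw [hvY y hy, zero_mul, sub_zero, hE, lsvQ]
      refine (le_abs_self _).trans ?_
      rw [← Real.norm_eq_abs]
      refine tsum_of_norm_bounded (hRβ.mul_left (Real.exp 4)).hasSum fun k => ?_
      rw [lsvQterm, norm_mul, Real.norm_of_nonneg (lsvW_pos h0 k y).le, Real.norm_eq_abs,
        ← mul_assoc]
      have := lsvW_pos h0 k 1
      exact mul_le_mul (lsvW_le_Y h0 h1 k hy) (hE2 k y hy) (abs_nonneg _) (by positivity)
    refine ne_top_of_le_ne_top ?_ (setLIntegral_mono' measurableSet_Ioc hb)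
    rw [setLIntegral_const]
    exact ENNReal.mul_ne_top ENNReal.ofReal_ne_top (by simp)
  have hfin : ∫⁻ z in Set.Ioc (0 : ℝ) 1, ENNReal.ofReal (p z) ≠ ⊤ := by
    refine ne_top_of_le_ne_top hDY (lintegral_le_of_telescope h0 h1 mp.ennreal_ofReal
      (D := fun z => ENNReal.ofReal (D z)) (fun z hz => ?_) hDY)
    rw [← ENNReal.ofReal_mul (lsvD_pos h0 z).le, ← ENNReal.ofReal_add (hp0 z hz)
      (mul_nonneg (lsvD_pos h0 z).le (hD0 _ (lsvA_mem_X h0 hz))), hpD z hz]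
  have hL2 : MemLp ψ' 2 (lsvMu α ρ₀) := by
    rw [memLp_two_iff_integrable_sq mψ'.aestronglyMeasurable]
    refine ⟨(mψ'.pow_const 2).aestronglyMeasurable, ?_⟩
    rw [hasFiniteIntegral_iff_ofReal (Eventually.of_forall fun x => sq_nonneg _),
      hρ.lintegral_mu h0 (mψ'.pow_const 2).ennreal_ofReal,
      lintegral_X_branches h0
        (F := fun x => ENNReal.ofReal (lsvQ α ρ₀ x) * ENNReal.ofReal (ψ' x ^ 2))
        ((hρ.meas_X h0).mul (mψ'.pow_const 2).ennreal_ofReal),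
      lt_top_iff_ne_top]
    convert hfin using 1
    refine setLIntegral_congr_fun measurableSet_Ioc fun z hz => ?_
    have ha := hpos _ (lsvA_mem_X h0 hz)
    have hb := hpos _ (Y_sub_X (lsvB_mem hz))
    have hd := lsvD_pos h0 z
    rw [← ENNReal.ofReal_mul ha.le, ← ENNReal.ofReal_mul hb.le, ← ENNReal.ofReal_mul hd.le,
      ← ENNReal.ofReal_mul (by norm_num), ← ENNReal.ofReal_add (by positivity) (by positivity)]
  refine ⟨v, mv, hL2, fun g hg hg1 => ?_⟩
  have := hρ.finite_mu h0 h1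
  have hi : Integrable (fun x => ((ψ' x : ℝ) : ℂ) * g (lsv α x)) (lsvMu α ρ₀) := by
    have h1 : Integrable ψ' (lsvMu α ρ₀) := hL2.integrable (by norm_num)
    exact (h1.ofReal (𝕜 := ℂ)).mul_bdd (c := 1) (hg.comp lsv_measurable).aestronglyMeasurable
      (Eventually.of_forall fun x => hg1 _)
  rw [hρ.integral_mu h0 h1 hi]
  refine (setIntegral_congr_fun measurableSet_Ioc fun z hz => ?_).trans
    (integral_zero ℝ ℂ)
  rw [lsv_lsvA h0 hz, lsv_lsvB hz.1, Complex.real_smul, Complex.real_smul, ← mul_assoc,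
    ← mul_assoc, ← add_mul]
  have := hmart z hz
  rw [← Complex.ofReal_mul, ← Complex.ofReal_mul, ← Complex.ofReal_add, this]
  simp

end Lift

/-! ### Martingale-coboundary decomposition of the observable -/

section Decomp

variable {α θ C : ℝ} {ρ₀ f : ℝ → ℝ} {B : ℕ → ℝ}

lemma lsvMu_Y (hρ : IsIndDensity α θ ρ₀) :
    lsvMu α ρ₀ (Set.Ioc (1 / 2 : ℝ) 1) ≠ 0 := by
  have hle : volume.restrict (Set.Ioc (1 / 2 : ℝ) 1) ≤ volume.restrict (Set.Ioc (0 : ℝ) 1) :=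
    Measure.restrict_mono (fun _ hx => Y_sub_X hx) le_rfl
  obtain ⟨c, hc, hl⟩ := hρ.lower
  rw [lsvMu, withDensity_apply _ measurableSet_Ioc, Measure.restrict_restrict measurableSet_Ioc,
    Set.inter_eq_left.2 fun x hx => Y_sub_X hx]
  intro h
  have hb : ∫⁻ _ in Set.Ioc (1 / 2 : ℝ) 1, ENNReal.ofReal c ≤ 0 := by
    rw [← h]
    refine setLIntegral_mono' measurableSet_Ioc fun y hy => ENNReal.ofReal_le_ofReal ?_
    rw [hρ.fixed y hy]; exact hl y hy
  rw [setLIntegral_const, nonpos_iff_eq_zero, mul_eq_zero] at hb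
  rcases hb with hb | hb
  · rw [ENNReal.ofReal_eq_zero] at hb; linarith
  · norm_num at hb

lemma lsvMu_X (α : ℝ) (ρ₀ : ℝ → ℝ) : ∀ᵐ x ∂(lsvMu α ρ₀), x ∈ Set.Ioc (0 : ℝ) 1 :=
  (withDensity_absolutelyContinuous _ _).ae_le (ae_restrict_mem measurableSet_Ioc)

/-- Martingale-coboundary decomposition of a centred observable. The constant `c` left over from the
induced map vanishes because integrable coboundaries have zero mean. -/
lemma IsObs.exists_decomp (hf : IsObs α θ f C B) (hρ : IsIndDensity α θ ρ₀) (h0 : 0 < α)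
    (h1 : α < 1) (hθ : 0 < θ) (hθ1 : θ ≤ 1) (h_integral : ∫ x, f x ∂(lsvMu α ρ₀) = 0) :
    ∃ ψ χ : ℝ → ℝ, Measurable ψ ∧ Measurable χ ∧
      (∀ x ∈ Set.Ioc (0 : ℝ) 1, f x = ψ x + χ (lsv α x) - χ x) ∧
      MemLp ψ 2 (lsvMu α ρ₀) ∧
      ∀ g : ℝ → ℂ, Measurable g → (∀ x, ‖g x‖ ≤ 1) →
        ∫ x, (ψ x : ℂ) * g (lsv α x) ∂(lsvMu α ρ₀) = 0 := by
  obtain ⟨c, u, ψ, β, hu, hψ, hdec, hψa, hβ, hψβ, hQ⟩ := hf.exists_induced hρ h0 h1 hθ hθ1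
  obtain ⟨v, hv, hL2, hmart⟩ := hρ.exists_lift h0 h1 hψ hψa hβ hψβ hQ
  have := hρ.finite_mu h0 h1
  set μ := lsvMu α ρ₀ with hμ
  set ψ' : ℝ → ℝ := fun x => ψ x + v x - v (lsv α x) with hψ'
  have mψ' : Measurable ψ' := (hψ.add hv).sub (hv.comp lsv_measurable)
  set χ : ℝ → ℝ := fun x => u x + v x with hχ
  have mχ : Measurable χ := hu.add hv
  have hdec' : ∀ x ∈ Set.Ioc (0 : ℝ) 1,
      f x - (Set.Ioc (1 / 2 : ℝ) 1).indicator (fun _ => c) x = ψ' x + χ (lsv α x) - χ x := by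
    intro x hx
    rw [hdec x hx]
    simp only [hψ', hχ]; ring
  have hψ0 : ∫ x, ψ' x ∂μ = 0 := by
    have := hmart (fun _ => 1) measurable_const (by simp)
    simp only [mul_one] at this
    rw [integral_complex_ofReal] at this
    exact_mod_cast this
  have hψi : Integrable ψ' μ := hL2.integrable (by norm_num)
  have hfi : Integrable f μ := by
    refine Integrable.of_bound hf.meas.aestronglyMeasurable C ?_
    filter_upwards [lsvMu_X α ρ₀] with x hx using hf.bdd x hx
  have hci : Integrable ((Set.Ioc (1 / 2 : ℝ) 1).indicator fun _ => c) μ :=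
    (integrable_const c).indicator measurableSet_Ioc
  have hae : (fun x => ψ' x - (f x - (Set.Ioc (1 / 2 : ℝ) 1).indicator (fun _ => c) x)) =ᵐ[μ]
      fun x => χ x - χ (lsv α x) := by
    filter_upwards [lsvMu_X α ρ₀] with x hx
    rw [hdec' x hx]; ring
  have hcob := integral_coboundary_eq_zero (hρ.measurePreserving_mu h0 h1) mχ
    ((hψi.sub (hfi.sub hci)).congr hae)
  rw [← integral_congr_ae hae] at hcob
  have e1 := integral_sub hψi (hfi.sub hci)
  simp only [Pi.sub_apply] at e1
  rw [e1, integral_sub hfi hci, hψ0, h_integral, integral_indicator_const _ measurableSet_Ioc] at hcob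
  have hc : c = 0 := by
    have hY : μ.real (Set.Ioc (1 / 2 : ℝ) 1) ≠ 0 := by
      rw [Measure.real, ENNReal.toReal_ne_zero]
      exact ⟨lsvMu_Y hρ, measure_ne_top _ _⟩
    have : μ.real (Set.Ioc (1 / 2 : ℝ) 1) * c = 0 := by
      simpa using hcob
    exact (mul_eq_zero.1 this).resolve_left hY
  refine ⟨ψ', χ, mψ', mχ, fun x hx => ?_, hL2, hmart⟩
  rw [← hdec' x hx, hc]
  simp

end Decomp

/-! ### The theorem -/

section Reduction

variable {α : ℝ} {f : ℝ → ℝ}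

lemma lsv_mem_Icc (h0 : 0 < α) {x : ℝ} (hx : x ∈ Set.Icc (0 : ℝ) 1) :
    lsv α x ∈ Set.Icc (0 : ℝ) 1 := by
  rcases eq_or_lt_of_le hx.1 with h | h
  · rw [← h]; simp [lsv]
  · have := lsv_mem_X h0 ⟨h, hx.2⟩
    exact ⟨this.1.le, this.2⟩

lemma birkhoffSum_indicator_Icc (h0 : 0 < α) (f : ℝ → ℝ) (n : ℕ) {x : ℝ}
    (hx : x ∈ Set.Icc (0 : ℝ) 1) :
    birkhoffSum (lsv α) ((Set.Icc (0 : ℝ) 1).indicator f) n x = birkhoffSum (lsv α) f n x := by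
  have key : ∀ k, (lsv α)^[k] x ∈ Set.Icc (0 : ℝ) 1 := fun k => by
    induction k with
    | zero => exact hx
    | succ k ih => rw [Function.iterate_succ_apply']; exact lsv_mem_Icc h0 ih
  unfold birkhoffSum
  exact Finset.sum_congr rfl fun k _ => Set.indicator_of_mem (key k) f

/-- The observables of the theorem, restricted to `[0, 1]`, satisfy the hypotheses of the
martingale construction. The exponent condition enters through `(2α-1)/(α+1) > α - 1/2`. -/
lemma exists_isObs_of_holder (hα : 1 / 2 < α) (hα1 : α < 1)
    (hf_holder : ∃ C r : ℝ, 0 < r ∧ ∀ x ∈ Set.Icc (0:ℝ) 1, ∀ y ∈ Set.Icc (0:ℝ) 1,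
      |f x - f y| ≤ C * |x - y| ^ r)
    {γ : ℝ} (hγ : (2 * α - 1) / (α + 1) < γ)
    (hf_holder0 : ∃ ε > (0:ℝ), ∃ C : ℝ, ∀ x ∈ Set.Icc (0:ℝ) ε, ∀ y ∈ Set.Icc (0:ℝ) ε,
      |f x - f y| ≤ C * |x - y| ^ γ)
    (hf0 : f 0 = 0) :
    ∃ θ C B, 0 < θ ∧ θ ≤ 1 ∧ IsObs α θ ((Set.Icc (0 : ℝ) 1).indicator f) C B := by
  have h0 : 0 < α := by linarith
  obtain ⟨C, r, hr, hH⟩ := hf_holder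
  obtain ⟨ε, hε, K, hK⟩ := hf_holder0
  have hC : 0 ≤ C := by simpa using (abs_nonneg _).trans (hH 1 (by norm_num) 0 (by norm_num))
  have hαγ : α - 1 / 2 < γ := by
    refine lt_of_le_of_lt ?_ hγ
    rw [le_div_iff₀ (by linarith)]
    nlinarith
  obtain ⟨γ', hγ1, hγ2⟩ := exists_between (lt_min hαγ (by linarith : α - 1 / 2 < α))
  have hγ'0 : 0 < γ' := by linarith
  have hX : ∀ x ∈ Set.Ioc (0 : ℝ) 1, x ∈ Set.Icc (0 : ℝ) 1 := fun x hx => ⟨hx.1.le, hx.2⟩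
  have hbd : ∀ x ∈ Set.Icc (0 : ℝ) 1, |f x| ≤ C := fun x hx => by
    have := hH x hx 0 (by norm_num)
    rw [hf0, sub_zero, sub_zero, abs_of_nonneg hx.1] at this
    exact this.trans (mul_le_of_le_one_right hC (Real.rpow_le_one hx.1 hx.2 hr.le))
  have hcont : ContinuousOn f (Set.Icc (0 : ℝ) 1) := by
    intro x hx
    rw [ContinuousWithinAt, tendsto_iff_dist_tendsto_zero]
    have hlim : Tendsto (fun y => C * |y - x| ^ r) (𝓝[Set.Icc (0 : ℝ) 1] x) (𝓝 0) := by
      have hc : Continuous fun y : ℝ => C * |y - x| ^ r :=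
        continuous_const.mul ((continuous_id.sub continuous_const).abs.rpow_const
          fun _ => Or.inr hr.le)
      have := (hc.tendsto x).mono_left (nhdsWithin_le_nhds (s := Set.Icc (0 : ℝ) 1))
      simpa [Real.zero_rpow hr.ne'] using this
    refine squeeze_zero' (Eventually.of_forall fun _ => dist_nonneg) ?_ hlim
    filter_upwards [self_mem_nhdsWithin] with y hy using hH y hy x hx
  have hmeas : Measurable ((Set.Icc (0 : ℝ) 1).indicator f) := by
    classical
    rw [← Set.piecewise_eq_indicator]
    exact hcont.measurable_piecewise continuousOn_const measurableSet_Icc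
  set θ := min r 1 with hθ
  have hθ0 : 0 < θ := lt_min hr one_pos
  refine (exists_isObs (α := α) (θ := θ) (f := (Set.Icc (0 : ℝ) 1).indicator f) (C := C)
    (C' := |K| + C * (ε ^ γ')⁻¹) (γ := γ') h0 hmeas ?_ ?_ hγ'0 hγ1
    (hγ2.trans_le (min_le_right _ _)) ?_).elim fun B hB => ⟨θ, C, B, hθ0, min_le_right _ _, hB⟩
  · intro x hx
    rw [Set.indicator_of_mem (hX x hx)]
    exact hbd x (hX x hx)
  · intro x hx x' hx'
    rw [Set.indicator_of_mem (hX x hx), Set.indicator_of_mem (hX x' hx')]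
    refine (hH x (hX x hx) x' (hX x' hx')).trans (mul_le_mul_of_nonneg_left ?_ hC)
    refine Real.rpow_le_rpow_of_exponent_ge' (abs_nonneg _) ?_ hθ0.le (min_le_left _ _)
    rw [abs_le]; constructor <;> linarith [hx.1, hx.2, hx'.1, hx'.2]
  · intro x hx
    rw [Set.indicator_of_mem (hX x hx), add_mul]
    have hεp : 0 < ε ^ γ' := Real.rpow_pos_of_pos hε _
    have hxp : 0 ≤ x ^ γ' := Real.rpow_nonneg hx.1.le _
    rcases le_total x ε with hxε | hxε
    · have := hK x ⟨hx.1.le, hxε⟩ 0 ⟨le_rfl, hε.le⟩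
      rw [hf0, sub_zero, sub_zero, abs_of_pos hx.1] at this
      have h1 : K * x ^ γ ≤ |K| * x ^ γ' :=
        mul_le_mul (le_abs_self K) (Real.rpow_le_rpow_of_exponent_ge hx.1 hx.2
          (hγ2.le.trans (min_le_left _ _))) (Real.rpow_nonneg hx.1.le _) (abs_nonneg _)
      have h2 : 0 ≤ C * (ε ^ γ')⁻¹ * x ^ γ' := by positivity
      linarith
    · have h1 : ε ^ γ' ≤ x ^ γ' := Real.rpow_le_rpow hε.le hxε hγ'0.le
      have h2 : 1 ≤ (ε ^ γ')⁻¹ * x ^ γ' := by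
        rw [inv_mul_eq_div, le_div_iff₀ hεp]; linarith
      have h3 := mul_le_mul_of_nonneg_left h2 hC
      have h4 : 0 ≤ |K| * x ^ γ' := by positivity
      have h5 := hbd x (hX x hx)
      nlinarith

end Reduction

/-- Central limit theorem for the LSV map with `1/2 < α < 1` and a Hölder observable
vanishing at the neutral fixed point. -/
theorem lsv_clt (α : ℝ) (hα : 1 / 2 < α ∧ α < 1)
    (m : Measure ℝ) [IsProbabilityMeasure m]
    (hsupp : m (Set.Icc (0:ℝ) 1) = 1)
    (hT : MeasurePreserving (lsv α) m m)
    (h : ℝ → ℝ) (hh_cont : ContinuousOn h (Set.Ioc 0 1))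
    (hm : m = MeasureTheory.volume.withDensity fun x => ENNReal.ofReal (h x))
    (f : ℝ → ℝ)
    (hf_holder : ∃ C r : ℝ, 0 < r ∧ ∀ x ∈ Set.Icc (0:ℝ) 1, ∀ y ∈ Set.Icc (0:ℝ) 1,
      |f x - f y| ≤ C * |x - y| ^ r)
    (γ : ℝ) (hγ : (2 * α - 1) / (α + 1) < γ)
    (hf_holder0 : ∃ ε > (0:ℝ), ∃ C : ℝ, ∀ x ∈ Set.Icc (0:ℝ) ε, ∀ y ∈ Set.Icc (0:ℝ) ε,
      |f x - f y| ≤ C * |x - y| ^ γ)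
    (hf_int : ∫ x, f x ∂m = 0)
    (hf0 : f 0 = 0) :
    ∃ σ2 : NNReal,
      (∀ g : BoundedContinuousFunction ℝ ℝ,
        Tendsto (fun n => ∫ x, g (birkhoffSum (lsv α) f n x / Real.sqrt n) ∂m) atTop
          (𝓝 (∫ y, g y ∂(ProbabilityTheory.gaussianReal 0 σ2)))) ∧
      (σ2 = 0 ↔ ∃ χ : ℝ → ℝ, Measurable χ ∧ ∀ᵐ x ∂m, f x = χ (lsv α x) - χ x) := by
  obtain ⟨hα2, h1⟩ := hα
  have h0 : 0 < α := by linarith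
  obtain ⟨θ, C, B, hθ, hθ1, hobs⟩ := exists_isObs_of_holder hα2 h1 hf_holder hγ hf_holder0 hf0
  obtain ⟨ρ₀, hρ⟩ := exists_isIndDensity h0 h1 hθ hθ1
  set f' := (Set.Icc (0 : ℝ) 1).indicator f with hf'
  have hac : m ≪ volume := by rw [hm]; exact withDensity_absolutelyContinuous _ _
  have := hρ.finite_mu h0 h1
  obtain ⟨k, hk⟩ := hρ.eq_smul_mu h0 h1 hθ1 hsupp hT hac
  have hk1 : k * lsvMu α ρ₀ Set.univ = 1 := by
    rw [← smul_eq_mul, ← Measure.smul_apply, ← hk, measure_univ]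
  have hk0 : k ≠ 0 := fun h => by simp [h] at hk1
  have hkt : k ≠ ⊤ := fun h => by
    have h2 : lsvMu α ρ₀ Set.univ ≠ 0 := fun h2 => by simp [h2] at hk1
    rw [h, ENNReal.top_mul h2] at hk1
    simp at hk1
  have hIcc : ∀ᵐ x ∂m, x ∈ Set.Icc (0 : ℝ) 1 := by
    have : Set.Icc (0 : ℝ) 1 ∈ ae m := (mem_ae_iff_prob_eq_one measurableSet_Icc).2 hsupp
    exact this
  have hff' : ∀ᵐ x ∂m, f' x = f x := by
    filter_upwards [hIcc] with x hx using Set.indicator_of_mem hx f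
  have h_integral : ∫ x, f' x ∂(lsvMu α ρ₀) = 0 := by
    have e : ∫ x, f' x ∂m = 0 := (integral_congr_ae hff').trans hf_int
    rw [hk, integral_smul_measure, smul_eq_mul] at e
    exact (mul_eq_zero.1 e).resolve_left (ENNReal.toReal_ne_zero.2 ⟨hk0, hkt⟩)
  obtain ⟨ψ, χ, hψ, hχ, hdec, hψ2, hmart⟩ := hobs.exists_decomp hρ h0 h1 hθ hθ1 h_integral
  have herg : Ergodic (lsv α) m := by
    rw [hk]; exact (hρ.ergodic_mu h0 h1 hθ1).smul_measure k
  have hmμ : m ≪ lsvMu α ρ₀ := by rw [hk]; exact Measure.smul_absolutelyContinuous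
  have hdec' : ∀ᵐ x ∂m, f' x = ψ x + χ (lsv α x) - χ x := by
    filter_upwards [hmμ.ae_le (lsvMu_X α ρ₀)] with x hx using hdec x hx
  have hψ2' : MemLp ψ 2 m := by rw [hk]; exact hψ2.smul_measure hkt
  obtain ⟨σ2, hclt, hσ⟩ := clt_of_martingale_coboundary herg hobs.meas hψ hχ hdec' hψ2'
    (fun g hg hg1 => by rw [hk, integral_smul_measure, hmart g hg hg1, smul_zero])
  refine ⟨σ2, fun g => ?_, hσ.trans (exists_congr fun χ => and_congr_right fun _ => ?_)⟩
  · refine (hclt g).congr fun n => integral_congr_ae ?_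
    filter_upwards [hIcc] with x hx
    rw [birkhoffSum_indicator_Icc h0 f n hx]
  · constructor
    · intro h
      filter_upwards [h, hff'] with x hx hx'
      rw [← hx', hx]
    · intro h
      filter_upwards [h, hff'] with x hx hx'
      rw [hx', hx]
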